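/- arXiv:2402.16376 — 4 statements merged into one kernel-verified Lean document; each statement's English description precedes it below -/
import Mathlib

section
/- Let T > 0 and let m, n : [0,T] × ℝ → [0,∞) be smooth in (t,x), with m(t,·) and n(t,·) probability densities with finite second moments for every t, solving classically ∂ₜm + ∂ₓ(m H[m]) = 0 and ∂ₜn + ∂ₓ(n H[n]) = 0 on (0,T] × ℝ, and such that the velocity fields (t,x) ↦ H[m(t,·)](x) and (t,x) ↦ H[n(t,·)](x) are bounded, continuous, and Lipschitz in x uniformly in t. Let µ_t and ν_t be the probability measures with densities m(t,·) and n(t,·). Then the map t ↦ W₂(µ_t, ν_t) is non-increasing on [0,T]. -/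
open MeasureTheory Filter Set
open scoped Topology ENNReal

/-- Truncated (unnormalized) Hilbert transform: `∫_{|x−y|≥δ} u(y)/(x−y) dy`. -/
noncomputable def truncHilbert (u : ℝ → ℝ) (δ x : ℝ) : ℝ :=
  ∫ y in {y : ℝ | δ ≤ |x - y|}, u y / (x - y)

/-- The (unnormalized) Hilbert transform, defined as the principal value
`H[u](x) = lim_{δ→0⁺} ∫_{|x−y|≥δ} u(y)/(x−y) dy`. -/
noncomputable def hilbert (u : ℝ → ℝ) (x : ℝ) : ℝ :=
  limUnder (𝓝[>] (0 : ℝ)) (fun δ => truncHilbert u δ x)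

/-- The probability measure on `ℝ` with density `m(t,·)`. -/
noncomputable def densMeasure (m : ℝ → ℝ → ℝ) (t : ℝ) : Measure ℝ :=
  volume.withDensity (fun x => ENNReal.ofReal (m t x))

/-- The `2`-Wasserstein distance between two probability measures on `ℝ`: the infimum of
`(∫ |x−y|² dγ)^{1/2}` over all couplings `γ`. -/
noncomputable def W2 (mu nu : Measure ℝ) : ℝ :=
  sInf {c : ℝ | ∃ γ : Measure (ℝ × ℝ), IsProbabilityMeasure γ ∧
    γ.map Prod.fst = mu ∧ γ.map Prod.snd = nu ∧
    c = Real.sqrt (∫ p : ℝ × ℝ, |p.1 - p.2| ^ 2 ∂γ)}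

/-- A smooth probability-density solution of the Dyson equation on `[0,T]` whose velocity
field `H[m(t,·)]` is bounded, continuous and Lipschitz in `x` uniformly in `t`. -/
def IsNiceDysonSolution (T : ℝ) (m : ℝ → ℝ → ℝ) : Prop :=
  ContDiffOn ℝ (⊤ : ℕ∞) (Function.uncurry m) (Icc 0 T ×ˢ univ) ∧
  (∀ t x, 0 ≤ t → t ≤ T → 0 ≤ m t x) ∧
  (∀ t, 0 ≤ t → t ≤ T → Integrable (m t)) ∧
  (∀ t, 0 ≤ t → t ≤ T → ∫ x, m t x = 1) ∧
  (∀ t, 0 ≤ t → t ≤ T → Integrable (fun x => x ^ 2 * m t x)) ∧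
  (∀ t x, 0 ≤ t → t ≤ T →
    ∃ l : ℝ, Tendsto (fun δ => truncHilbert (m t) δ x) (𝓝[>] (0 : ℝ)) (𝓝 l)) ∧
  (∀ t x, 0 < t → t ≤ T →
    deriv (fun s => m s x) t + deriv (fun y => m t y * hilbert (m t) y) x = 0) ∧
  (∃ M : ℝ, ∀ t x, 0 ≤ t → t ≤ T → |hilbert (m t) x| ≤ M) ∧
  ContinuousOn (fun p : ℝ × ℝ => hilbert (m p.1) p.2) (Icc 0 T ×ˢ univ) ∧
  (∃ K : NNReal, ∀ t, 0 ≤ t → t ≤ T → LipschitzWith K (hilbert (m t)))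

/-!
Let `X t` be the quantile function of `µ₀` transported by the flow of `H[m]`, and `Y t` that of `ν₀`
transported by the flow of `H[n]`. In dimension one a flow preserves order, so `(X t, Y t)` stays
monotone, hence an optimal coupling of `µ_t` and `ν_t`, and `W₂² = ∫ (X - Y)²` at all times. Its
derivative is `2 ∫ (X - Y) (H[m](X) - H[n](Y))`. Writing `H` as an integral of its kernel and
symmetrizing in the two particles `ω, ω'`, with `a = X ω - X ω'` and `b = Y ω - Y ω'`, one gets

  `∬ (a - b) (1 / a - 1 / b) = -∬ (a - b)² / (a b) ≤ 0`,

because `a` and `b` have the same sign. The principal value only allows this after truncating the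
kernel at distance `δ`, and the truncated transforms converge only locally uniformly, so the forces
are also multiplied by a cutoff at scale `R`. Since `(a - b) / a ≤ 1` when `a b ≥ 0`, truncation
costs no more than the mass of the pairs at distance less than `δ`; the cutoff costs `O(1 / R)`.
-/

section OptimalCoupling

variable {Ω Ω' : Type*} [MeasurableSpace Ω] [MeasurableSpace Ω'] {P : Measure Ω} {P' : Measure Ω'}
  {μ ν : Measure ℝ} {X Y : Ω → ℝ} {X' Y' : Ω' → ℝ}

lemma volume_triangle (x y : ℝ) :
    volume {q : ℝ × ℝ | y < q.1 ∧ q.1 < q.2 ∧ q.2 < x}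
      = ENNReal.ofReal ((max (x - y) 0) ^ 2 / 2) := by
  have hregion : {q : ℝ × ℝ | y < q.1 ∧ q.1 < q.2 ∧ q.2 < x}
      = regionBetween id (fun _ => x) (Ioo y x) := by
    ext q
    simp only [regionBetween, mem_ofPred_eq, mem_Ioo, id_eq]
    exact ⟨fun h => ⟨⟨h.1, h.2.1.trans h.2.2⟩, h.2⟩, fun h => ⟨h.1.1, h.2⟩⟩
  rw [hregion, Measure.volume_eq_prod, volume_regionBetween_eq_integral
    (continuous_id.integrableOn_Icc.mono_set Ioo_subset_Icc_self)
    (continuous_const.integrableOn_Icc.mono_set Ioo_subset_Icc_self) measurableSet_Ioo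
    fun a ha => ha.2.le]
  congr 1
  rcases le_total y x with h | h
  · rw [max_eq_left (sub_nonneg.2 h), ← integral_Ioc_eq_integral_Ioo,
      ← intervalIntegral.integral_of_le h]
    simp only [Pi.sub_apply, id_eq, intervalIntegral.integral_comp_sub_left (fun a => a) x,
      integral_id]
    ring
  · rw [Ioo_eq_empty h.not_gt, max_eq_right (sub_nonpos.2 h)]
    simp

lemma lintegral_sq_max_sub [SFinite P] (hX : Measurable X) (hY : Measurable Y) :
    ∫⁻ ω, ENNReal.ofReal ((max (X ω - Y ω) 0) ^ 2 / 2) ∂P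
      = ∫⁻ q : ℝ × ℝ, P {ω | Y ω < q.1 ∧ q.1 < q.2 ∧ q.2 < X ω} := by
  have hS : MeasurableSet
      {r : Ω × ℝ × ℝ | Y r.1 < r.2.1 ∧ r.2.1 < r.2.2 ∧ r.2.2 < X r.1} := by
    measurability
  simp_rw [← volume_triangle]
  exact (Measure.prod_apply hS).symm.trans (Measure.prod_apply_symm hS)

lemma sq_sub_eq_add_sq_max (x y : ℝ) :
    (x - y) ^ 2 = 2 * ((max (x - y) 0) ^ 2 / 2 + (max (y - x) 0) ^ 2 / 2) := by
  rcases le_total x y with h | h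
  · rw [max_eq_right (sub_nonpos.2 h), max_eq_left (sub_nonneg.2 h)]
    ring
  · rw [max_eq_left (sub_nonneg.2 h), max_eq_right (sub_nonpos.2 h)]
    ring

lemma lintegral_sq_sub_eq_add (hX : Measurable X) (hY : Measurable Y) :
    ∫⁻ ω, ENNReal.ofReal ((X ω - Y ω) ^ 2) ∂P
      = 2 * (∫⁻ ω, ENNReal.ofReal ((max (X ω - Y ω) 0) ^ 2 / 2) ∂P
        + ∫⁻ ω, ENNReal.ofReal ((max (Y ω - X ω) 0) ^ 2 / 2) ∂P) := by
  rw [← lintegral_add_left (by fun_prop), ← lintegral_const_mul _ (by fun_prop)]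
  refine lintegral_congr fun ω => ?_
  rw [sq_sub_eq_add_sq_max, ENNReal.ofReal_mul zero_le_two,
    ENNReal.ofReal_add (by positivity) (by positivity), ENNReal.ofReal_ofNat]

lemma sublevel_subset_or_subset_of_monovary {Ω : Type*} {X Y : Ω → ℝ} (h : Monovary X Y)
    (a b : ℝ) :
    {ω | Y ω < a} ⊆ {ω | X ω ≤ b} ∨ {ω | X ω ≤ b} ⊆ {ω | Y ω < a} := by
  refine or_iff_not_imp_left.2 fun hnot ω hω => ?_
  obtain ⟨ω₀, hY, hX⟩ := not_subset.1 hnot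
  exact (h.symm (lt_of_le_of_lt hω (not_le.1 hX))).trans_lt hY

lemma measure_quadrant_le_of_monovary [IsFiniteMeasure P] (h : Monovary X Y)
    (hX : MeasurePreserving X P μ) (hY : MeasurePreserving Y P ν)
    (hX' : MeasurePreserving X' P' μ) (hY' : MeasurePreserving Y' P' ν) (a b : ℝ) :
    P {ω | Y ω < a ∧ b < X ω} ≤ P' {ω | Y' ω < a ∧ b < X' ω} := by
  have hdiff : {ω | Y ω < a ∧ b < X ω} = {ω | Y ω < a} \ {ω | X ω ≤ b} := by
    ext; simp
  have hdiff' : {ω | Y' ω < a ∧ b < X' ω} = {ω | Y' ω < a} \ {ω | X' ω ≤ b} := by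
    ext; simp
  have hμ : P {ω | X ω ≤ b} = P' {ω | X' ω ≤ b} :=
    (hX.measure_preimage measurableSet_Iic.nullMeasurableSet).trans
      (hX'.measure_preimage measurableSet_Iic.nullMeasurableSet).symm
  have hν : P {ω | Y ω < a} = P' {ω | Y' ω < a} :=
    (hY.measure_preimage measurableSet_Iio.nullMeasurableSet).trans
      (hY'.measure_preimage measurableSet_Iio.nullMeasurableSet).symm
  rw [hdiff, hdiff']
  rcases sublevel_subset_or_subset_of_monovary h a b with hsub | hsub
  · rw [sdiff_eq_empty.2 hsub, measure_empty]
    exact zero_le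
  · rw [measure_sdiff hsub (measurableSet_le hX.measurable measurable_const).nullMeasurableSet
      (measure_ne_top _ _), hμ, hν]
    exact le_measure_sdiff

lemma lintegral_sq_max_sub_le_of_monovary [IsFiniteMeasure P] [SFinite P'] (h : Monovary X Y)
    (hX : MeasurePreserving X P μ) (hY : MeasurePreserving Y P ν)
    (hX' : MeasurePreserving X' P' μ) (hY' : MeasurePreserving Y' P' ν) :
    ∫⁻ ω, ENNReal.ofReal ((max (X ω - Y ω) 0) ^ 2 / 2) ∂P
      ≤ ∫⁻ ω, ENNReal.ofReal ((max (X' ω - Y' ω) 0) ^ 2 / 2) ∂P' := by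
  rw [lintegral_sq_max_sub hX.measurable hY.measurable,
    lintegral_sq_max_sub hX'.measurable hY'.measurable]
  refine lintegral_mono fun q => ?_
  by_cases hq : q.1 < q.2
  · simpa only [hq, true_and] using measure_quadrant_le_of_monovary h hX hY hX' hY' q.1 q.2
  · simp [hq]

lemma lintegral_sq_sub_le_of_monovary [IsFiniteMeasure P] [SFinite P'] (h : Monovary X Y)
    (hX : MeasurePreserving X P μ) (hY : MeasurePreserving Y P ν)
    (hX' : MeasurePreserving X' P' μ) (hY' : MeasurePreserving Y' P' ν) :
    ∫⁻ ω, ENNReal.ofReal ((X ω - Y ω) ^ 2) ∂P ≤ ∫⁻ ω, ENNReal.ofReal ((X' ω - Y' ω) ^ 2) ∂P' := by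
  rw [lintegral_sq_sub_eq_add hX.measurable hY.measurable,
    lintegral_sq_sub_eq_add hX'.measurable hY'.measurable]
  gcongr 2 * (?_ + ?_)
  · exact lintegral_sq_max_sub_le_of_monovary h hX hY hX' hY'
  · exact lintegral_sq_max_sub_le_of_monovary h.symm hY hX hY' hX'

theorem W2_eq_of_monovary [IsProbabilityMeasure P] (h : Monovary X Y)
    (hX : MeasurePreserving X P μ) (hY : MeasurePreserving Y P ν)
    (hμ : MemLp id 2 μ) (hν : MemLp id 2 ν) :
    W2 μ ν = √(∫ ω, (X ω - Y ω) ^ 2 ∂P) := by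
  refine IsLeast.csInf_eq ⟨⟨P.map fun ω => (X ω, Y ω), ?_, ?_, ?_, ?_⟩, ?_⟩
  · exact Measure.isProbabilityMeasure_map (hX.measurable.prodMk hY.measurable).aemeasurable
  · rw [Measure.map_map measurable_fst (hX.measurable.prodMk hY.measurable)]
    exact hX.map_eq
  · rw [Measure.map_map measurable_snd (hX.measurable.prodMk hY.measurable)]
    exact hY.map_eq
  · rw [integral_map (hX.measurable.prodMk hY.measurable).aemeasurable
      (by fun_prop : Measurable fun p : ℝ × ℝ => |p.1 - p.2| ^ 2).aestronglyMeasurable]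
    simp only [sq_abs]
  · have hP : Integrable (fun ω => (X ω - Y ω) ^ 2) P :=
      ((hμ.comp_measurePreserving hX).sub (hν.comp_measurePreserving hY)).integrable_sq
    rintro c ⟨γ, hγ, hfst, hsnd, rfl⟩
    have hX' : MeasurePreserving Prod.fst γ μ := ⟨measurable_fst, hfst⟩
    have hY' : MeasurePreserving Prod.snd γ ν := ⟨measurable_snd, hsnd⟩
    have hγ_int : Integrable (fun p : ℝ × ℝ => (p.1 - p.2) ^ 2) γ :=
      ((hμ.comp_measurePreserving hX').sub (hν.comp_measurePreserving hY')).integrable_sq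
    simp only [sq_abs]
    refine Real.sqrt_le_sqrt ?_
    rw [integral_eq_lintegral_of_nonneg_ae (.of_forall fun _ => sq_nonneg _)
      hP.aestronglyMeasurable,
      integral_eq_lintegral_of_nonneg_ae (.of_forall fun _ => sq_nonneg _)
      hγ_int.aestronglyMeasurable]
    exact ENNReal.toReal_mono hγ_int.lintegral_lt_top.ne
      (lintegral_sq_sub_le_of_monovary h hX hY hX' hY')

end OptimalCoupling

section Kernel

/-- The kernel `1/z` of the Hilbert transform, cut off at distance `δ` from its singularity. -/
noncomputable def truncKernel (δ z : ℝ) : ℝ := if δ ≤ |z| then z⁻¹ else 0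

/-- The `1/R`-Lipschitz cutoff function of height one supported in `[-R, R]`. -/
noncomputable def tent (R x : ℝ) : ℝ := max 0 (1 - |x| / R)

variable {δ R : ℝ}

lemma truncKernel_neg (δ z : ℝ) : truncKernel δ (-z) = -truncKernel δ z := by
  unfold truncKernel
  split_ifs <;> simp_all

lemma abs_truncKernel_le (hδ : 0 < δ) (z : ℝ) : |truncKernel δ z| ≤ δ⁻¹ := by
  unfold truncKernel
  split_ifs with h
  · rw [abs_inv]
    gcongr
  · simpa using hδ.le

lemma measurable_truncKernel (δ : ℝ) : Measurable (truncKernel δ) :=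
  Measurable.ite (measurableSet_le measurable_const (by fun_prop)) measurable_inv measurable_const

lemma tent_nonneg (R x : ℝ) : 0 ≤ tent R x := le_max_left _ _

lemma tent_le_one (hR : 0 < R) (x : ℝ) : tent R x ≤ 1 :=
  max_le zero_le_one (sub_le_self _ (by positivity))

lemma abs_tent_mul_le (hR : 0 < R) (x c : ℝ) : |tent R x * c| ≤ |c| := by
  rw [abs_mul, abs_of_nonneg (tent_nonneg R x)]
  exact mul_le_of_le_one_left (abs_nonneg c) (tent_le_one hR x)

lemma continuous_tent (R : ℝ) : Continuous (tent R) := by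
  unfold tent
  fun_prop

lemma tent_eq_zero (hR : 0 < R) {x : ℝ} (hx : R ≤ |x|) : tent R x = 0 :=
  max_eq_left (sub_nonpos.2 ((one_le_div hR).2 hx))

lemma abs_tent_sub_le (hR : 0 < R) (x y : ℝ) : |tent R x - tent R y| ≤ R⁻¹ * |x - y| := by
  calc |tent R x - tent R y| ≤ |(1 - |x| / R) - (1 - |y| / R)| := by
        simpa only [tent, max_comm (0 : ℝ)] using abs_max_sub_max_le_abs _ _ (0 : ℝ)
    _ = R⁻¹ * |(|y| - |x|)| := by
        rw [show 1 - |x| / R - (1 - |y| / R) = R⁻¹ * (|y| - |x|) by ring, abs_mul,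
          abs_of_pos (inv_pos.2 hR)]
    _ ≤ R⁻¹ * |x - y| := by
        rw [abs_sub_comm x y]
        exact mul_le_mul_of_nonneg_left (abs_abs_sub_abs_le y x) (inv_nonneg.2 hR.le)

lemma tendsto_tent (x : ℝ) : Tendsto (fun R => tent R x) atTop (𝓝 1) := by
  have : Tendsto (fun R => max 0 (1 - |x| / R)) atTop (𝓝 (max 0 (1 - 0))) :=
    tendsto_const_nhds.max (tendsto_const_nhds.sub (tendsto_const_nhds.div_atTop tendsto_id))
  simpa using! this

lemma abs_tent_sub_mul_truncKernel_le (hR : 0 < R) (x x' : ℝ) :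
    |(tent R x - tent R x') * truncKernel δ (x - x')| ≤ R⁻¹ := by
  unfold truncKernel
  split_ifs
  · calc |(tent R x - tent R x') * (x - x')⁻¹| ≤ R⁻¹ * |x - x'| * |x - x'|⁻¹ := by
          rw [abs_mul, abs_inv]
          gcongr
          exact abs_tent_sub_le hR x x'
      _ ≤ R⁻¹ := by
          rw [mul_assoc]
          exact mul_le_of_le_one_right (inv_nonneg.2 hR.le) mul_inv_le_one
  · simpa using hR.le

lemma sub_mul_truncKernel_le_one {a b : ℝ} (h : 0 ≤ a * b) : (a - b) * truncKernel δ a ≤ 1 := by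
  unfold truncKernel
  split_ifs
  · have hba : 0 ≤ b * a⁻¹ := by
      rcases mul_nonneg_iff.1 h with ⟨ha, hb⟩ | ⟨ha, hb⟩
      · positivity
      · exact mul_nonneg_of_nonpos_of_nonpos hb (inv_nonpos.2 ha)
    rw [sub_mul]
    linarith [mul_inv_le_one (a := a)]
  · simp

lemma sub_mul_truncKernel_sub_le (hδ : 0 < δ) {a b : ℝ} (h : 0 ≤ a * b) :
    (a - b) * truncKernel δ a + (b - a) * truncKernel δ b
      ≤ (if |a| < δ then 1 else 0) + (if |b| < δ then 1 else 0) := by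
  have ha := sub_mul_truncKernel_le_one (δ := δ) h
  have hb := sub_mul_truncKernel_le_one (δ := δ) (mul_comm a b ▸ h)
  rcases lt_or_ge |a| δ with haδ | haδ <;> rcases lt_or_ge |b| δ with hbδ | hbδ
  · simp [truncKernel, haδ, hbδ, haδ.not_ge, hbδ.not_ge]
  · simpa [truncKernel, haδ, hbδ, haδ.not_ge, hbδ.not_gt] using hb
  · simpa [truncKernel, haδ, hbδ, haδ.not_gt, hbδ.not_ge] using ha
  · have ha₀ : a ≠ 0 := abs_pos.1 (hδ.trans_le haδ)
    have hb₀ : b ≠ 0 := abs_pos.1 (hδ.trans_le hbδ)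
    simp only [truncKernel, haδ, hbδ, haδ.not_gt, hbδ.not_gt, if_true, if_false, add_zero]
    calc (a - b) * a⁻¹ + (b - a) * b⁻¹ = -((a - b) ^ 2 / (a * b)) := by field_simp; ring
      _ ≤ 0 := neg_nonpos.2 (by positivity)

lemma weighted_add_le {p q s t c : ℝ} (hp : p ∈ Icc 0 1) (hq : q ∈ Icc 0 1) (hs : s ≤ 1)
    (ht : t ≤ 1) (hc : 0 ≤ c) (hst : s + t ≤ c) : p * s + q * t ≤ |p - q| + c := by
  wlog hpq : p ≤ q generalizing p q s t
  · have := this hq hp ht hs (add_comm s t ▸ hst) (le_of_not_ge hpq)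
    rwa [abs_sub_comm, add_comm (q * t)] at this
  calc p * s + q * t = p * (s + t) + (q - p) * t := by ring
    _ ≤ c + (q - p) := add_le_add
        ((mul_le_mul_of_nonneg_left hst hp.1).trans (mul_le_of_le_one_left hc hp.2))
        (mul_le_of_le_one_right (sub_nonneg.2 hpq) ht)
    _ = |p - q| + c := by rw [abs_sub_comm, abs_of_nonneg (sub_nonneg.2 hpq), add_comm]

lemma symmetrized_truncKernel_le (hδ : 0 < δ) (hR : 0 < R) {x x' y y' : ℝ}
    (h : 0 ≤ (x - x') * (y - y')) :
    (x - y) * (tent R x * truncKernel δ (x - x') - tent R y * truncKernel δ (y - y'))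
      + (x' - y') * (tent R x' * truncKernel δ (x' - x) - tent R y' * truncKernel δ (y' - y))
      ≤ (if |x - x'| < δ then 1 else 0) + (if |y - y'| < δ then 1 else 0)
        + R⁻¹ * (|x - y| + 2 * |x' - y'|) := by
  have hweighted := weighted_add_le ⟨tent_nonneg R x, tent_le_one hR x⟩
    ⟨tent_nonneg R y, tent_le_one hR y⟩ (sub_mul_truncKernel_le_one h)
    (sub_mul_truncKernel_le_one (mul_comm (x - x') _ ▸ h)) (by positivity)
    (sub_mul_truncKernel_sub_le hδ h)
  have htent := abs_tent_sub_le hR x y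
  have hswap (u u' : ℝ) : |(x' - y') * ((tent R u - tent R u') * truncKernel δ (u - u'))|
      ≤ |x' - y'| * R⁻¹ := by
    rw [abs_mul]
    gcongr
    exact abs_tent_sub_mul_truncKernel_le hR u u'
  have hx := (abs_le.1 (hswap x x')).2
  have hy := (abs_le.1 (hswap y y')).1
  rw [← neg_sub x x', ← neg_sub y y', truncKernel_neg, truncKernel_neg]
  linear_combination hweighted + htent + hx + hy

end Kernel

section Interaction

variable {Ω : Type*} [MeasurableSpace Ω] {P : Measure Ω} {μ ν : Measure ℝ} {X Y : Ω → ℝ}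

/-- The Hilbert transform of a measure with its kernel truncated at distance `δ`. -/
noncomputable def truncField (μ : Measure ℝ) (δ x : ℝ) : ℝ := ∫ y, truncKernel δ (x - y) ∂μ

lemma measurable_truncField [SFinite μ] (δ : ℝ) : Measurable (truncField μ δ) :=
  ((measurable_truncKernel δ).comp (measurable_fst.sub measurable_snd)
    ).stronglyMeasurable.integral_prod_right'.measurable

lemma truncField_eq_integral (hX : MeasurePreserving X P μ) (δ x : ℝ) :
    truncField μ δ x = ∫ ω, truncKernel δ (x - X ω) ∂P := by
  have hmeas : Measurable fun y => truncKernel δ (x - y) :=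
    (measurable_truncKernel δ).comp (measurable_const.sub measurable_id)
  rw [truncField, ← hX.map_eq, integral_map hX.measurable.aemeasurable hmeas.aestronglyMeasurable]

lemma tendsto_measureReal_near_diagonal [IsFiniteMeasure μ] [NullSingletonClass μ] :
    Tendsto (fun δ => (μ.prod μ).real {p : ℝ × ℝ | |p.1 - p.2| < δ}) (𝓝[>] 0) (𝓝 0) := by
  have hmeas (δ : ℝ) : MeasurableSet {p : ℝ × ℝ | |p.1 - p.2| < δ} :=
    measurableSet_lt (by fun_prop) measurable_const
  have hdiag : ⋂ δ > (0 : ℝ), {p : ℝ × ℝ | |p.1 - p.2| < δ} = diagonal ℝ := by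
    ext p
    simp only [mem_iInter, mem_ofPred_eq, mem_diagonal_iff]
    refine ⟨fun h => ?_, fun h δ hδ => by simpa [h] using hδ⟩
    exact sub_eq_zero.1 (abs_nonpos_iff.1
      (le_of_forall_pos_lt_add fun ε hε => by simpa using h ε hε))
  have hnull : (μ.prod μ) (diagonal ℝ) = 0 := by
    rw [Measure.measure_prod_null measurableSet_diagonal]
    refine .of_forall fun x => ?_
    simp [preimage, diagonal]
  have hlim := tendsto_measure_biInter_gt (μ := μ.prod μ) (a := (0 : ℝ))
    (fun δ _ => (hmeas δ).nullMeasurableSet) (fun _ _ _ hle _ hp => lt_of_lt_of_le hp hle)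
    ⟨1, one_pos, measure_ne_top _ _⟩
  rw [hdiag, hnull] at hlim
  exact (ENNReal.tendsto_toReal ENNReal.zero_ne_top).comp hlim

lemma integrable_ite_abs_sub_lt [IsFiniteMeasure P] (hX : Measurable X) (δ : ℝ) :
    Integrable (fun z : Ω × Ω => if |X z.1 - X z.2| < δ then (1 : ℝ) else 0) (P.prod P) := by
  refine .of_bound (Measurable.ite (measurableSet_lt (by fun_prop) measurable_const)
    measurable_const measurable_const).aestronglyMeasurable 1 (.of_forall fun z => ?_)
  split_ifs <;> simp

lemma integral_ite_abs_sub_lt [SFinite P] (hX : MeasurePreserving X P μ) (δ : ℝ) :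
    ∫ z : Ω × Ω, (if |X z.1 - X z.2| < δ then 1 else 0) ∂P.prod P
      = (μ.prod μ).real {p : ℝ × ℝ | |p.1 - p.2| < δ} := by
  have hmeas : MeasurableSet {p : ℝ × ℝ | |p.1 - p.2| < δ} :=
    measurableSet_lt (by fun_prop) measurable_const
  rw [measureReal_def, ← (hX.prod hX).measure_preimage hmeas.nullMeasurableSet, ← measureReal_def,
    ← integral_indicator_one ((hX.prod hX).measurable hmeas)]
  rfl

/-- The cut-off interaction of the pair of particles `z`, whose positions are `X z.1, X z.2` in one
gas and `Y z.1, Y z.2` in the other, tested against the displacement of `z.1` between the gases. -/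
noncomputable def pairInteraction (X Y : Ω → ℝ) (δ R : ℝ) (z : Ω × Ω) : ℝ :=
  (X z.1 - Y z.1) * (tent R (X z.1) * truncKernel δ (X z.1 - X z.2)
    - tent R (Y z.1) * truncKernel δ (Y z.1 - Y z.2))

variable {δ R : ℝ}

lemma integrable_pairInteraction [IsFiniteMeasure P] (hX : Measurable X) (hY : Measurable Y)
    (hZ : Integrable (fun ω => X ω - Y ω) P) (hδ : 0 < δ) (hR : 0 < R) :
    Integrable (pairInteraction X Y δ R) (P.prod P) := by
  have hkernel := measurable_truncKernel δ
  have htent := (continuous_tent R).measurable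
  have hbound {W : Ω → ℝ} (z : Ω × Ω) :
      |tent R (W z.1) * truncKernel δ (W z.1 - W z.2)| ≤ δ⁻¹ :=
    (abs_tent_mul_le hR _ _).trans (abs_truncKernel_le hδ _)
  exact (hZ.comp_fst P).mul_bdd (by fun_prop : Measurable _).aestronglyMeasurable (c := δ⁻¹ + δ⁻¹)
    (.of_forall fun z => (abs_sub _ _).trans (add_le_add (hbound z) (hbound z)))

lemma integral_pairInteraction [IsFiniteMeasure P] (hX : MeasurePreserving X P μ)
    (hY : MeasurePreserving Y P ν) (hZ : Integrable (fun ω => X ω - Y ω) P) (hδ : 0 < δ)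
    (hR : 0 < R) :
    ∫ z, pairInteraction X Y δ R z ∂P.prod P
      = ∫ ω, (X ω - Y ω)
        * (tent R (X ω) * truncField μ δ (X ω) - tent R (Y ω) * truncField ν δ (Y ω)) ∂P := by
  have hkernel {W : Ω → ℝ} (hW : Measurable W) (ω : Ω) :
      Integrable (fun ω' => tent R (W ω) * truncKernel δ (W ω - W ω')) P :=
    .const_mul (.of_bound ((measurable_truncKernel δ).comp (by fun_prop)).aestronglyMeasurable
      δ⁻¹ (.of_forall fun _ => abs_truncKernel_le hδ _)) _
  rw [integral_prod _ (integrable_pairInteraction hX.measurable hY.measurable hZ hδ hR)]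
  refine integral_congr_ae (.of_forall fun ω => ?_)
  simp only [pairInteraction, integral_const_mul, truncField_eq_integral hX,
    truncField_eq_integral hY, integral_sub (hkernel hX.measurable ω) (hkernel hY.measurable ω)]

lemma pairInteraction_add_swap_le {Ω : Type*} {X Y : Ω → ℝ} (h : Monovary X Y) (hδ : 0 < δ)
    (hR : 0 < R) (z : Ω × Ω) :
    pairInteraction X Y δ R z + pairInteraction X Y δ R z.swap
      ≤ (if |X z.1 - X z.2| < δ then 1 else 0) + (if |Y z.1 - Y z.2| < δ then 1 else 0)
        + R⁻¹ * (|X z.1 - Y z.1| + 2 * |X z.2 - Y z.2|) :=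
  symmetrized_truncKernel_le hδ hR (monovary_iff_forall_mul_nonneg.1 h z.2 z.1)

lemma two_mul_integral_pairInteraction_le [IsProbabilityMeasure P]
    (h : Monovary X Y) (hX : MeasurePreserving X P μ) (hY : MeasurePreserving Y P ν)
    (hZ : Integrable (fun ω => X ω - Y ω) P) (hδ : 0 < δ) (hR : 0 < R) :
    2 * ∫ z, pairInteraction X Y δ R z ∂P.prod P
      ≤ (μ.prod μ).real {p : ℝ × ℝ | |p.1 - p.2| < δ}
        + (ν.prod ν).real {p : ℝ × ℝ | |p.1 - p.2| < δ}
        + R⁻¹ * (3 * ∫ ω, |X ω - Y ω| ∂P) := by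
  have hint := integrable_pairInteraction hX.measurable hY.measurable hZ hδ hR
  have hswap : Integrable (fun z => pairInteraction X Y δ R z.swap) (P.prod P) := hint.swap
  have hintX := integrable_ite_abs_sub_lt (P := P) hX.measurable δ
  have hintY := integrable_ite_abs_sub_lt (P := P) hY.measurable δ
  have hfst := hZ.abs.comp_fst P
  have hsnd := (hZ.abs.comp_snd P).const_mul 2
  have hnear := hintX.fun_add hintY
  have hdispl := (hfst.fun_add hsnd).const_mul R⁻¹
  calc 2 * ∫ z, pairInteraction X Y δ R z ∂P.prod P
      = ∫ z, (pairInteraction X Y δ R z + pairInteraction X Y δ R z.swap) ∂P.prod P := by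
        rw [integral_add hint hswap, integral_prod_swap (pairInteraction X Y δ R), two_mul]
    _ ≤ ∫ z : Ω × Ω, ((if |X z.1 - X z.2| < δ then 1 else 0)
          + (if |Y z.1 - Y z.2| < δ then 1 else 0)
          + R⁻¹ * (|X z.1 - Y z.1| + 2 * |X z.2 - Y z.2|)) ∂P.prod P :=
        integral_mono (hint.add hswap) (hnear.add hdispl) (pairInteraction_add_swap_le h hδ hR)
    _ = _ := by
        rw [integral_add hnear hdispl, integral_add hintX hintY, integral_ite_abs_sub_lt hX,
          integral_ite_abs_sub_lt hY, integral_const_mul, integral_add hfst hsnd,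
          integral_const_mul, integral_fun_fst (fun ω => |X ω - Y ω|),
          integral_fun_snd (fun ω => |X ω - Y ω|)]
        simp only [probReal_univ, one_smul]
        ring

variable {A B : ℝ → ℝ}

lemma eventually_abs_tent_mul_sub_le {F : ℝ → ℝ → ℝ} {l : Filter ℝ}
    (h : TendstoLocallyUniformly F A l) (hR : 0 < R) {ε : ℝ} (hε : 0 < ε) :
    ∀ᶠ δ in l, ∀ x, |tent R x * F δ x - tent R x * A x| ≤ ε := by
  have hunif := (tendstoLocallyUniformly_iff_forall_isCompact.1 h) (Icc (-R) R) isCompact_Icc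
  filter_upwards [Metric.tendstoUniformlyOn_iff.1 hunif ε hε] with δ hδ x
  rw [← mul_sub]
  rcases le_total R |x| with hx | hx
  · simpa [tent_eq_zero hR hx] using hε.le
  · refine (abs_tent_mul_le hR _ _).trans ?_
    rw [abs_sub_comm]
    exact (hδ x (abs_le.1 hx)).le

lemma exists_seq_truncField_approx
    (hA : TendstoLocallyUniformly (truncField μ) A (𝓝[>] 0))
    (hB : TendstoLocallyUniformly (truncField ν) B (𝓝[>] 0)) :
    ∃ δ : ℕ → ℝ, (∀ k, 0 < δ k) ∧ Tendsto δ atTop (𝓝[>] 0) ∧ ∀ (k : ℕ) (x : ℝ),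
      |tent (k + 1) x * truncField μ (δ k) x - tent (k + 1) x * A x| ≤ 1 / (k + 1) ∧
      |tent (k + 1) x * truncField ν (δ k) x - tent (k + 1) x * B x| ≤ 1 / (k + 1) := by
  have hstep (k : ℕ) : ∃ δ ∈ Ioo (0 : ℝ) (1 / (k + 1)), ∀ x,
      |tent (k + 1) x * truncField μ δ x - tent (k + 1) x * A x| ≤ 1 / (k + 1) ∧
      |tent (k + 1) x * truncField ν δ x - tent (k + 1) x * B x| ≤ 1 / (k + 1) := by
    have hk : (0 : ℝ) < k + 1 := k.cast_add_one_pos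
    have hε : (0 : ℝ) < 1 / (k + 1) := Nat.one_div_pos_of_nat
    obtain ⟨δ, hδ, hAδ, hBδ⟩ := (Eventually.and (Ioo_mem_nhdsGT hε)
      ((eventually_abs_tent_mul_sub_le hA hk hε).and
        (eventually_abs_tent_mul_sub_le hB hk hε))).exists
    exact ⟨δ, hδ, fun x => ⟨hAδ x, hBδ x⟩⟩
  choose δ hδ happrox using hstep
  refine ⟨δ, fun k => (hδ k).1,
    tendsto_nhdsWithin_iff.2 ⟨?_, .of_forall fun k => (hδ k).1⟩, happrox⟩
  exact squeeze_zero (fun k => (hδ k).1.le) (fun k => (hδ k).2.le)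
    tendsto_one_div_add_atTop_nhds_zero_nat

lemma tendsto_of_abs_sub_tent_mul_le {a : ℕ → ℝ} {A x : ℝ}
    (h : ∀ k : ℕ, |a k - tent (k + 1) x * A| ≤ 1 / (k + 1)) : Tendsto a atTop (𝓝 A) := by
  have htent : Tendsto (fun k : ℕ => tent (k + 1) x * A) atTop (𝓝 (1 * A)) :=
    ((tendsto_tent x).comp
      (tendsto_atTop_add_const_right _ 1 tendsto_natCast_atTop_atTop)).mul_const A
  have herr : Tendsto (fun k : ℕ => a k - tent (k + 1) x * A) atTop (𝓝 0) :=
    squeeze_zero_norm h tendsto_one_div_add_atTop_nhds_zero_nat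
  simpa using herr.add htent

lemma abs_le_of_abs_sub_tent_mul_le {k : ℕ} {a A x C : ℝ} (hA : |A| ≤ C)
    (h : |a - tent (k + 1) x * A| ≤ 1 / (k + 1)) : |a| ≤ C + 1 := by
  have htent := (abs_tent_mul_le k.cast_add_one_pos x A).trans hA
  have hk : (1 : ℝ) / (k + 1) ≤ 1 := by
    rw [div_le_one₀ k.cast_add_one_pos]
    exact le_add_of_nonneg_left k.cast_nonneg
  linarith [abs_sub_abs_le_abs_sub a (tent (k + 1) x * A)]

lemma tendsto_integral_mul_sub_of_tent_approx {Z : Ω → ℝ} {F G : ℕ → ℝ → ℝ}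
    (hX : Measurable X) (hY : Measurable Y) (hZ : Integrable Z P)
    (hF : ∀ k, Measurable (F k)) (hG : ∀ k, Measurable (G k))
    (hFA : ∀ (k : ℕ) x, |F k x - tent (k + 1) x * A x| ≤ 1 / (k + 1))
    (hGB : ∀ (k : ℕ) x, |G k x - tent (k + 1) x * B x| ≤ 1 / (k + 1))
    {C D : ℝ} (hAC : ∀ x, |A x| ≤ C) (hBD : ∀ x, |B x| ≤ D) :
    Tendsto (fun k => ∫ ω, Z ω * (F k (X ω) - G k (Y ω)) ∂P) atTop
      (𝓝 (∫ ω, Z ω * (A (X ω) - B (Y ω)) ∂P)) := by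
  refine tendsto_integral_of_dominated_convergence (fun ω => |Z ω| * ((C + 1) + (D + 1)))
    (fun k => ?_) (hZ.abs.mul_const _) (fun k => .of_forall fun ω => ?_) (.of_forall fun ω => ?_)
  · exact hZ.aestronglyMeasurable.mul
      (((hF k).comp hX).sub ((hG k).comp hY)).aestronglyMeasurable
  · rw [Real.norm_eq_abs, abs_mul]
    gcongr
    exact (abs_sub _ _).trans (add_le_add (abs_le_of_abs_sub_tent_mul_le (hAC _) (hFA k _))
      (abs_le_of_abs_sub_tent_mul_le (hBD _) (hGB k _)))
  · exact ((tendsto_of_abs_sub_tent_mul_le fun k => hFA k _).sub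
      (tendsto_of_abs_sub_tent_mul_le fun k => hGB k _)).const_mul _

lemma tendsto_pairInteraction_bound [IsFiniteMeasure μ] [IsFiniteMeasure ν]
    [NullSingletonClass μ] [NullSingletonClass ν] {δ : ℕ → ℝ} (hδ : Tendsto δ atTop (𝓝[>] 0))
    (c : ℝ) :
    Tendsto (fun k : ℕ => (μ.prod μ).real {p : ℝ × ℝ | |p.1 - p.2| < δ k}
      + (ν.prod ν).real {p : ℝ × ℝ | |p.1 - p.2| < δ k} + (k + 1 : ℝ)⁻¹ * c) atTop (𝓝 0) := by
  have hinv : Tendsto (fun k : ℕ => (k + 1 : ℝ)⁻¹ * c) atTop (𝓝 (0 * c)) :=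
    (tendsto_inv_atTop_zero.comp (tendsto_atTop_add_const_right _ 1
      tendsto_natCast_atTop_atTop)).mul_const c
  simpa using ((tendsto_measureReal_near_diagonal (μ := μ).comp hδ).add
    (tendsto_measureReal_near_diagonal (μ := ν).comp hδ)).add hinv

theorem integral_sub_mul_sub_nonpos_of_monovary [IsProbabilityMeasure P] [IsFiniteMeasure μ]
    [IsFiniteMeasure ν] [NullSingletonClass μ] [NullSingletonClass ν] (h : Monovary X Y)
    (hX : MeasurePreserving X P μ) (hY : MeasurePreserving Y P ν)
    (hZ : Integrable (fun ω => X ω - Y ω) P)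
    (hA : TendstoLocallyUniformly (truncField μ) A (𝓝[>] 0))
    (hB : TendstoLocallyUniformly (truncField ν) B (𝓝[>] 0))
    {C D : ℝ} (hAC : ∀ x, |A x| ≤ C) (hBD : ∀ x, |B x| ≤ D) :
    ∫ ω, (X ω - Y ω) * (A (X ω) - B (Y ω)) ∂P ≤ 0 := by
  obtain ⟨δ, hδ, hδ₀, happrox⟩ := exists_seq_truncField_approx hA hB
  have hR (k : ℕ) : (0 : ℝ) < k + 1 := k.cast_add_one_pos
  have hcutoff := tendsto_integral_mul_sub_of_tent_approx hX.measurable hY.measurable hZ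
    (fun k => (continuous_tent (k + 1)).measurable.mul (measurable_truncField (δ k)))
    (fun k => (continuous_tent (k + 1)).measurable.mul (measurable_truncField (δ k)))
    (fun k x => (happrox k x).1) (fun k x => (happrox k x).2) hAC hBD
  have hle := le_of_tendsto_of_tendsto' (hcutoff.const_mul 2)
    (tendsto_pairInteraction_bound (μ := μ) (ν := ν) hδ₀ (3 * ∫ ω, |X ω - Y ω| ∂P)) fun k =>
      (congrArg (2 * ·) (integral_pairInteraction hX hY hZ (hδ k) (hR k))).symm.trans_le
        (two_mul_integral_pairInteraction_le h hX hY hZ (hδ k) (hR k))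
  linarith

end Interaction

section PrincipalValue

variable {u : ℝ → ℝ}

/-- The Hilbert transform written as an absolutely convergent integral, by pairing the points at
equal distance on both sides of the singularity. -/
noncomputable def pairedHilbert (u : ℝ → ℝ) (x : ℝ) : ℝ :=
  ∫ z in Ioi (0 : ℝ), (u (x - z) - u (x + z)) / z

lemma integrableOn_div_of_forall_le_abs {v w : ℝ → ℝ} (hv : Integrable v) (hw : Measurable w)
    {s : Set ℝ} (hs : MeasurableSet s) {δ : ℝ} (hδ : 0 < δ) (h : ∀ y ∈ s, δ ≤ |w y|) :
    IntegrableOn (fun y => v y / w y) s := by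
  refine hv.integrableOn.mul_bdd (c := δ⁻¹) hw.inv.aestronglyMeasurable ?_
  filter_upwards [ae_restrict_mem hs] with y hy
  rw [norm_inv, Real.norm_eq_abs]
  exact inv_anti₀ hδ (h y hy)

lemma truncHilbert_eq_integral_Ici (hu : Integrable u) {δ : ℝ} (hδ : 0 < δ) (x : ℝ) :
    truncHilbert u δ x = ∫ z in Ici δ, (u (x - z) - u (x + z)) / z := by
  have hsplit : {y : ℝ | δ ≤ |x - y|} = Iic (x - δ) ∪ Ici (x + δ) := by
    ext y
    simp only [mem_ofPred_eq, le_abs, mem_union, mem_Iic, mem_Ici]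
    constructor <;> rintro (h | h) <;> [left; right; left; right] <;> linarith
  have hint {v : ℝ → ℝ} (hv : Integrable v) : IntegrableOn (fun z => v z / z) (Ici δ) :=
    integrableOn_div_of_forall_le_abs hv measurable_id measurableSet_Ici hδ
      fun z hz => (le_abs_self z).trans' hz
  have hleft : ∫ y in Iic (x - δ), u y / (x - y) = ∫ z in Ici δ, u (x - z) / z := by
    have := (Measure.measurePreserving_sub_left volume x).setIntegral_preimage_emb
      (MeasurableEquiv.subLeft x).measurableEmbedding (fun y => u y / (x - y)) (Iic (x - δ))
    simpa using! this.symm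
  have hright : ∫ y in Ici (x + δ), u y / (x - y) = -∫ z in Ici δ, u (x + z) / z := by
    have := (measurePreserving_add_left volume x).setIntegral_preimage_emb
      (MeasurableEquiv.addLeft x).measurableEmbedding (fun y => u y / (x - y)) (Ici (x + δ))
    simpa [div_neg, integral_neg] using! this.symm
  have hintx : IntegrableOn (fun y => u y / (x - y)) {y : ℝ | δ ≤ |x - y|} :=
    integrableOn_div_of_forall_le_abs hu (by fun_prop)
      (measurableSet_le measurable_const (by fun_prop)) hδ fun y hy => hy
  rw [hsplit, integrableOn_union] at hintx
  have hdisj : Disjoint (Iic (x - δ)) (Ici (x + δ)) := Iic_disjoint_Ici.2 (by linarith)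
  rw [truncHilbert, hsplit, setIntegral_union hdisj measurableSet_Ici hintx.1 hintx.2, hleft,
    hright, ← sub_eq_add_neg,
    ← integral_sub (hint (hu.comp_sub_left x)) (hint (hu.comp_add_left x))]
  simp only [sub_div]

lemma abs_truncHilbert_sub_pairedHilbert_le (hu : Integrable u) {x r : ℝ} {K : NNReal}
    (hK : LipschitzOnWith K u (Metric.ball x r)) {δ : ℝ} (hδ : 0 < δ) (hδr : δ ≤ r) :
    |truncHilbert u δ x - pairedHilbert u x| ≤ 2 * K * δ := by
  have hbound : ∀ z ∈ Ioo 0 δ, ‖(u (x - z) - u (x + z)) / z‖ ≤ 2 * K := fun z hz => by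
    have hz' : |z| < r := by rw [abs_of_pos hz.1]; exact hz.2.trans_le hδr
    have hlip := hK.dist_le_mul (x - z) (by simpa [Real.dist_eq] using hz') (x + z)
      (by simpa [Real.dist_eq] using hz')
    rw [norm_div, div_le_iff₀ (norm_pos_iff.2 hz.1.ne')]
    calc ‖u (x - z) - u (x + z)‖ ≤ K * dist (x - z) (x + z) := hlip
      _ = 2 * K * ‖z‖ := by
        rw [Real.dist_eq, show x - z - (x + z) = -(2 * z) by ring, abs_neg, abs_mul, abs_two,
          Real.norm_eq_abs]
        ring
  have hnear : IntegrableOn (fun z => (u (x - z) - u (x + z)) / z) (Ioo 0 δ) :=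
    .of_bound measure_Ioo_lt_top
      (((hu.comp_sub_left x).sub (hu.comp_add_left x)).aestronglyMeasurable.mul
        measurable_inv.aestronglyMeasurable).restrict (2 * K)
      ((ae_restrict_iff' measurableSet_Ioo).2 (.of_forall hbound))
  have hfar : IntegrableOn (fun z => (u (x - z) - u (x + z)) / z) (Ici δ) :=
    integrableOn_div_of_forall_le_abs ((hu.comp_sub_left x).sub (hu.comp_add_left x)) measurable_id
      measurableSet_Ici hδ fun z hz => (le_abs_self z).trans' hz
  have hdisj : Disjoint (Ioo 0 δ) (Ici δ) :=
    disjoint_left.2 fun z hz => not_le.2 hz.2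
  rw [truncHilbert_eq_integral_Ici hu hδ, pairedHilbert, ← Ioo_union_Ici_eq_Ioi hδ,
    setIntegral_union hdisj measurableSet_Ici hnear hfar, sub_add_cancel_right, abs_neg]
  simpa [hδ.le] using norm_setIntegral_le_of_norm_le_const (μ := volume) measure_Ioo_lt_top hbound

lemma tendstoLocallyUniformly_truncHilbert_pairedHilbert (hu : Integrable u)
    (hL : LocallyLipschitz u) :
    TendstoLocallyUniformly (truncHilbert u) (pairedHilbert u) (𝓝[>] 0) := by
  refine Metric.tendstoLocallyUniformly_iff.2 fun ε hε x => ?_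
  obtain ⟨K, t, ht, hK⟩ := hL x
  obtain ⟨r, hr, hrt⟩ := Metric.mem_nhds_iff.1 ht
  have hsmall : ∀ᶠ δ in 𝓝[>] (0 : ℝ), 2 * K * δ < ε := by
    have hcont : Tendsto (fun δ : ℝ => 2 * K * δ) (𝓝[>] 0) (𝓝 (2 * K * 0)) :=
      (tendsto_nhdsWithin_of_tendsto_nhds tendsto_id).const_mul _
    exact hcont.eventually_lt_const (by simpa using hε)
  refine ⟨Metric.ball x (r / 2), Metric.ball_mem_nhds x (half_pos hr), ?_⟩
  filter_upwards [hsmall, Ioo_mem_nhdsGT (half_pos hr)] with δ hδε hδ y hy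
  have hball : Metric.ball y (r / 2) ⊆ t :=
    (Metric.ball_subset_ball' (by linarith [Metric.mem_ball.1 hy])).trans hrt
  rw [dist_comm, Real.dist_eq]
  exact (abs_truncHilbert_sub_pairedHilbert_le hu (hK.mono hball) hδ.1 hδ.2.le).trans_lt hδε

theorem tendstoLocallyUniformly_truncHilbert (hu : Integrable u) (hL : LocallyLipschitz u) :
    TendstoLocallyUniformly (truncHilbert u) (hilbert u) (𝓝[>] 0) := by
  have h := tendstoLocallyUniformly_truncHilbert_pairedHilbert hu hL
  have hlim : hilbert u = pairedHilbert u := funext fun x =>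
    ((tendstoLocallyUniformlyOn_univ.2 h).tendsto_at (mem_univ x)).limUnder_eq
  rwa [hlim]

lemma truncField_withDensity (hu : Measurable u) (hu₀ : 0 ≤ u) :
    truncField (volume.withDensity fun x => ENNReal.ofReal (u x)) = truncHilbert u := by
  ext δ x
  have hset : MeasurableSet {y : ℝ | δ ≤ |x - y|} := measurableSet_le measurable_const (by fun_prop)
  rw [truncField, truncHilbert,
    integral_withDensity_eq_integral_toReal_smul (by fun_prop) (by simp), ← integral_indicator hset]
  refine integral_congr_ae (.of_forall fun y => ?_)
  simp only [ENNReal.toReal_ofReal (hu₀ y), smul_eq_mul, indicator_apply, mem_ofPred_eq,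
    truncKernel, mul_ite, mul_zero, div_eq_mul_inv]

end PrincipalValue

section IntegralCurves

variable {E : Type*} [NormedAddCommGroup E] [NormedSpace ℝ E] {v : ℝ → E → E} {a b : ℝ} {K : NNReal}

lemma exists_isIntegralCurveOn_Icc [CompleteSpace E]
    (hK : ∀ t ∈ Icc a b, LipschitzWith K (v t)) (hv : ∀ x, ContinuousOn (v · x) (Icc a b)) {C : ℝ}
    (hC : ∀ t ∈ Icc a b, ∀ x, ‖v t x‖ ≤ C) {t₀ : ℝ} (ht₀ : t₀ ∈ Icc a b) (x : E) :
    ∃ γ, γ t₀ = x ∧ IsIntegralCurveOn γ v (Icc a b) := by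
  have hC₀ : 0 ≤ C := (norm_nonneg _).trans (hC t₀ ht₀ x)
  have hab : 0 ≤ b - a := by linarith [ht₀.1, ht₀.2]
  have h : IsPicardLindelof v (⟨t₀, ht₀⟩ : Icc a b) x (⟨C, hC₀⟩ * ⟨b - a, hab⟩) 0 ⟨C, hC₀⟩ K :=
    { lipschitzOnWith := fun t ht => (hK t ht).lipschitzOnWith
      continuousOn := fun y _ => hv y
      norm_le := fun t ht y _ => hC t ht y
      mul_max_le := by
        change C * max (b - t₀) (t₀ - a) ≤ C * (b - a) - 0
        rw [sub_zero]
        exact mul_le_mul_of_nonneg_left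
          (max_le (by linarith [ht₀.1]) (by linarith [ht₀.2])) hC₀ }
  exact h.exists_eq_forall_mem_Icc_hasDerivWithinAt₀

lemma isIntegralCurveOn_Icc_eqOn_of_eq_left (hK : ∀ t ∈ Icc a b, LipschitzWith K (v t))
    {α β : ℝ → E} (hα : IsIntegralCurveOn α v (Icc a b)) (hβ : IsIntegralCurveOn β v (Icc a b))
    (h : α a = β a) : EqOn α β (Icc a b) := by
  have hright {γ : ℝ → E} (hγ : IsIntegralCurveOn γ v (Icc a b)) (t) (ht : t ∈ Ico a b) :
      HasDerivWithinAt γ (v t (γ t)) (Ici t) t :=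
    (hγ t (Ico_subset_Icc_self ht)).mono_of_mem_nhdsWithin (Icc_mem_nhdsGE_of_mem ht)
  exact ODE_solution_unique_of_mem_Icc_right (s := fun _ => univ)
    (fun t ht => (hK t (Ico_subset_Icc_self ht)).lipschitzOnWith)
    hα.continuousOn (hright hα) (fun _ _ => mem_univ _)
    hβ.continuousOn (hright hβ) (fun _ _ => mem_univ _) h

lemma isIntegralCurveOn_Icc_eqOn_of_eq_right (hK : ∀ t ∈ Icc a b, LipschitzWith K (v t))
    {α β : ℝ → E} (hα : IsIntegralCurveOn α v (Icc a b)) (hβ : IsIntegralCurveOn β v (Icc a b))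
    (h : α b = β b) : EqOn α β (Icc a b) := by
  have hleft {γ : ℝ → E} (hγ : IsIntegralCurveOn γ v (Icc a b)) (t) (ht : t ∈ Ioc a b) :
      HasDerivWithinAt γ (v t (γ t)) (Iic t) t :=
    (hγ t (Ioc_subset_Icc_self ht)).mono_of_mem_nhdsWithin (Icc_mem_nhdsLE_of_mem ht)
  exact ODE_solution_unique_of_mem_Icc_left (s := fun _ => univ)
    (fun t ht => (hK t (Ioc_subset_Icc_self ht)).lipschitzOnWith)
    hα.continuousOn (hleft hα) (fun _ _ => mem_univ _)
    hβ.continuousOn (hleft hβ) (fun _ _ => mem_univ _) h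

end IntegralCurves

section Flow

variable {v : ℝ → ℝ → ℝ} {a b : ℝ} {K : NNReal}

lemma isIntegralCurveOn_Icc_lt_of_lt (hK : ∀ t ∈ Icc a b, LipschitzWith K (v t)) {α β : ℝ → ℝ}
    (hα : IsIntegralCurveOn α v (Icc a b)) (hβ : IsIntegralCurveOn β v (Icc a b)) (h : α a < β a)
    {t : ℝ} (ht : t ∈ Icc a b) : α t < β t := by
  by_contra! hle
  have hcont : ContinuousOn (fun s => α s - β s) (Icc a t) :=
    (hα.continuousOn.sub hβ.continuousOn).mono (Icc_subset_Icc_right ht.2)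
  obtain ⟨s, hs, hmeet⟩ := intermediate_value_Icc ht.1 hcont
    (show (0 : ℝ) ∈ Icc (α a - β a) (α t - β t) from ⟨by linarith, by linarith⟩)
  have hsub : Icc a s ⊆ Icc a b := Icc_subset_Icc_right (hs.2.trans ht.2)
  exact h.ne (isIntegralCurveOn_Icc_eqOn_of_eq_right (fun r hr => hK r (hsub hr)) (hα.mono hsub)
    (hβ.mono hsub) (sub_eq_zero.1 hmeet) (left_mem_Icc.2 hs.1))

theorem exists_orderPreserving_flow (hab : a ≤ b) (hK : ∀ t ∈ Icc a b, LipschitzWith K (v t))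
    (hv : ∀ x, ContinuousOn (v · x) (Icc a b)) {C : ℝ} (hC : ∀ t ∈ Icc a b, ∀ x, |v t x| ≤ C) :
    ∃ Φ : ℝ → ℝ → ℝ, Φ a = id ∧ (∀ x, IsIntegralCurveOn (Φ · x) v (Icc a b)) ∧
      ∀ t ∈ Icc a b, StrictMono (Φ t) ∧ Function.Surjective (Φ t) := by
  have ha : a ∈ Icc a b := left_mem_Icc.2 hab
  choose γ hγa hγ using exists_isIntegralCurveOn_Icc hK hv hC ha
  refine ⟨fun t x => γ x t, funext hγa, hγ, fun t ht => ⟨fun x y hxy => ?_, fun y => ?_⟩⟩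
  · exact isIntegralCurveOn_Icc_lt_of_lt hK (hγ x) (hγ y) (by rwa [hγa, hγa]) ht
  · obtain ⟨α, rfl, hα⟩ := exists_isIntegralCurveOn_Icc hK hv hC ht y
    exact ⟨α a, isIntegralCurveOn_Icc_eqOn_of_eq_left hK (hγ _) hα (hγa _) ht⟩

end Flow

section LeibnizRule

variable {E : Type*} [NormedAddCommGroup E] [NormedSpace ℝ E]

lemma contDiff_of_contDiffOn_prod_univ {F : Type*} [NormedAddCommGroup F] [NormedSpace ℝ F]
    {f : ℝ → F → E} {U : Set ℝ} {k : WithTop ℕ∞}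
    (hf : ContDiffOn ℝ k (Function.uncurry f) (U ×ˢ univ)) {t : ℝ} (ht : t ∈ U) :
    ContDiff ℝ k (f t) :=
  contDiffOn_univ.1 <|
    hf.comp (f := fun x => (t, x)) (by fun_prop) fun _ _ => ⟨ht, mem_univ _⟩

lemma continuousOn_intervalIntegral_of_continuousOn {X : Type*} [TopologicalSpace X] {s : Set X}
    {f : X → ℝ → E} (hf : ContinuousOn (Function.uncurry f) (s ×ˢ univ)) {γ : X → ℝ}
    (hγ : ContinuousOn γ s) (c : ℝ) : ContinuousOn (fun x => ∫ y in c..γ x, f x y) s := by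
  rw [continuousOn_iff_continuous_domRestrict] at hγ ⊢
  have hf' : Continuous (Function.uncurry fun (x : s) y => f x y) :=
    hf.comp_continuous (f := fun p : s × ℝ => ((p.1 : X), p.2)) (by fun_prop)
      fun p => ⟨p.1.2, mem_univ _⟩
  exact intervalIntegral.continuous_parametric_intervalIntegral_of_continuous hf' hγ

variable {f : ℝ → ℝ → E} {U : Set ℝ}

lemma hasDerivAt_of_contDiffOn_prod_univ (hU : IsOpen U)
    (hf : ContDiffOn ℝ 1 (Function.uncurry f) (U ×ˢ univ)) {t : ℝ} (ht : t ∈ U) (y : ℝ) :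
    HasDerivAt (fun s => f s y) (fderiv ℝ (Function.uncurry f) (t, y) (1, 0)) t := by
  have h : DifferentiableAt ℝ (Function.uncurry f) (t, y) :=
    (hf.contDiffAt (prod_mem_nhds (hU.mem_nhds ht) univ_mem)).differentiableAt one_ne_zero
  exact h.hasFDerivAt.comp_hasDerivAt (f := fun s => (s, y)) t
    ((hasDerivAt_id t).prodMk (hasDerivAt_const t y))

lemma continuousOn_deriv_of_contDiffOn_prod_univ (hU : IsOpen U)
    (hf : ContDiffOn ℝ 1 (Function.uncurry f) (U ×ˢ univ)) :
    ContinuousOn (Function.uncurry fun t y => deriv (fun s => f s y) t) (U ×ˢ univ) :=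
  ((hf.continuousOn_fderiv_of_isOpen (hU.prod isOpen_univ) le_rfl).clm_apply
    continuousOn_const).congr fun p hp =>
      (hasDerivAt_of_contDiffOn_prod_univ hU hf hp.1 p.2).deriv

lemma hasDerivAt_intervalIntegral_of_contDiffOn (hU : IsOpen U)
    (hf : ContDiffOn ℝ 1 (Function.uncurry f) (U ×ˢ univ)) {t : ℝ} (ht : t ∈ U) (c x : ℝ) :
    HasDerivAt (fun s => ∫ y in c..x, f s y) (∫ y in c..x, deriv (fun s => f s y) t) t := by
  have hderiv := continuousOn_deriv_of_contDiffOn_prod_univ hU hf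
  obtain ⟨r, hr, hrU⟩ := Metric.nhds_basis_closedBall.mem_iff.1 (hU.mem_nhds ht)
  obtain ⟨C, hC⟩ := ((isCompact_closedBall t r).prod isCompact_uIcc).exists_bound_of_continuousOn
    (hderiv.mono (prod_mono hrU (subset_univ (uIcc c x))))
  have hcont {s : ℝ} (hs : s ∈ U) : Continuous (f s) :=
    (contDiff_of_contDiffOn_prod_univ hf hs).continuous
  have hderivt : Continuous fun y => deriv (fun s => f s y) t :=
    hderiv.comp_continuous (f := fun y => (t, y)) (by fun_prop) fun y => ⟨ht, mem_univ _⟩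
  exact (intervalIntegral.hasDerivAt_integral_of_dominated_loc_of_deriv_le (bound := fun _ => C)
    (Metric.closedBall_mem_nhds t hr)
    (mem_of_superset (hU.mem_nhds ht) fun s hs => (hcont hs).aestronglyMeasurable)
    ((hcont ht).intervalIntegrable _ _) hderivt.aestronglyMeasurable
    (.of_forall fun y hy s hs => hC (s, y) ⟨hs, uIoc_subset_uIcc hy⟩) (by simp)
    (.of_forall fun y _ s hs =>
      (hasDerivAt_of_contDiffOn_prod_univ hU hf (hrU hs) y).differentiableAt.hasDerivAt)).2

theorem hasDerivAt_intervalIntegral_of_hasDerivAt_right [CompleteSpace E] (hU : IsOpen U)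
    (hf : ContDiffOn ℝ 1 (Function.uncurry f) (U ×ˢ univ)) {t : ℝ} (ht : t ∈ U) {γ : ℝ → ℝ}
    {γ' : ℝ} (hγ : HasDerivAt γ γ' t) (c : ℝ) :
    HasDerivAt (fun s => ∫ y in c..γ s, f s y)
      ((∫ y in c..γ t, deriv (fun s => f s y) t) + γ' • f t (γ t)) t := by
  have hUx : U ×ˢ univ ∈ 𝓝 (t, γ t) := prod_mem_nhds (hU.mem_nhds ht) univ_mem
  have hcont {s : ℝ} (hs : s ∈ U) : Continuous (f s) :=
    (contDiff_of_contDiffOn_prod_univ hf hs).continuous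
  have hderiv : ContinuousOn (Function.uncurry fun (p : ℝ × ℝ) y => deriv (fun s => f s y) p.1)
      ((U ×ˢ univ) ×ˢ univ) :=
    (continuousOn_deriv_of_contDiffOn_prod_univ hU hf).comp
      (f := fun q : (ℝ × ℝ) × ℝ => (q.1.1, q.2)) (by fun_prop) fun q hq => ⟨hq.1.1, mem_univ _⟩
  have hprim : ContinuousAt (fun p : ℝ × ℝ => ∫ y in c..p.2, deriv (fun s => f s y) p.1)
      (t, γ t) :=
    (continuousOn_intervalIntegral_of_continuousOn hderiv continuousOn_snd c).continuousAt hUx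
  have hspan : Continuous (ContinuousLinearMap.toSpanSingleton ℝ : E → ℝ →L[ℝ] E) :=
    (ContinuousLinearMap.toSpanSingletonCLE (𝕜 := ℝ) (E := E)).continuous
  have hjoint := hasStrictFDerivAt_uncurry_coprod (f := fun s x => ∫ y in c..x, f s y)
    (f₁ := fun s x => .toSpanSingleton ℝ (∫ y in c..x, deriv (fun s => f s y) s))
    (f₂ := fun s x => .toSpanSingleton ℝ (f s x))
    (mem_of_superset hUx fun p hp =>
      (hasDerivAt_intervalIntegral_of_contDiffOn hU hf hp.1 c p.2).hasFDerivAt)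
    (mem_of_superset hUx fun p hp =>
      ((hcont hp.1).integral_hasStrictDerivAt c p.2).hasDerivAt.hasFDerivAt)
    (hspan.continuousAt.comp hprim)
    (hspan.continuousAt.comp (hf.continuousOn.continuousAt hUx))
  have h := hjoint.hasFDerivAt.comp_hasDerivAt (f := fun s => (s, γ s)) t
    ((hasDerivAt_id t).prodMk hγ)
  convert! h using 1
  simp [Function.HasUncurry.uncurry]

end LeibnizRule

/-- A `C¹` probability density on `[0, T] × ℝ` carried by the velocity field `v`, that is, solving
the continuity equation `∂ₜm + ∂ₓ(m v) = 0`, where `v` is regular enough to have a flow. Total mass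
one is imposed at the initial time only, being conserved. -/
structure IsTransportedDensity (T : ℝ) (v m : ℝ → ℝ → ℝ) : Prop where
  contDiffOn : ContDiffOn ℝ 1 (Function.uncurry m) (Icc 0 T ×ˢ univ)
  nonneg : ∀ t ∈ Icc 0 T, 0 ≤ m t
  integral_zero : ∫ x, m 0 x = 1
  continuity_equation : ∀ t ∈ Ioo 0 T, ∀ x,
    deriv (fun s => m s x) t + deriv (fun y => m t y * v t y) x = 0
  velocity_bounded : ∃ C, ∀ t ∈ Icc 0 T, ∀ x, |v t x| ≤ C
  velocity_continuousOn : ∀ x, ContinuousOn (v · x) (Icc 0 T)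
  velocity_lipschitz : ∃ K : NNReal, ∀ t ∈ Icc 0 T, LipschitzWith K (v t)

namespace IsTransportedDensity

variable {T : ℝ} {v m : ℝ → ℝ → ℝ} {t : ℝ}

lemma contDiff (hm : IsTransportedDensity T v m) (ht : t ∈ Icc 0 T) : ContDiff ℝ 1 (m t) :=
  contDiff_of_contDiffOn_prod_univ hm.contDiffOn ht

lemma measurable_velocity (hm : IsTransportedDensity T v m) (ht : t ∈ Icc 0 T) :
    Measurable (v t) :=
  let ⟨_, hK⟩ := hm.velocity_lipschitz
  (hK t ht).continuous.measurable

lemma integral_deriv_time (hm : IsTransportedDensity T v m) (ht : t ∈ Ioo 0 T) (a b : ℝ) :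
    ∫ x in a..b, deriv (fun s => m s x) t = m t a * v t a - m t b * v t b := by
  have ht' := Ioo_subset_Icc_self ht
  obtain ⟨K, hK⟩ := hm.velocity_lipschitz
  have hmac : AbsolutelyContinuousOnInterval (m t) a b :=
    (hm.contDiff ht').contDiffOn.absolutelyContinuousOnInterval
  have hvac : AbsolutelyContinuousOnInterval (v t) a b :=
    (hK t ht').lipschitzOnWith.absolutelyContinuousOnInterval
  calc ∫ x in a..b, deriv (fun s => m s x) t
      = -∫ x in a..b, deriv (fun y => m t y * v t y) x := by
        rw [← intervalIntegral.integral_neg]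
        exact intervalIntegral.integral_congr fun x _ =>
          eq_neg_of_add_eq_zero_left (hm.continuity_equation t ht x)
    _ = -(m t b * v t b - m t a * v t a) := congrArg _ (hmac.mul hvac).integral_deriv_eq_sub
    _ = _ := neg_sub _ _

lemma hasDerivAt_integral_integralCurve (hm : IsTransportedDensity T v m) {γ : ℝ → ℝ}
    (hγ : IsIntegralCurveOn γ v (Icc 0 T)) (ht : t ∈ Ioo 0 T) (c : ℝ) :
    HasDerivAt (fun s => ∫ y in c..γ s, m s y) (m t c * v t c) t := by
  have hγt : HasDerivAt γ (v t (γ t)) t :=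
    (hγ t (Ioo_subset_Icc_self ht)).hasDerivAt (Icc_mem_nhds ht.1 ht.2)
  have h := hasDerivAt_intervalIntegral_of_hasDerivAt_right isOpen_Ioo
    (hm.contDiffOn.mono (prod_mono Ioo_subset_Icc_self subset_rfl)) ht hγt c
  refine h.congr_deriv ?_
  rw [hm.integral_deriv_time ht, smul_eq_mul]
  ring

theorem integral_integralCurves (hm : IsTransportedDensity T v m) {α β : ℝ → ℝ}
    (hα : IsIntegralCurveOn α v (Icc 0 T)) (hβ : IsIntegralCurveOn β v (Icc 0 T))
    (ht : t ∈ Icc 0 T) : ∫ y in α t..β t, m t y = ∫ y in α 0..β 0, m 0 y := by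
  have hsplit {s : ℝ} (hs : s ∈ Icc 0 T) :
      ∫ y in α s..β s, m s y = (∫ y in 0..β s, m s y) - ∫ y in 0..α s, m s y := by
    have hint (a b : ℝ) : IntervalIntegrable (m s) volume a b :=
      (hm.contDiff hs).continuous.intervalIntegrable _ _
    exact (intervalIntegral.integral_interval_sub_left (hint _ _) (hint _ _)).symm
  have hcont {γ : ℝ → ℝ} (hγ : IsIntegralCurveOn γ v (Icc 0 T)) :
      ContinuousOn (fun s => ∫ y in 0..γ s, m s y) (Icc 0 T) :=
    continuousOn_intervalIntegral_of_continuousOn hm.contDiffOn.continuousOn hγ.continuousOn 0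
  have hsub : Icc 0 t ⊆ Icc 0 T := Icc_subset_Icc_right ht.2
  rw [hsplit ht, hsplit (left_mem_Icc.2 (ht.1.trans ht.2))]
  rcases ht.1.eq_or_lt with rfl | ht₀
  · rfl
  obtain ⟨s, -, hslope⟩ := exists_hasDerivAt_eq_slope _ _ ht₀
    (((hcont hβ).sub (hcont hα)).mono hsub) fun s hs =>
      (hm.hasDerivAt_integral_integralCurve hβ (Ioo_subset_Ioo_right ht.2 hs) 0).sub
        (hm.hasDerivAt_integral_integralCurve hα (Ioo_subset_Ioo_right ht.2 hs) 0)
  rw [sub_self, eq_comm, div_eq_zero_iff, sub_eq_zero] at hslope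
  exact hslope.resolve_right (by linarith)

end IsTransportedDensity

section Quantile

open ProbabilityTheory

/-- Lebesgue measure on the open unit interval, the reference probability space on which quantile
functions live. -/
noncomputable def unitMeasure : Measure (Ioo (0 : ℝ) 1) := volume.comap Subtype.val

lemma measurePreserving_val_unitMeasure :
    MeasurePreserving Subtype.val unitMeasure (volume.restrict (Ioo 0 1)) :=
  measurePreserving_subtype_coe measurableSet_Ioo

instance isProbabilityMeasure_unitMeasure : IsProbabilityMeasure unitMeasure :=
  ⟨by simpa using measurePreserving_val_unitMeasure.measure_preimage nullMeasurableSet_univ⟩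

/-- The quantile function of a measure on the line, the generalized inverse of its distribution
function. -/
noncomputable def quantile (μ : Measure ℝ) (p : Ioo (0 : ℝ) 1) : ℝ :=
  sInf {x | p ≤ cdf μ x}

lemma quantile_le_iff (μ : Measure ℝ) (p : Ioo (0 : ℝ) 1) (x : ℝ) :
    quantile μ p ≤ x ↔ p ≤ cdf μ x := by
  have hne : {x | p ≤ cdf μ x}.Nonempty :=
    (((tendsto_cdf_atTop μ).eventually (eventually_gt_nhds p.2.2)).mono fun _ h => h.le).exists
  have hbdd : BddBelow {x | p ≤ cdf μ x} := by
    obtain ⟨y, hy⟩ := ((tendsto_cdf_atBot μ).eventually (eventually_lt_nhds p.2.1)).exists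
    refine ⟨y, fun x hx => ?_⟩
    by_contra! h
    exact (hx.trans (monotone_cdf μ h.le)).not_gt hy
  refine ⟨fun h => ?_, fun h => csInf_le hbdd h⟩
  refine ge_of_tendsto (((cdf μ).right_continuous x).mono Ioi_subset_Ici_self)
    (eventually_mem_nhdsWithin.mono fun y hy => ?_)
  obtain ⟨z, hz, hzy⟩ := exists_lt_of_csInf_lt hne (h.trans_lt hy)
  exact le_trans hz (monotone_cdf μ hzy.le)

lemma monotone_quantile (μ : Measure ℝ) : Monotone (quantile μ) := fun p q hpq =>
  (quantile_le_iff μ p _).2 (le_trans hpq ((quantile_le_iff μ q _).1 le_rfl))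

theorem measurePreserving_quantile (μ : Measure ℝ) [IsProbabilityMeasure μ] :
    MeasurePreserving (quantile μ) unitMeasure μ := by
  have hmeas := (monotone_quantile μ).measurable
  refine ⟨hmeas, ?_⟩
  have := Measure.isProbabilityMeasure_map (μ := unitMeasure) hmeas.aemeasurable
  refine Measure.ext_of_Iic _ _ fun x => ?_
  have hpre : quantile μ ⁻¹' Iic x = Subtype.val ⁻¹' Iic (cdf μ x) :=
    Set.ext fun p => quantile_le_iff μ p x
  rw [Measure.map_apply hmeas measurableSet_Iic, hpre,
    measurePreserving_val_unitMeasure.measure_preimage measurableSet_Iic.nullMeasurableSet,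
    restrict_Ioo_eq_restrict_Ioc, Measure.restrict_apply measurableSet_Iic, inter_comm,
    Ioc_inter_Iic, min_eq_right (cdf_le_one μ x), Real.volume_Ioc, sub_zero, ofReal_cdf]

end Quantile

lemma withDensity_ofReal_Ioc {u : ℝ → ℝ} {a b : ℝ} (hu : IntegrableOn u (Ioc a b)) (hu₀ : 0 ≤ u)
    (hab : a ≤ b) :
    (volume.withDensity fun x => ENNReal.ofReal (u x)) (Ioc a b)
      = ENNReal.ofReal (∫ x in a..b, u x) := by
  rw [withDensity_apply _ measurableSet_Ioc, intervalIntegral.integral_of_le hab,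
    ofReal_integral_eq_lintegral_ofReal hu (.of_forall hu₀)]

/-- A Lagrangian representation of the densities `m t`: a family of random variables `X t` with
laws `m t` dx, moving along integral curves of the velocity field `v`, and such that each `X t` is
monotone. -/
structure IsMonotoneLagrangian {Ω : Type*} [MeasurableSpace Ω] [Preorder Ω] (P : Measure Ω) (T : ℝ)
    (v m : ℝ → ℝ → ℝ) (X : ℝ → Ω → ℝ) : Prop where
  monotone : ∀ t ∈ Icc 0 T, Monotone (X t)
  measurePreserving : ∀ t ∈ Icc 0 T, MeasurePreserving (X t) P (densMeasure m t)
  isIntegralCurveOn : ∀ ω, IsIntegralCurveOn (X · ω) v (Icc 0 T)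

namespace IsTransportedDensity

variable {T : ℝ} {v m : ℝ → ℝ → ℝ} {t : ℝ}

lemma densMeasure_Ioc (hm : IsTransportedDensity T v m) (ht : t ∈ Icc 0 T) {a b : ℝ}
    (hab : a ≤ b) : densMeasure m t (Ioc a b) = ENNReal.ofReal (∫ x in a..b, m t x) :=
  withDensity_ofReal_Ioc ((hm.contDiff ht).continuous.integrableOn_Ioc) (hm.nonneg t ht) hab

lemma measurePreserving_flow (hm : IsTransportedDensity T v m) {Φ : ℝ → ℝ → ℝ} (hΦ₀ : Φ 0 = id)
    (hΦ : ∀ x, IsIntegralCurveOn (Φ · x) v (Icc 0 T)) (ht : t ∈ Icc 0 T)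
    (hmono : StrictMono (Φ t)) (hsurj : Function.Surjective (Φ t)) :
    MeasurePreserving (Φ t) (densMeasure m 0) (densMeasure m t) := by
  have h₀ : (0 : ℝ) ∈ Icc 0 T := left_mem_Icc.2 (ht.1.trans ht.2)
  refine ⟨hmono.monotone.measurable, Eq.symm (Measure.ext_of_Ioc' _ _ (fun a b hab => ?_) ?_)⟩
  · rw [hm.densMeasure_Ioc ht hab.le]
    exact ENNReal.ofReal_ne_top
  rw [hsurj.forall₂]
  intro a b hab
  have hpre : Φ t ⁻¹' Ioc (Φ t a) (Φ t b) = Ioc a b := by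
    ext x
    exact and_congr hmono.lt_iff_lt hmono.le_iff_le
  rw [Measure.map_apply hmono.monotone.measurable measurableSet_Ioc, hpre,
    hm.densMeasure_Ioc ht hab.le, hm.densMeasure_Ioc h₀ (hmono.lt_iff_lt.1 hab).le,
    hm.integral_integralCurves (hΦ a) (hΦ b) ht, hΦ₀, id, id]

lemma isProbabilityMeasure_densMeasure_zero (hm : IsTransportedDensity T v m) (hT : 0 ≤ T) :
    IsProbabilityMeasure (densMeasure m 0) := by
  have hint : Integrable (m 0) := .of_integral_ne_zero (by simp [hm.integral_zero])
  refine ⟨?_⟩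
  rw [densMeasure, withDensity_apply _ .univ, Measure.restrict_univ,
    ← ofReal_integral_eq_lintegral_ofReal hint (.of_forall (hm.nonneg 0 (left_mem_Icc.2 hT))),
    hm.integral_zero, ENNReal.ofReal_one]

theorem exists_isMonotoneLagrangian (hm : IsTransportedDensity T v m) (hT : 0 ≤ T) :
    ∃ X, IsMonotoneLagrangian unitMeasure T v m X := by
  obtain ⟨C, hC⟩ := hm.velocity_bounded
  obtain ⟨K, hK⟩ := hm.velocity_lipschitz
  obtain ⟨Φ, hΦ₀, hΦ, hbij⟩ := exists_orderPreserving_flow hT hK hm.velocity_continuousOn hC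
  have := hm.isProbabilityMeasure_densMeasure_zero hT
  exact ⟨fun t => Φ t ∘ quantile (densMeasure m 0),
    { monotone := fun t ht => (hbij t ht).1.monotone.comp (monotone_quantile _)
      measurePreserving := fun t ht =>
        (hm.measurePreserving_flow hΦ₀ hΦ ht (hbij t ht).1 (hbij t ht).2).comp
          (measurePreserving_quantile _)
      isIntegralCurveOn := fun p => hΦ _ }⟩

lemma isProbabilityMeasure_densMeasure (hm : IsTransportedDensity T v m) (ht : t ∈ Icc 0 T) :
    IsProbabilityMeasure (densMeasure m t) := by
  obtain ⟨X, hX⟩ := hm.exists_isMonotoneLagrangian (ht.1.trans ht.2)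
  have hXt := hX.measurePreserving t ht
  exact hXt.map_eq ▸ Measure.isProbabilityMeasure_map hXt.aemeasurable

lemma integrable (hm : IsTransportedDensity T v m) (ht : t ∈ Icc 0 T) : Integrable (m t) := by
  have := hm.isProbabilityMeasure_densMeasure ht
  have hmass := measure_ne_top (densMeasure m t) univ
  rwa [densMeasure, withDensity_apply _ .univ, Measure.restrict_univ,
    lintegral_ofReal_ne_top_iff_integrable (hm.contDiff ht).continuous.aestronglyMeasurable
      (.of_forall (hm.nonneg t ht))] at hmass

end IsTransportedDensity

section SquareIntegral

variable {Ω E : Type*} [MeasurableSpace Ω] {P : Measure Ω} [NormedAddCommGroup E] {a b C t : ℝ}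
  {Z Z' : ℝ → Ω → E}

section NormedSpace

variable [NormedSpace ℝ E]

lemma norm_le_add_mul_of_hasDerivWithinAt {Ω : Type*} {Z Z' : ℝ → Ω → E}
    (hderiv : ∀ ω, ∀ t ∈ Icc a b, HasDerivWithinAt (Z · ω) (Z' t ω) (Icc a b) t)
    (hC : ∀ t ∈ Icc a b, ∀ ω, ‖Z' t ω‖ ≤ C) (ht : t ∈ Icc a b) (ω : Ω) :
    ‖Z t ω‖ ≤ ‖Z a ω‖ + C * (b - a) := by
  have hC₀ : 0 ≤ C := (norm_nonneg _).trans (hC t ht ω)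
  have hincr := norm_image_sub_le_of_norm_deriv_le_segment' (hderiv ω)
    (fun s hs => hC s (Ico_subset_Icc_self hs) ω) t ht
  calc ‖Z t ω‖ ≤ ‖Z a ω‖ + ‖Z t ω - Z a ω‖ := norm_le_norm_add_norm_sub' _ _
    _ ≤ ‖Z a ω‖ + C * (b - a) := by
      gcongr
      exact hincr.trans (by gcongr; exact ht.2)

variable [IsFiniteMeasure P]

lemma memLp_of_hasDerivWithinAt_of_bounded {p : ℝ≥0∞} (hZ : MemLp (Z a) p P)
    (hmeas : AEStronglyMeasurable (Z t) P)
    (hderiv : ∀ ω, ∀ t ∈ Icc a b, HasDerivWithinAt (Z · ω) (Z' t ω) (Icc a b) t)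
    (hC : ∀ t ∈ Icc a b, ∀ ω, ‖Z' t ω‖ ≤ C) (ht : t ∈ Icc a b) : MemLp (Z t) p P :=
  (hZ.norm.add (memLp_const (C * (b - a)))).mono' hmeas
    (.of_forall (norm_le_add_mul_of_hasDerivWithinAt hderiv hC ht))

lemma continuousOn_integral_norm_sq (hZ : MemLp (Z a) 2 P)
    (hmeas : ∀ t ∈ Icc a b, AEStronglyMeasurable (Z t) P)
    (hderiv : ∀ ω, ∀ t ∈ Icc a b, HasDerivWithinAt (Z · ω) (Z' t ω) (Icc a b) t)
    (hC : ∀ t ∈ Icc a b, ∀ ω, ‖Z' t ω‖ ≤ C) :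
    ContinuousOn (fun t => ∫ ω, ‖Z t ω‖ ^ 2 ∂P) (Icc a b) := by
  refine continuousOn_of_dominated (fun t ht => (hmeas t ht).norm.pow 2)
    (fun t ht => .of_forall fun ω => ?_)
    (hZ.norm.add (memLp_const (C * (b - a)))).integrable_sq
    (.of_forall fun ω t ht => ((hderiv ω t ht).continuousWithinAt).norm.pow 2)
  rw [norm_pow, norm_norm]
  exact pow_le_pow_left₀ (norm_nonneg _) (norm_le_add_mul_of_hasDerivWithinAt hderiv hC ht ω) 2

end NormedSpace

variable [InnerProductSpace ℝ E] [IsFiniteMeasure P]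

lemma hasDerivAt_integral_norm_sq (hZ : MemLp (Z a) 2 P)
    (hmeas : ∀ t ∈ Icc a b, AEStronglyMeasurable (Z t) P)
    (hmeas' : AEStronglyMeasurable (Z' t) P)
    (hderiv : ∀ ω, ∀ t ∈ Icc a b, HasDerivWithinAt (Z · ω) (Z' t ω) (Icc a b) t)
    (hC : ∀ t ∈ Icc a b, ∀ ω, ‖Z' t ω‖ ≤ C) (ht : t ∈ Ioo a b) :
    HasDerivAt (fun t => ∫ ω, ‖Z t ω‖ ^ 2 ∂P) (∫ ω, 2 * inner ℝ (Z t ω) (Z' t ω) ∂P) t := by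
  have ht' := Ioo_subset_Icc_self ht
  have hbound := hZ.norm.add (memLp_const (C * (b - a)))
  have hmeas_sq {s : ℝ} (hs : s ∈ Icc a b) : AEStronglyMeasurable (fun ω => ‖Z s ω‖ ^ 2) P :=
    (hmeas s hs).norm.pow 2
  have hle {s : ℝ} (hs : s ∈ Icc a b) (ω : Ω) := norm_le_add_mul_of_hasDerivWithinAt hderiv hC hs ω
  refine (hasDerivAt_integral_of_dominated_loc_of_deriv_le (Ioo_mem_nhds ht.1 ht.2)
    (F := fun t ω => ‖Z t ω‖ ^ 2) (F' := fun t ω => 2 * inner ℝ (Z t ω) (Z' t ω))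
    (bound := fun ω => 2 * ((‖Z a ω‖ + C * (b - a)) * C))
    (mem_of_superset (Ioo_mem_nhds ht.1 ht.2) fun s hs => hmeas_sq (Ioo_subset_Icc_self hs))
    (memLp_of_hasDerivWithinAt_of_bounded hZ (hmeas t ht') hderiv hC ht').norm.integrable_sq
    (((hmeas t ht').inner hmeas').const_mul 2) (.of_forall fun ω s hs => ?_)
    (((hbound.integrable one_le_two).mul_const C).const_mul 2) (.of_forall fun ω s hs => ?_)).2
  · have hs' := Ioo_subset_Icc_self hs
    rw [norm_mul, Real.norm_two]
    gcongr
    exact (norm_inner_le_norm _ _).trans (mul_le_mul (hle hs' ω) (hC s hs' ω) (norm_nonneg _)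
      ((norm_nonneg _).trans (hle hs' ω)))
  · exact ((hderiv ω s (Ioo_subset_Icc_self hs)).hasDerivAt (Icc_mem_nhds hs.1 hs.2)).norm_sq

theorem antitoneOn_integral_norm_sq (hZ : MemLp (Z a) 2 P)
    (hmeas : ∀ t ∈ Icc a b, AEStronglyMeasurable (Z t) P)
    (hmeas' : ∀ t ∈ Ioo a b, AEStronglyMeasurable (Z' t) P)
    (hderiv : ∀ ω, ∀ t ∈ Icc a b, HasDerivWithinAt (Z · ω) (Z' t ω) (Icc a b) t)
    (hC : ∀ t ∈ Icc a b, ∀ ω, ‖Z' t ω‖ ≤ C)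
    (hinner : ∀ t ∈ Ioo a b, ∫ ω, inner ℝ (Z t ω) (Z' t ω) ∂P ≤ 0) :
    AntitoneOn (fun t => ∫ ω, ‖Z t ω‖ ^ 2 ∂P) (Icc a b) := by
  have hd (t) (ht : t ∈ interior (Icc a b)) :
      HasDerivAt (fun t => ∫ ω, ‖Z t ω‖ ^ 2 ∂P) (2 * ∫ ω, inner ℝ (Z t ω) (Z' t ω) ∂P) t := by
    rw [interior_Icc] at ht
    rw [← integral_const_mul]
    exact hasDerivAt_integral_norm_sq hZ hmeas (hmeas' t ht) hderiv hC ht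
  refine antitoneOn_of_deriv_nonpos (convex_Icc a b)
    (continuousOn_integral_norm_sq hZ hmeas hderiv hC)
    (fun t ht => (hd t ht).differentiableAt.differentiableWithinAt) fun t ht => ?_
  rw [(hd t ht).deriv]
  exact mul_nonpos_of_nonneg_of_nonpos zero_le_two (hinner t (interior_Icc.subset ht))

end SquareIntegral

section Wasserstein

variable {Ω : Type*} [MeasurableSpace Ω] {P : Measure Ω} {T : ℝ} {v w m n : ℝ → ℝ → ℝ}
  {X Y : ℝ → Ω → ℝ}

lemma IsMonotoneLagrangian.memLp_id [Preorder Ω] [IsFiniteMeasure P]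
    (hX : IsMonotoneLagrangian P T v m X) {C : ℝ} (hC : ∀ t ∈ Icc 0 T, ∀ x, |v t x| ≤ C)
    (hμ : MemLp id 2 (densMeasure m 0)) {t : ℝ} (ht : t ∈ Icc 0 T) :
    MemLp id 2 (densMeasure m t) := by
  have hXt := hX.measurePreserving t ht
  have hX₀ := hX.measurePreserving 0 (left_mem_Icc.2 (ht.1.trans ht.2))
  rw [← hXt.map_eq, memLp_map_measure_iff aestronglyMeasurable_id hXt.measurable.aemeasurable]
  exact memLp_of_hasDerivWithinAt_of_bounded (hμ.comp_measurePreserving hX₀)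
    hXt.measurable.aestronglyMeasurable hX.isIntegralCurveOn (fun s hs ω => hC s hs _) ht

theorem antitoneOn_W2_of_isMonotoneLagrangian [LinearOrder Ω] [IsProbabilityMeasure P]
    (hm : IsTransportedDensity T v m) (hn : IsTransportedDensity T w n)
    (hμ : MemLp id 2 (densMeasure m 0)) (hν : MemLp id 2 (densMeasure n 0))
    (hX : IsMonotoneLagrangian P T v m X) (hY : IsMonotoneLagrangian P T w n Y)
    (hdiss : ∀ t ∈ Ioo 0 T, ∫ ω, (X t ω - Y t ω) * (v t (X t ω) - w t (Y t ω)) ∂P ≤ 0) :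
    AntitoneOn (fun t => W2 (densMeasure m t) (densMeasure n t)) (Icc 0 T) := by
  obtain ⟨C, hC⟩ := hm.velocity_bounded
  obtain ⟨D, hD⟩ := hn.velocity_bounded
  have hXm (t) (ht : t ∈ Icc 0 T) := (hX.measurePreserving t ht).measurable
  have hYm (t) (ht : t ∈ Icc 0 T) := (hY.measurePreserving t ht).measurable
  have hW2 (t) (ht : t ∈ Icc 0 T) : W2 (densMeasure m t) (densMeasure n t)
      = √(∫ ω, ‖X t ω - Y t ω‖ ^ 2 ∂P) := by
    simpa only [Real.norm_eq_abs, sq_abs] using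
      W2_eq_of_monovary ((hX.monotone t ht).monovary (hY.monotone t ht))
        (hX.measurePreserving t ht) (hY.measurePreserving t ht) (hX.memLp_id hC hμ ht)
        (hY.memLp_id hD hν ht)
  intro s hs t ht hst
  have h₀ : (0 : ℝ) ∈ Icc 0 T := left_mem_Icc.2 (hs.1.trans hs.2)
  have hcost : AntitoneOn (fun t => ∫ ω, ‖X t ω - Y t ω‖ ^ 2 ∂P) (Icc 0 T) :=
    antitoneOn_integral_norm_sq (Z := fun t ω => X t ω - Y t ω)
      (Z' := fun t ω => v t (X t ω) - w t (Y t ω)) (C := C + D)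
      ((hμ.comp_measurePreserving (hX.measurePreserving 0 h₀)).sub
        (hν.comp_measurePreserving (hY.measurePreserving 0 h₀)))
      (fun t ht => ((hXm t ht).sub (hYm t ht)).aestronglyMeasurable)
      (fun t ht =>
        have ht' := Ioo_subset_Icc_self ht
        (((hm.measurable_velocity ht').comp (hXm t ht')).sub
          ((hn.measurable_velocity ht').comp (hYm t ht'))).aestronglyMeasurable)
      (fun ω t ht => (hX.isIntegralCurveOn ω t ht).sub (hY.isIntegralCurveOn ω t ht))
      (fun t ht ω => (norm_sub_le _ _).trans (add_le_add (hC t ht _) (hD t ht _)))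
      (fun t ht => by simpa [mul_comm] using hdiss t ht)
  simp only [hW2 s hs, hW2 t ht]
  exact Real.sqrt_le_sqrt (hcost hs ht hst)

end Wasserstein

section Dyson

variable {T : ℝ} {m n : ℝ → ℝ → ℝ}

/-- A `C¹` solution of the Dyson equation: a probability density transported by its own Hilbert
transform. A finite second moment is imposed at the initial time only, being propagated by the
boundedness of the velocity. -/
structure IsC1DysonSolution (T : ℝ) (m : ℝ → ℝ → ℝ) : Prop extends
    IsTransportedDensity T (fun t => hilbert (m t)) m where
  integrable_sq_zero : Integrable (fun x => x ^ 2 * m 0 x)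

namespace IsC1DysonSolution

lemma memLp_id_zero (hm : IsC1DysonSolution T m) (hT : 0 ≤ T) :
    MemLp id 2 (densMeasure m 0) := by
  have h₀ : (0 : ℝ) ∈ Icc 0 T := left_mem_Icc.2 hT
  rw [memLp_two_iff_integrable_sq aestronglyMeasurable_id, densMeasure,
    integrable_withDensity_iff (hm.contDiff h₀).continuous.measurable.ennreal_ofReal (by simp)]
  simpa only [id, ENNReal.toReal_ofReal (hm.nonneg 0 h₀ _)] using hm.integrable_sq_zero

lemma tendstoLocallyUniformly_truncField (hm : IsC1DysonSolution T m) {t : ℝ}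
    (ht : t ∈ Icc 0 T) :
    TendstoLocallyUniformly (truncField (densMeasure m t)) (hilbert (m t)) (𝓝[>] 0) := by
  rw [densMeasure, truncField_withDensity (hm.contDiff ht).continuous.measurable (hm.nonneg t ht)]
  exact tendstoLocallyUniformly_truncHilbert (hm.integrable ht) (hm.contDiff ht).locallyLipschitz

end IsC1DysonSolution

instance nullSingletonClass_densMeasure (m : ℝ → ℝ → ℝ) (t : ℝ) :
    NullSingletonClass (densMeasure m t) :=
  inferInstanceAs (NullSingletonClass (volume.withDensity _))

theorem integral_sub_mul_hilbert_sub_nonpos {Ω : Type*} [MeasurableSpace Ω] {P : Measure Ω}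
    [IsProbabilityMeasure P] {X Y : Ω → ℝ} {t : ℝ} (hm : IsC1DysonSolution T m)
    (hn : IsC1DysonSolution T n) (ht : t ∈ Icc 0 T) (h : Monovary X Y)
    (hX : MeasurePreserving X P (densMeasure m t)) (hY : MeasurePreserving Y P (densMeasure n t))
    (hZ : Integrable (fun ω => X ω - Y ω) P) :
    ∫ ω, (X ω - Y ω) * (hilbert (m t) (X ω) - hilbert (n t) (Y ω)) ∂P ≤ 0 := by
  obtain ⟨C, hC⟩ := hm.velocity_bounded
  obtain ⟨D, hD⟩ := hn.velocity_bounded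
  have := hm.isProbabilityMeasure_densMeasure ht
  have := hn.isProbabilityMeasure_densMeasure ht
  exact integral_sub_mul_sub_nonpos_of_monovary h hX hY hZ
    (hm.tendstoLocallyUniformly_truncField ht) (hn.tendstoLocallyUniformly_truncField ht)
    (hC t ht) (hD t ht)

theorem dyson_W2_contraction_general (hm : IsC1DysonSolution T m) (hn : IsC1DysonSolution T n) :
    AntitoneOn (fun t => W2 (densMeasure m t) (densMeasure n t)) (Icc 0 T) := by
  rcases lt_or_ge T 0 with hT | hT
  · exact (subsingleton_Icc_of_ge hT.le).antitoneOn _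
  obtain ⟨C, hC⟩ := hm.velocity_bounded
  obtain ⟨D, hD⟩ := hn.velocity_bounded
  obtain ⟨X, hX⟩ := hm.exists_isMonotoneLagrangian hT
  obtain ⟨Y, hY⟩ := hn.exists_isMonotoneLagrangian hT
  have hμ := hm.memLp_id_zero hT
  have hν := hn.memLp_id_zero hT
  refine antitoneOn_W2_of_isMonotoneLagrangian hm.toIsTransportedDensity hn.toIsTransportedDensity
    hμ hν hX hY fun t ht => ?_
  have ht' := Ioo_subset_Icc_self ht
  have hXt := hX.measurePreserving t ht'
  have hYt := hY.measurePreserving t ht'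
  have hZ := ((hX.memLp_id hC hμ ht').comp_measurePreserving hXt).sub
    ((hY.memLp_id hD hν ht').comp_measurePreserving hYt)
  exact integral_sub_mul_hilbert_sub_nonpos hm hn ht' ((hX.monotone t ht').monovary
    (hY.monotone t ht')) hXt hYt (hZ.integrable one_le_two)

lemma IsNiceDysonSolution.isC1DysonSolution (hT : 0 ≤ T) (hm : IsNiceDysonSolution T m) :
    IsC1DysonSolution T m := by
  obtain ⟨hsmooth, hnonneg, -, hmass, hsq, -, hpde, ⟨M, hM⟩, hcont, K, hK⟩ := hm
  exact
    { contDiffOn := hsmooth.of_le (by norm_cast)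
      nonneg := fun t ht x => hnonneg t x ht.1 ht.2
      integral_zero := hmass 0 le_rfl hT
      continuity_equation := fun t ht x => hpde t x ht.1 ht.2.le
      velocity_bounded := ⟨M, fun t ht x => hM t x ht.1 ht.2⟩
      velocity_continuousOn := fun x =>
        hcont.comp (f := fun t => (t, x)) (by fun_prop) fun t ht => ⟨ht, mem_univ x⟩
      velocity_lipschitz := ⟨K, fun t ht => hK t ht.1 ht.2⟩
      integrable_sq_zero := hsq 0 le_rfl hT }

end Dyson

/-- **Contraction of the Dyson flow in the `2`-Wasserstein distance:**
for two nice solutions `m, n` of the Dyson equation, `t ↦ W₂(µ_t, ν_t)` is non-increasing. -/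
theorem dyson_W2_contraction (T : ℝ) (hT : 0 < T) (m n : ℝ → ℝ → ℝ)
    (hm : IsNiceDysonSolution T m) (hn : IsNiceDysonSolution T n) :
    ∀ s t : ℝ, 0 ≤ s → s ≤ t → t ≤ T →
      W2 (densMeasure m t) (densMeasure n t) ≤ W2 (densMeasure m s) (densMeasure n s) :=
  fun _ _ hs hst ht => dyson_W2_contraction_general (hm.isC1DysonSolution hT.le)
    (hn.isC1DysonSolution hT.le) ⟨hs, hst.trans ht⟩ ⟨hs.trans hst, ht⟩ hst
end

section
/- Let m be a Borel probability measure on ℝ with finite second moment such that E(m) > −∞. Then there exists a sequence (mₙ)_{n≥0} of Borel probability measures on ℝ, each having a bounded C^∞ density and a finite second moment, such that mₙ converges narrowly to m and E(mₙ) → E(m) as n → ∞. -/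
open MeasureTheory Filter
open scoped ENNReal Topology

/-- The free entropy `E(mu) = (1/2)∫∫ log|x−y| dmu dmu`, as an extended real number:
one half of the difference between the lintegral of the positive part and the lintegral of
the negative part of `log|x−y|` with respect to the product measure. -/
noncomputable def freeEntropy (mu : Measure ℝ) : EReal :=
  ((1 / 2 : ℝ) : EReal) *
    (((∫⁻ p : ℝ × ℝ, ENNReal.ofReal (Real.log |p.1 - p.2|) ∂(mu.prod mu)) : EReal)
      - ((∫⁻ p : ℝ × ℝ, ENNReal.ofReal (-Real.log |p.1 - p.2|) ∂(mu.prod mu)) : EReal))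

open scoped NNReal

/-!
Mollification approximates `m` narrowly, and by Fatou's lemma the free entropy can only drop: the
positive part of the kernel is continuous with linear growth, while the negative part is lower
semicontinuous. To undo a drop, move a small fraction of the mass of the mollified measure onto a
measure with density at most `1 / r`. The energy of the latter against any probability measure is
at least `log r - 2`, so for `r` large the intermediate value theorem provides a fraction for which
the entropy is exactly `max (E m) (E mₑ)`, where `mₑ` is the mollified measure.
-/

/-! ### Upper semicontinuity of the free entropy -/

lemma ofReal_log_eq_ofReal_posLog (x : ℝ) :
    ENNReal.ofReal (Real.log x) = ENNReal.ofReal (Real.posLog x) := by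
  simp [Real.posLog_def, ENNReal.ofReal_max]

lemma continuous_ofReal_log_abs : Continuous fun t : ℝ => ENNReal.ofReal (Real.log |t|) := by
  simp_rw [ofReal_log_eq_ofReal_posLog]
  exact ENNReal.continuous_ofReal.comp (Real.continuous_posLog.comp continuous_abs)

-- At `0` this relies on the junk value `Real.log 0 = 0`, the least value of the function.
lemma lowerSemicontinuous_ofReal_neg_log_abs :
    LowerSemicontinuous fun t : ℝ => ENNReal.ofReal (-Real.log |t|) := by
  intro t
  rcases eq_or_ne t 0 with rfl | ht
  · intro y hy
    simp at hy
  · have : ContinuousAt (fun t : ℝ => ENNReal.ofReal (-Real.log |t|)) t :=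
      ENNReal.continuous_ofReal.continuousAt.comp
        (continuous_abs.continuousAt.log (abs_ne_zero.mpr ht)).neg
    exact this.lowerSemicontinuousAt

lemma log_abs_sub_le (x y : ℝ) : Real.log |x - y| ≤ |x| + |y| :=
  (Real.log_le_self (abs_nonneg _)).trans (abs_sub _ _)

section Fatou

variable {Ω ι : Type*} [MeasurableSpace Ω] {P : Measure Ω} {l : Filter ι}

lemma freeEntropy_map [SFinite P] {X : Ω → ℝ} (hX : Measurable X) :
    freeEntropy (P.map X) = ((1 / 2 : ℝ) : EReal) *
      (((∫⁻ ω, ENNReal.ofReal (Real.log |X ω.1 - X ω.2|) ∂(P.prod P)) : EReal)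
        - ((∫⁻ ω, ENNReal.ofReal (-Real.log |X ω.1 - X ω.2|) ∂(P.prod P)) : EReal)) := by
  rw [freeEntropy, Measure.map_prod_map _ _ hX hX, lintegral_map (by fun_prop) (by fun_prop),
    lintegral_map (by fun_prop) (by fun_prop)]
  rfl

lemma lintegral_comp_le_liminf_of_lowerSemicontinuous [l.IsCountablyGenerated] {E : Type*}
    [TopologicalSpace E] [MeasurableSpace E] [OpensMeasurableSpace E] {k : E → ℝ≥0∞}
    (hk : LowerSemicontinuous k) {X : ι → Ω → E} {Y : Ω → E} (hX : ∀ i, Measurable (X i))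
    (hlim : ∀ᵐ ω ∂P, Tendsto (fun i => X i ω) l (𝓝 (Y ω))) :
    ∫⁻ ω, k (Y ω) ∂P ≤ liminf (fun i => ∫⁻ ω, k (X i ω) ∂P) l :=
  calc ∫⁻ ω, k (Y ω) ∂P
      ≤ ∫⁻ ω, liminf (fun i => k (X i ω)) l ∂P := by
        refine lintegral_mono_ae (hlim.mono fun ω hω => ?_)
        exact (hk.le_liminf (Y ω)).trans hω.liminf_le_liminf_comp
    _ ≤ liminf (fun i => ∫⁻ ω, k (X i ω) ∂P) l :=
        lintegral_liminf_le fun i => hk.measurable.comp (hX i)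

lemma limsup_coe_sub_coe_le [NeBot l] {p n : ι → ℝ≥0∞} {p₀ n₀ : ℝ≥0∞}
    (hp : Tendsto p l (𝓝 p₀)) (hp₀ : p₀ ≠ ∞) (hn : n₀ ≤ liminf n l) :
    limsup (fun i => (p i : EReal) - n i) l ≤ p₀ - n₀ := by
  have hp_limsup : limsup (fun i => (p i : EReal)) l = p₀ :=
    (EReal.tendsto_coe_ennreal.mpr hp).limsup_eq
  have hn_limsup : limsup (-fun i => (n i : EReal)) l ≤ -n₀ := by
    rw [EReal.limsup_neg, EReal.neg_le_neg_iff]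
    exact (EReal.coe_ennreal_le_coe_ennreal_iff.mpr hn).trans_eq <|
      Monotone.map_liminf_of_continuousAt (f := ((↑) : ℝ≥0∞ → EReal))
        (fun _ _ => EReal.coe_ennreal_le_coe_ennreal_iff.mpr) n
        continuous_coe_ennreal_ereal.continuousAt
  refine (EReal.limsup_add_le ?_ ?_).trans (add_le_add hp_limsup.le hn_limsup)
  · simp [hp_limsup]
  · simp [hp_limsup, hp₀]

lemma ae_tendsto_fst_sub_snd {X : ι → Ω → ℝ} {Y : Ω → ℝ}
    (hlim : ∀ᵐ ω ∂P, Tendsto (fun i => X i ω) l (𝓝 (Y ω))) :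
    ∀ᵐ ω ∂(P.prod P), Tendsto (fun i => X i ω.1 - X i ω.2) l (𝓝 (Y ω.1 - Y ω.2)) := by
  filter_upwards [Measure.quasiMeasurePreserving_fst.ae hlim,
    Measure.quasiMeasurePreserving_snd.ae hlim] with ω h₁ h₂ using h₁.sub h₂

section Dominated

variable [l.IsCountablyGenerated] [IsFiniteMeasure P] {X : ι → Ω → ℝ} {Y b : Ω → ℝ}

lemma tendsto_lintegral_ofReal_log_abs_sub [NeBot l] (hX : ∀ i, Measurable (X i))
    (hb : Integrable b P) (hXb : ∀ᶠ i in l, ∀ᵐ ω ∂P, |X i ω| ≤ b ω)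
    (hlim : ∀ᵐ ω ∂P, Tendsto (fun i => X i ω) l (𝓝 (Y ω))) :
    Tendsto (fun i => ∫⁻ ω, ENNReal.ofReal (Real.log |X i ω.1 - X i ω.2|) ∂(P.prod P)) l
        (𝓝 (∫⁻ ω, ENNReal.ofReal (Real.log |Y ω.1 - Y ω.2|) ∂(P.prod P))) ∧
      ∫⁻ ω, ENNReal.ofReal (Real.log |Y ω.1 - Y ω.2|) ∂(P.prod P) ≠ ∞ := by
  have hb_prod : Integrable (fun ω : Ω × Ω => b ω.1 + b ω.2) (P.prod P) :=
    (hb.comp_fst P).add (hb.comp_snd P)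
  have hle : ∀ᶠ i in l, ∀ᵐ ω ∂(P.prod P),
      ENNReal.ofReal (Real.log |X i ω.1 - X i ω.2|) ≤ ENNReal.ofReal (b ω.1 + b ω.2) := by
    filter_upwards [hXb] with i hi
    filter_upwards [Measure.quasiMeasurePreserving_fst.ae hi,
      Measure.quasiMeasurePreserving_snd.ae hi] with ω h₁ h₂
    exact ENNReal.ofReal_le_ofReal ((log_abs_sub_le _ _).trans (add_le_add h₁ h₂))
  have htendsto := tendsto_lintegral_filter_of_dominated_convergence _
    (.of_forall fun i => by fun_prop) hle hb_prod.lintegral_lt_top.ne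
    ((ae_tendsto_fst_sub_snd hlim).mono fun ω hω =>
      (continuous_ofReal_log_abs.tendsto (Y ω.1 - Y ω.2)).comp hω)
  have hbound := le_of_tendsto htendsto (hle.mono fun i hi => lintegral_mono_ae hi)
  exact ⟨htendsto, (hbound.trans_lt hb_prod.lintegral_lt_top).ne⟩

theorem limsup_freeEntropy_map_le [NeBot l] (hX : ∀ i, Measurable (X i)) (hY : Measurable Y)
    (hb : Integrable b P) (hXb : ∀ᶠ i in l, ∀ᵐ ω ∂P, |X i ω| ≤ b ω)
    (hlim : ∀ᵐ ω ∂P, Tendsto (fun i => X i ω) l (𝓝 (Y ω))) :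
    limsup (fun i => freeEntropy (P.map (X i))) l ≤ freeEntropy (P.map Y) := by
  obtain ⟨hpos, hpos_ne_top⟩ := tendsto_lintegral_ofReal_log_abs_sub hX hb hXb hlim
  have hneg : ∫⁻ ω, ENNReal.ofReal (-Real.log |Y ω.1 - Y ω.2|) ∂(P.prod P) ≤
      liminf (fun i => ∫⁻ ω, ENNReal.ofReal (-Real.log |X i ω.1 - X i ω.2|) ∂(P.prod P)) l :=
    lintegral_comp_le_liminf_of_lowerSemicontinuous lowerSemicontinuous_ofReal_neg_log_abs
      (fun i => by fun_prop) (ae_tendsto_fst_sub_snd hlim)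
  simp only [freeEntropy_map (hX _), freeEntropy_map hY]
  rw [EReal.limsup_const_mul_of_nonneg_of_ne_top (EReal.coe_nonneg.mpr (by norm_num))
    (EReal.coe_ne_top _)]
  exact mul_le_mul_of_nonneg_left (limsup_coe_sub_coe_le hpos hpos_ne_top hneg)
    (EReal.coe_nonneg.mpr (by norm_num))

end Dominated

end Fatou

lemma freeEntropy_lt_top {μ : Measure ℝ} [IsFiniteMeasure μ] (hμ : Integrable id μ) :
    freeEntropy μ < ⊤ := by
  have hpos : ∫⁻ p : ℝ × ℝ, ENNReal.ofReal (Real.log |p.1 - p.2|) ∂(μ.prod μ) ≠ ∞ :=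
    ((lintegral_mono fun p : ℝ × ℝ => ENNReal.ofReal_le_ofReal (log_abs_sub_le p.1 p.2)).trans_lt
      ((hμ.abs.comp_fst μ).add (hμ.abs.comp_snd μ)).lintegral_lt_top).ne
  calc freeEntropy μ
      ≤ ((1 / 2 : ℝ) : EReal) *
          (∫⁻ p : ℝ × ℝ, ENNReal.ofReal (Real.log |p.1 - p.2|) ∂(μ.prod μ) : ℝ≥0∞) :=
        mul_le_mul_of_nonneg_left
          ((EReal.sub_le_sub le_rfl (EReal.coe_ennreal_nonneg _)).trans_eq (sub_zero _))
          (EReal.coe_nonneg.mpr (by norm_num))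
    _ < ⊤ := by
        rw [← EReal.coe_ennreal_toReal hpos, ← EReal.coe_mul]
        exact EReal.coe_lt_top _

/-! ### Logarithmic energy -/

section LogEnergy

/-- The mutual logarithmic energy `∬ log |x - y| dμ(x) dν(y)`. It is the symmetric bilinear form
behind the free entropy, without the factor `1 / 2`, and is meaningful only when the kernel is
integrable. -/
noncomputable def logEnergy (μ ν : Measure ℝ) : ℝ :=
  ∫ p : ℝ × ℝ, Real.log |p.1 - p.2| ∂(μ.prod ν)

lemma freeEntropy_eq_logEnergy {μ : Measure ℝ}
    (h : Integrable (fun p : ℝ × ℝ => Real.log |p.1 - p.2|) (μ.prod μ)) :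
    freeEntropy μ = ((1 / 2 * logEnergy μ μ : ℝ) : EReal) := by
  have hpos := h.lintegral_lt_top.ne
  have hneg : ∫⁻ p : ℝ × ℝ, ENNReal.ofReal (-Real.log |p.1 - p.2|) ∂(μ.prod μ) ≠ ∞ :=
    h.neg.lintegral_lt_top.ne
  rw [freeEntropy, logEnergy, integral_eq_lintegral_pos_part_sub_lintegral_neg_part h,
    EReal.coe_mul, EReal.coe_sub, EReal.coe_ennreal_toReal hpos, EReal.coe_ennreal_toReal hneg]

lemma lintegral_ofReal_log_sub_log_abs {r : ℝ} (hr : 0 < r) :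
    ∫⁻ s : ℝ, ENNReal.ofReal (Real.log r - Real.log |s|) = ENNReal.ofReal (2 * r) := by
  have hint : IntervalIntegrable (fun s => Real.log r - Real.log s) volume (-r) r :=
    intervalIntegrable_const.sub intervalIntegral.intervalIntegrable_log'
  have hval : ∫ s in (-r)..r, (Real.log r - Real.log s) = 2 * r := by
    rw [intervalIntegral.integral_sub intervalIntegrable_const
      intervalIntegral.intervalIntegrable_log', integral_log]
    simp
    ring
  have hnonneg : ∀ᵐ s ∂volume.restrict (Set.Ioc (-r) r), 0 ≤ Real.log r - Real.log s := by
    filter_upwards [ae_restrict_mem measurableSet_Ioc,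
      ae_restrict_of_ae (Measure.ae_ne volume (0 : ℝ))] with s hs hs₀
    rw [← Real.log_abs s, sub_nonneg]
    exact Real.log_le_log (abs_pos.mpr hs₀) (abs_le.mpr ⟨hs.1.le, hs.2⟩)
  have hsupport : Function.support (fun s : ℝ => ENNReal.ofReal (Real.log r - Real.log |s|)) ⊆
      Set.Ioc (-r) r := by
    intro s hs
    have hlt : Real.log |s| < Real.log r := by simpa using hs
    have habs : |s| < r := by
      rcases eq_or_ne s 0 with rfl | hs₀
      · simpa using hr
      · exact (Real.log_lt_log_iff (abs_pos.mpr hs₀) hr).mp hlt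
    exact ⟨(abs_lt.mp habs).1, (abs_lt.mp habs).2.le⟩
  rw [← setLIntegral_eq_of_support_subset hsupport]
  simp_rw [Real.log_abs]
  rw [← ofReal_integral_eq_lintegral_ofReal hint.1 hnonneg, ← hval,
    intervalIntegral.integral_of_le (by linarith)]

variable {μ ν : Measure ℝ} {M : ℝ≥0}

lemma lintegral_ofReal_log_sub_log_abs_sub_le [SFinite μ] [SFinite ν] (hμ : μ ≤ M • volume)
    {r : ℝ} (hr : 0 < r) :
    ∫⁻ p : ℝ × ℝ, ENNReal.ofReal (Real.log r - Real.log |p.1 - p.2|) ∂(μ.prod ν) ≤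
      M * ENNReal.ofReal (2 * r) * ν Set.univ := by
  rw [lintegral_prod_symm _ (by fun_prop), ← lintegral_const]
  refine lintegral_mono fun y => ?_
  calc ∫⁻ x, ENNReal.ofReal (Real.log r - Real.log |x - y|) ∂μ
      ≤ ∫⁻ x, ENNReal.ofReal (Real.log r - Real.log |x - y|) ∂(M • volume) :=
        lintegral_mono' hμ le_rfl
    _ = M * ENNReal.ofReal (2 * r) := by
        rw [lintegral_smul_measure, lintegral_sub_right_eq_self
          (fun s => ENNReal.ofReal (Real.log r - Real.log |s|)) y,
          lintegral_ofReal_log_sub_log_abs hr, ENNReal.smul_def, smul_eq_mul]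

lemma integrable_log_abs_sub [IsFiniteMeasure μ] [IsFiniteMeasure ν] (hμM : μ ≤ M • volume)
    (hμ : Integrable id μ) (hν : Integrable id ν) :
    Integrable (fun p : ℝ × ℝ => Real.log |p.1 - p.2|) (μ.prod ν) := by
  have hneg : ∫⁻ p : ℝ × ℝ, ENNReal.ofReal (-Real.log |p.1 - p.2|) ∂(μ.prod ν) ≠ ∞ := by
    refine ne_top_of_le_ne_top ?_
      (by simpa using lintegral_ofReal_log_sub_log_abs_sub_le (ν := ν) hμM one_pos)
    finiteness
  have hneg_int : Integrable
      (fun p : ℝ × ℝ => (ENNReal.ofReal (-Real.log |p.1 - p.2|)).toReal) (μ.prod ν) :=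
    integrable_toReal_of_lintegral_ne_top (by fun_prop) hneg
  refine (((hμ.abs.comp_fst ν).add (hν.abs.comp_snd μ)).add hneg_int).mono'
    (Measurable.aestronglyMeasurable (by fun_prop))
    (ae_of_all _ fun p => ?_)
  simp only [Pi.add_apply, id, Real.norm_eq_abs, ENNReal.toReal_ofReal']
  refine abs_le'.mpr ⟨?_, ?_⟩
  · exact le_add_of_le_of_nonneg (log_abs_sub_le p.1 p.2) (le_max_right _ _)
  · exact le_add_of_nonneg_of_le (by positivity) (le_max_left _ _)

lemma log_sub_le_logEnergy [IsProbabilityMeasure μ] [IsProbabilityMeasure ν]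
    (hμM : μ ≤ M • volume) (hμ : Integrable id μ) (hν : Integrable id ν) {r : ℝ} (hr : 0 < r) :
    Real.log r - M * (2 * r) ≤ logEnergy μ ν := by
  have hint := integrable_log_abs_sub hμM hμ hν
  have hsub : Integrable (fun p : ℝ × ℝ => Real.log r - Real.log |p.1 - p.2|) (μ.prod ν) :=
    (integrable_const _).sub hint
  have hle : ∫ p : ℝ × ℝ, (Real.log r - Real.log |p.1 - p.2|) ∂(μ.prod ν) ≤
      M * (2 * r) := by
    rw [integral_eq_lintegral_pos_part_sub_lintegral_neg_part hsub]
    refine (sub_le_self _ ENNReal.toReal_nonneg).trans (ENNReal.toReal_le_of_le_ofReal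
      (by positivity) ((lintegral_ofReal_log_sub_log_abs_sub_le hμM hr).trans_eq ?_))
    rw [measure_univ, mul_one, ENNReal.ofReal_mul M.coe_nonneg, ENNReal.ofReal_coe_nnreal]
  rw [integral_sub (integrable_const _) hint, integral_const, probReal_univ, one_smul] at hle
  exact sub_le_comm.mp hle

lemma logEnergy_comm (μ ν : Measure ℝ) [SFinite μ] [SFinite ν] : logEnergy μ ν = logEnergy ν μ := by
  rw [logEnergy, ← integral_prod_swap]
  simp_rw [Prod.fst_swap, Prod.snd_swap, abs_sub_comm]
  rfl

lemma logEnergy_smul_add_smul [IsFiniteMeasure μ] [IsFiniteMeasure ν] (a b : ℝ≥0)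
    (hμμ : Integrable (fun p : ℝ × ℝ => Real.log |p.1 - p.2|) (μ.prod μ))
    (hμν : Integrable (fun p : ℝ × ℝ => Real.log |p.1 - p.2|) (μ.prod ν))
    (hνν : Integrable (fun p : ℝ × ℝ => Real.log |p.1 - p.2|) (ν.prod ν)) :
    logEnergy (a • μ + b • ν) (a • μ + b • ν) =
      a ^ 2 * logEnergy μ μ + 2 * a * b * logEnergy μ ν + b ^ 2 * logEnergy ν ν := by
  have hνμ : Integrable (fun p : ℝ × ℝ => Real.log |p.1 - p.2|) (ν.prod μ) := by
    simpa only [Function.comp_def, Prod.fst_swap, Prod.snd_swap, abs_sub_comm] using hμν.swap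
  have hμ_int := (hμμ.smul_measure_nnreal (c := a)).add_measure (hνμ.smul_measure_nnreal (c := b))
  have hν_int := (hμν.smul_measure_nnreal (c := a)).add_measure (hνν.smul_measure_nnreal (c := b))
  have hexpand : logEnergy (a • μ + b • ν) (a • μ + b • ν) =
      a * (a * logEnergy μ μ + b * logEnergy ν μ) +
        b * (a * logEnergy μ ν + b * logEnergy ν ν) := by
    simp only [logEnergy, Measure.prod_add, Measure.add_prod, Measure.prod_smul_left,
      Measure.prod_smul_right]
    rw [integral_add_measure hμ_int.smul_measure_nnreal hν_int.smul_measure_nnreal]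
    simp only [integral_smul_nnreal_measure]
    rw [integral_add_measure hμμ.smul_measure_nnreal hνμ.smul_measure_nnreal,
      integral_add_measure hμν.smul_measure_nnreal hνν.smul_measure_nnreal]
    simp only [integral_smul_nnreal_measure, NNReal.smul_def, smul_eq_mul]
  rw [hexpand, logEnergy_comm ν μ]
  ring

end LogEnergy

/-! ### Smooth densities and mollification -/

/-- `μ` has a nonnegative smooth density bounded by `M` with respect to Lebesgue measure. -/
def HasSmoothDensityLE (μ : Measure ℝ) (M : ℝ≥0) : Prop :=
  ∃ f : ℝ → ℝ, ContDiff ℝ (⊤ : ℕ∞) f ∧ (∀ x, 0 ≤ f x) ∧ (∀ x, f x ≤ M) ∧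
    μ = volume.withDensity fun x => ENNReal.ofReal (f x)

namespace HasSmoothDensityLE

variable {μ ν : Measure ℝ} {M N : ℝ≥0}

lemma le_smul_volume (hμ : HasSmoothDensityLE μ M) : μ ≤ M • volume := by
  obtain ⟨f, -, -, hfM, rfl⟩ := hμ
  calc volume.withDensity (fun x => ENNReal.ofReal (f x))
      ≤ volume.withDensity fun _ => (M : ℝ≥0∞) :=
        withDensity_mono (ae_of_all _ fun x => ENNReal.ofReal_le_of_le_toReal (hfM x))
    _ = M • volume := withDensity_const _

lemma add (hμ : HasSmoothDensityLE μ M) (hν : HasSmoothDensityLE ν N) :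
    HasSmoothDensityLE (μ + ν) (M + N) := by
  obtain ⟨f, hf, hf₀, hfM, rfl⟩ := hμ
  obtain ⟨g, hg, hg₀, hgN, rfl⟩ := hν
  have := hf.continuous
  refine ⟨fun x => f x + g x, hf.add hg, fun x => add_nonneg (hf₀ x) (hg₀ x),
    fun x => add_le_add (hfM x) (hgN x), ?_⟩
  simp_rw [ENNReal.ofReal_add (hf₀ _) (hg₀ _)]
  exact (withDensity_add_left (by fun_prop) _).symm

lemma smul (hμ : HasSmoothDensityLE μ M) (c : ℝ≥0) : HasSmoothDensityLE (c • μ) (c * M) := by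
  obtain ⟨f, hf, hf₀, hfM, rfl⟩ := hμ
  have := hf.continuous
  refine ⟨fun x => c * f x, contDiff_const.mul hf, fun x => mul_nonneg c.coe_nonneg (hf₀ x),
    fun x => mul_le_mul_of_nonneg_left (hfM x) c.coe_nonneg, ?_⟩
  simp_rw [ENNReal.ofReal_mul c.coe_nonneg, ENNReal.ofReal_coe_nnreal]
  exact (withDensity_smul _ (by fun_prop)).symm

end HasSmoothDensityLE

lemma conv_withDensity {G : Type*} [AddCommGroup G] [MeasurableSpace G] [MeasurableAdd₂ G]
    [MeasurableNeg G] {ρ : Measure G} [ρ.IsAddLeftInvariant] [SFinite ρ] (m : Measure G)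
    [SFinite m] {f : G → ℝ≥0∞} (hf : Measurable f) :
    m ∗ ρ.withDensity f = ρ.withDensity fun z => ∫⁻ x, f (z - x) ∂m := by
  refine Measure.ext_of_lintegral _ fun g hg => ?_
  have hmeas : Measurable fun z => ∫⁻ x, f (z - x) ∂m :=
    Measurable.lintegral_prod_right' (f := fun p : G × G => f (p.1 - p.2)) (by fun_prop)
  calc ∫⁻ z, g z ∂(m ∗ ρ.withDensity f)
      = ∫⁻ x, ∫⁻ y, f y * g (x + y) ∂ρ ∂m := by
        rw [Measure.lintegral_conv hg]
        refine lintegral_congr fun x => ?_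
        rw [lintegral_withDensity_eq_lintegral_mul _ hf (by fun_prop)]
        rfl
    _ = ∫⁻ x, ∫⁻ z, f (z - x) * g z ∂ρ ∂m := by
        refine lintegral_congr fun x => ?_
        rw [← lintegral_add_left_eq_self (fun z => f (z - x) * g z) x]
        simp
    _ = ∫⁻ z, ∫⁻ x, f (z - x) * g z ∂m ∂ρ := lintegral_lintegral_swap (by fun_prop)
    _ = ∫⁻ z, g z ∂(ρ.withDensity fun z => ∫⁻ x, f (z - x) ∂m) := by
        rw [lintegral_withDensity_eq_lintegral_mul _ hmeas hg]
        refine lintegral_congr fun z => ?_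
        rw [lintegral_mul_const _ (by fun_prop)]
        rfl

lemma map_mul_left_withDensity {f : ℝ → ℝ≥0∞} (hf : Measurable f) {c : ℝ} (hc : c ≠ 0) :
    (volume.withDensity f).map (c * ·) =
      volume.withDensity fun x => ENNReal.ofReal |c⁻¹| * f (c⁻¹ * x) := by
  refine Measure.ext_of_lintegral _ fun g hg => ?_
  calc ∫⁻ y, g y ∂((volume.withDensity f).map (c * ·))
      = ∫⁻ x, f x * g (c * x) := by
        rw [lintegral_map hg (by fun_prop), lintegral_withDensity_eq_lintegral_mul _ hf
          (by fun_prop)]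
        rfl
    _ = ∫⁻ y, f (c⁻¹ * y) * g y ∂(volume.map (c * ·)) := by
        rw [lintegral_map (by fun_prop) (by fun_prop)]
        simp_rw [inv_mul_cancel_left₀ hc]
    _ = ∫⁻ y, g y ∂(volume.withDensity fun x => ENNReal.ofReal |c⁻¹| * f (c⁻¹ * x)) := by
        rw [Real.map_volume_mul_left hc, lintegral_smul_measure, smul_eq_mul,
          lintegral_withDensity_eq_lintegral_mul _ (by fun_prop) hg,
          ← lintegral_const_mul _ (by fun_prop)]
        simp_rw [Pi.mul_apply, mul_assoc]

lemma hasSmoothDensityLE_conv_withDensity (m : Measure ℝ) [IsProbabilityMeasure m] {f : ℝ → ℝ}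
    {M : ℝ≥0} (hf : ContDiff ℝ (⊤ : ℕ∞) f) (hf_supp : HasCompactSupport f) (hf₀ : ∀ x, 0 ≤ f x)
    (hfM : ∀ x, f x ≤ M) :
    HasSmoothDensityLE (m ∗ volume.withDensity fun x => ENNReal.ofReal (f x)) M := by
  have hf_cont := hf.continuous
  have hint (z : ℝ) : Integrable (fun x => f (z - x)) m :=
    .of_bound (by fun_prop) M
      (ae_of_all _ fun x => (Real.norm_of_nonneg (hf₀ _)).trans_le (hfM _))
  refine ⟨fun z => ∫ x, f (z - x) ∂m, ?_, fun z => integral_nonneg fun x => hf₀ _, fun z => ?_, ?_⟩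
  · convert hf_supp.contDiff_convolution_right (ContinuousLinearMap.mul ℝ ℝ) (μ := m)
      (f := fun _ => (1 : ℝ)) (locallyIntegrable_const 1) hf using 2 with z
    simp [convolution]
  · simpa using integral_mono (hint z) (integrable_const (M : ℝ)) fun x => hfM (z - x)
  · rw [conv_withDensity m (by fun_prop)]
    simp_rw [ofReal_integral_eq_lintegral_ofReal (hint _) (ae_of_all _ fun _ => hf₀ _)]

section Convolution

variable {m ρ : Measure ℝ}

lemma conv_map_mul_left [SFinite m] [SFinite ρ] (ε : ℝ) :
    m ∗ ρ.map (ε * ·) = (m.prod ρ).map fun p => p.1 + ε * p.2 := by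
  rw [Measure.conv, ← Measure.map_id (μ := m),
    Measure.map_prod_map _ _ measurable_id (by fun_prop),
    Measure.map_map (by fun_prop) (by fun_prop), Measure.map_id]
  rfl

variable [IsFiniteMeasure m] [IsProbabilityMeasure ρ]

theorem tendsto_integral_conv_map_mul_left (g : BoundedContinuousFunction ℝ ℝ) :
    Tendsto (fun ε => ∫ x, g x ∂(m ∗ ρ.map (ε * ·))) (𝓝 0) (𝓝 (∫ x, g x ∂m)) := by
  have hlim : Tendsto (fun ε : ℝ => ∫ p : ℝ × ℝ, g (p.1 + ε * p.2) ∂(m.prod ρ)) (𝓝 0)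
      (𝓝 (∫ p : ℝ × ℝ, g p.1 ∂(m.prod ρ))) := by
    refine tendsto_integral_filter_of_dominated_convergence (fun _ => ‖g‖)
      (.of_forall fun ε => by fun_prop)
      (.of_forall fun ε => ae_of_all _ fun p => g.norm_coe_le_norm _) (integrable_const _)
      (ae_of_all _ fun p => ?_)
    have : Continuous fun ε : ℝ => g (p.1 + ε * p.2) := by fun_prop
    simpa using this.tendsto 0
  rw [integral_fun_fst (f := g), probReal_univ, one_smul] at hlim
  have hmap (ε : ℝ) :
      ∫ x, g x ∂(m ∗ ρ.map (ε * ·)) = ∫ p : ℝ × ℝ, g (p.1 + ε * p.2) ∂(m.prod ρ) := by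
    rw [conv_map_mul_left, integral_map (by fun_prop) (by fun_prop)]
  simpa only [hmap] using hlim

theorem limsup_freeEntropy_conv_map_mul_left_le (hm : Integrable id m) (hρ : Integrable id ρ) :
    limsup (fun ε => freeEntropy (m ∗ ρ.map (ε * ·))) (𝓝 0) ≤ freeEntropy m := by
  have hbound : ∀ᶠ ε : ℝ in 𝓝 0, ∀ᵐ p ∂(m.prod ρ), |p.1 + ε * p.2| ≤ |p.1| + |p.2| := by
    filter_upwards [Metric.closedBall_mem_nhds (0 : ℝ) one_pos] with ε hε
    refine ae_of_all _ fun p => (abs_add_le _ _).trans ?_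
    rw [abs_mul]
    gcongr
    exact mul_le_of_le_one_left (abs_nonneg _) (by simpa using hε)
  have hlim (p : ℝ × ℝ) : Tendsto (fun ε : ℝ => p.1 + ε * p.2) (𝓝 0) (𝓝 p.1) := by
    have : Continuous fun ε : ℝ => p.1 + ε * p.2 := by fun_prop
    simpa using this.tendsto 0
  have := limsup_freeEntropy_map_le (fun ε => by fun_prop) measurable_fst
    ((hm.abs.comp_fst ρ).add (hρ.abs.comp_snd m)) hbound (ae_of_all _ hlim)
  simpa [conv_map_mul_left, Measure.map_fst_prod] using this

lemma memLp_id_conv_map_mul_left {p : ℝ≥0∞} (hm : MemLp id p m) (hρ : MemLp id p ρ) (ε : ℝ) :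
    MemLp id p (m ∗ ρ.map (ε * ·)) := by
  rw [conv_map_mul_left, memLp_map_measure_iff (by fun_prop) (by fun_prop)]
  exact (hm.comp_fst ρ).add ((hρ.comp_snd m).const_mul ε)

end Convolution

/-- A smooth probability density on `ℝ` supported in `[-1, 1]`. The radii are chosen so that it is
bounded by `1`. -/
noncomputable def bumpDensity : ℝ → ℝ :=
  (⟨1 / 2, 1, by norm_num, by norm_num⟩ : ContDiffBump (0 : ℝ)).normed volume

lemma contDiff_bumpDensity : ContDiff ℝ (⊤ : ℕ∞) bumpDensity := ContDiffBump.contDiff_normed _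

lemma hasCompactSupport_bumpDensity : HasCompactSupport bumpDensity :=
  ContDiffBump.hasCompactSupport_normed _

lemma bumpDensity_nonneg (x : ℝ) : 0 ≤ bumpDensity x := ContDiffBump.nonneg_normed _ _

lemma bumpDensity_le_one (x : ℝ) : bumpDensity x ≤ 1 := by
  refine (ContDiffBump.normed_le_div_measure_closedBall_rIn _ _ x).trans_eq ?_
  simp [measureReal_def, Real.volume_closedBall]

/-- The probability measure with density `bumpDensity`. -/
noncomputable def bumpMeasure : Measure ℝ :=
  volume.withDensity fun x => ENNReal.ofReal (bumpDensity x)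

instance : IsProbabilityMeasure bumpMeasure := by
  refine ⟨?_⟩
  have hint : Integrable bumpDensity :=
    contDiff_bumpDensity.continuous.integrable_of_hasCompactSupport hasCompactSupport_bumpDensity
  rw [bumpMeasure, withDensity_apply _ .univ, Measure.restrict_univ,
    ← ofReal_integral_eq_lintegral_ofReal hint (ae_of_all _ bumpDensity_nonneg), bumpDensity,
    ContDiffBump.integral_normed, ENNReal.ofReal_one]

lemma memLp_id_two_bumpMeasure : MemLp id 2 bumpMeasure := by
  have hbound : ∀ᵐ x ∂bumpMeasure, ‖x‖ ≤ 1 := by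
    have := contDiff_bumpDensity.continuous
    rw [bumpMeasure, ae_withDensity_iff (by fun_prop)]
    refine ae_of_all _ fun x hx => ?_
    have hx_mem : x ∈ Function.support bumpDensity := fun h => hx (by simp [h])
    rw [bumpDensity, ContDiffBump.support_normed_eq, mem_ball_zero_iff] at hx_mem
    exact hx_mem.le
  exact .of_bound (by fun_prop) 1 hbound

/-- The convolution of `m` with the rescaled bump measure, i.e. the law of `X + ε U` for
independent `X ∼ m` and `U ∼ bumpMeasure`. -/
noncomputable def mollify (m : Measure ℝ) (ε : ℝ) : Measure ℝ :=
  m ∗ bumpMeasure.map (ε * ·)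

instance (m : Measure ℝ) [IsProbabilityMeasure m] (ε : ℝ) : IsProbabilityMeasure (mollify m ε) := by
  have := Measure.isProbabilityMeasure_map (μ := bumpMeasure) (f := (ε * ·)) (by fun_prop)
  unfold mollify
  infer_instance

lemma hasSmoothDensityLE_mollify (m : Measure ℝ) [IsProbabilityMeasure m] {ε : ℝ} (hε : 0 < ε) :
    HasSmoothDensityLE (mollify m ε) ε⁻¹.toNNReal := by
  have hmeasure : bumpMeasure.map (ε * ·) =
      volume.withDensity fun x => ENNReal.ofReal (ε⁻¹ * bumpDensity (ε⁻¹ * x)) := by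
    have := contDiff_bumpDensity.continuous
    rw [bumpMeasure, map_mul_left_withDensity (by fun_prop) hε.ne', abs_of_pos (by positivity)]
    simp_rw [ENNReal.ofReal_mul (inv_nonneg.mpr hε.le)]
  have hsupp : HasCompactSupport fun x => ε⁻¹ * bumpDensity (ε⁻¹ * x) :=
    (hasCompactSupport_bumpDensity.comp_homeomorph
      (Homeomorph.mulLeft₀ ε⁻¹ (by positivity))).mul_left
  rw [mollify, hmeasure]
  refine hasSmoothDensityLE_conv_withDensity m
    (contDiff_const.mul (contDiff_bumpDensity.comp (contDiff_const.mul contDiff_id))) hsupp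
    (fun x => mul_nonneg (by positivity) (bumpDensity_nonneg _)) fun x => ?_
  rw [Real.coe_toNNReal _ (by positivity)]
  exact mul_le_of_le_one_right (by positivity) (bumpDensity_le_one _)

/-! ### Raising the free entropy -/

lemma exists_add_eq_one_quadratic_eq {A X B c : ℝ} {η : ℝ≥0} (hη : 0 < η) (hη_one : η ≤ 1)
    (hA : A ≤ c) (hX : A + (c - A) / η ≤ X) (hB : A + (c - A) / η ≤ B) :
    ∃ a b : ℝ≥0, a + b = 1 ∧ b ≤ η ∧ a ^ 2 * A + 2 * a * b * X + b ^ 2 * B = c := by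
  let q : ℝ → ℝ := fun b => (1 - b) ^ 2 * A + 2 * (1 - b) * b * X + b ^ 2 * B
  have hq_zero : q 0 ≤ c := by simpa [q] using hA
  have hη₀ : (0 : ℝ) < η := hη
  have hη₁ : (η : ℝ) ≤ 1 := hη_one
  have hcross : 0 ≤ 2 * (1 - η : ℝ) * η :=
    mul_nonneg (mul_nonneg zero_le_two (sub_nonneg.mpr hη₁)) hη₀.le
  have hq_η : c ≤ q η :=
    calc c ≤ c + (1 - η) * (c - A) :=
          le_add_of_nonneg_right (mul_nonneg (sub_nonneg.mpr hη₁) (sub_nonneg.mpr hA))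
      _ = (1 - η) ^ 2 * A + 2 * (1 - η) * η * (A + (c - A) / η) +
            η ^ 2 * (A + (c - A) / η) := by
          field_simp
          ring
      _ ≤ q η :=
          add_le_add (add_le_add le_rfl (mul_le_mul_of_nonneg_left hX hcross))
            (mul_le_mul_of_nonneg_left hB (sq_nonneg _))
  obtain ⟨b, ⟨hb₀, hbη⟩, hqb⟩ := intermediate_value_Icc hη₀.le
    (by fun_prop : Continuous q).continuousOn ⟨hq_zero, hq_η⟩
  lift b to ℝ≥0 using hb₀
  have hb_one : b ≤ 1 := (NNReal.coe_le_coe.mp hbη).trans hη_one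
  refine ⟨1 - b, b, tsub_add_cancel_of_le hb_one, hbη, ?_⟩
  simpa [q, NNReal.coe_sub hb_one] using hqb

section Measure

variable {α : Type*} [MeasurableSpace α] {μ ρ : Measure α} [IsProbabilityMeasure μ]
  [IsProbabilityMeasure ρ] {a b : ℝ≥0}

lemma isProbabilityMeasure_smul_add_smul (hab : a + b = 1) :
    IsProbabilityMeasure (a • μ + b • ρ) := by
  refine ⟨?_⟩
  simp only [Measure.add_apply, Measure.smul_apply, measure_univ, ENNReal.smul_def, smul_eq_mul,
    mul_one]
  exact_mod_cast hab

lemma abs_integral_smul_add_smul_sub_le [TopologicalSpace α] [OpensMeasurableSpace α]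
    (hab : a + b = 1) (g : BoundedContinuousFunction α ℝ) :
    |∫ x, g x ∂(a • μ + b • ρ) - ∫ x, g x ∂μ| ≤ b * (2 * ‖g‖) := by
  have hab' : (a : ℝ) + b = 1 := by exact_mod_cast hab
  have hdiff : ∫ x, g x ∂(a • μ + b • ρ) - ∫ x, g x ∂μ =
      b * (∫ x, g x ∂ρ - ∫ x, g x ∂μ) := by
    rw [integral_add_measure (g.integrable μ).smul_measure_nnreal
      (g.integrable ρ).smul_measure_nnreal, integral_smul_nnreal_measure,
      integral_smul_nnreal_measure, NNReal.smul_def, NNReal.smul_def, smul_eq_mul, smul_eq_mul]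
    linear_combination (∫ x, g x ∂μ) * hab'
  rw [hdiff, abs_mul, abs_of_nonneg b.coe_nonneg, two_mul]
  gcongr
  exact (abs_sub _ _).trans (add_le_add (g.norm_integral_le_norm ρ) (g.norm_integral_le_norm μ))

end Measure

lemma exists_logEnergy_ge (L : ℝ) : ∃ ρ : Measure ℝ, IsProbabilityMeasure ρ ∧
    (∃ N, HasSmoothDensityLE ρ N) ∧ MemLp id 2 ρ ∧
    ∀ (ν : Measure ℝ) [IsProbabilityMeasure ν], Integrable id ν → L ≤ logEnergy ρ ν := by
  let r := Real.exp (L + 2)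
  have hr : 0 < r := Real.exp_pos _
  have hdensity := hasSmoothDensityLE_mollify (Measure.dirac 0) hr
  have hdirac : MemLp id 2 (Measure.dirac (0 : ℝ)) :=
    (memLp_two_iff_integrable_sq (by fun_prop)).mpr (integrable_dirac (by simp))
  have hmem : MemLp id 2 (mollify (Measure.dirac 0) r) :=
    memLp_id_conv_map_mul_left hdirac memLp_id_two_bumpMeasure r
  refine ⟨mollify (Measure.dirac 0) r, inferInstance, ⟨_, hdensity⟩, hmem, fun ν _ hν => ?_⟩
  calc L = Real.log r - r⁻¹.toNNReal * (2 * r) := by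
        rw [Real.coe_toNNReal _ (by positivity), Real.log_exp]
        field_simp
        ring
    _ ≤ logEnergy (mollify (Measure.dirac 0) r) ν :=
        log_sub_le_logEnergy hdensity.le_smul_volume (hmem.integrable one_le_two) hν hr

theorem exists_freeEntropy_eq_of_le {μ : Measure ℝ} [IsProbabilityMeasure μ] {M : ℝ≥0}
    (hμM : HasSmoothDensityLE μ M) (hμ : MemLp id 2 μ) {c : ℝ} (hc : freeEntropy μ ≤ c) {η : ℝ≥0}
    (hη : 0 < η) (hη_one : η ≤ 1) :
    ∃ ν : Measure ℝ, IsProbabilityMeasure ν ∧ (∃ N, HasSmoothDensityLE ν N) ∧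
      Integrable (fun x => x ^ 2) ν ∧
      (∀ g : BoundedContinuousFunction ℝ ℝ, |∫ x, g x ∂ν - ∫ x, g x ∂μ| ≤ η * (2 * ‖g‖)) ∧
      freeEntropy ν = c := by
  obtain ⟨ρ, _, ⟨N, hρN⟩, hρ, hρ_energy⟩ :=
    exists_logEnergy_ge (logEnergy μ μ + (2 * c - logEnergy μ μ) / η)
  have hμ_int : Integrable id μ := hμ.integrable one_le_two
  have hρ_int : Integrable id ρ := hρ.integrable one_le_two
  have hμμ := integrable_log_abs_sub hμM.le_smul_volume hμ_int hμ_int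
  have hμρ := integrable_log_abs_sub hμM.le_smul_volume hμ_int hρ_int
  have hρρ := integrable_log_abs_sub hρN.le_smul_volume hρ_int hρ_int
  rw [freeEntropy_eq_logEnergy hμμ, EReal.coe_le_coe_iff] at hc
  obtain ⟨a, b, hab, hbη, henergy⟩ := exists_add_eq_one_quadratic_eq hη hη_one
    (by linarith : logEnergy μ μ ≤ 2 * c)
    ((hρ_energy μ hμ_int).trans_eq (logEnergy_comm ρ μ)) (hρ_energy ρ hρ_int)
  have hdensity := (hμM.smul a).add (hρN.smul b)
  have hint : Integrable id (a • μ + b • ρ) :=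
    hμ_int.smul_measure_nnreal.add_measure hρ_int.smul_measure_nnreal
  have hprob : IsProbabilityMeasure (a • μ + b • ρ) := isProbabilityMeasure_smul_add_smul hab
  refine ⟨a • μ + b • ρ, hprob, ⟨_, hdensity⟩,
    hμ.integrable_sq.smul_measure_nnreal.add_measure hρ.integrable_sq.smul_measure_nnreal,
    fun g => (abs_integral_smul_add_smul_sub_le hab g).trans (by gcongr), ?_⟩
  rw [freeEntropy_eq_logEnergy (integrable_log_abs_sub hdensity.le_smul_volume hint hint),
    logEnergy_smul_add_smul a b hμμ hμρ hρρ, henergy, EReal.coe_eq_coe_iff]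
  ring

theorem exists_freeEntropy_eq_max {m : Measure ℝ} [IsProbabilityMeasure m]
    (hm : MemLp id 2 m) {ε : ℝ≥0} (hε : 0 < ε) (hε_one : ε ≤ 1) :
    ∃ ν : Measure ℝ, IsProbabilityMeasure ν ∧ (∃ N, HasSmoothDensityLE ν N) ∧
      Integrable (fun x => x ^ 2) ν ∧
      (∀ g : BoundedContinuousFunction ℝ ℝ,
        |∫ x, g x ∂ν - ∫ x, g x ∂(mollify m ε)| ≤ ε * (2 * ‖g‖)) ∧
      freeEntropy ν = max (freeEntropy m) (freeEntropy (mollify m ε)) := by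
  have hdensity := hasSmoothDensityLE_mollify m (NNReal.coe_pos.mpr hε)
  have hmem : MemLp id 2 (mollify m ε) :=
    memLp_id_conv_map_mul_left hm memLp_id_two_bumpMeasure ε
  have hint : Integrable id (mollify m ε) := hmem.integrable one_le_two
  have hlt : max (freeEntropy m) (freeEntropy (mollify m ε)) < ⊤ :=
    max_lt (freeEntropy_lt_top (hm.integrable one_le_two)) (freeEntropy_lt_top hint)
  have hmollify := freeEntropy_eq_logEnergy
    (integrable_log_abs_sub hdensity.le_smul_volume hint hint)
  have hgt : ⊥ < max (freeEntropy m) (freeEntropy (mollify m ε)) :=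
    lt_max_of_lt_right (by rw [hmollify]; exact EReal.bot_lt_coe _)
  have hmax := EReal.coe_toReal hlt.ne hgt.ne'
  have hle := (le_max_right _ _).trans_eq hmax.symm
  simpa only [hmax] using exists_freeEntropy_eq_of_le hdensity hmem hle hε hε_one

lemma tendsto_max_of_limsup_le {α ι : Type*} [CompleteLinearOrder α] [TopologicalSpace α]
    [OrderTopology α] {l : Filter ι} {u : ι → α} {a : α} (h : limsup u l ≤ a) :
    Tendsto (fun i => max a (u i)) l (𝓝 a) := by
  refine tendsto_order.mpr ⟨fun b hb => .of_forall fun i => lt_max_of_lt_left hb, fun b hb => ?_⟩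
  filter_upwards [eventually_lt_of_limsup_lt (h.trans_lt hb)] with i hi using max_lt hb hi

theorem freeEntropy_smooth_approx_general (m : Measure ℝ) [IsProbabilityMeasure m]
    (hmom : Integrable (fun x => x ^ 2) m) :
    ∃ ms : ℕ → Measure ℝ,
      (∀ n, IsProbabilityMeasure (ms n)) ∧
      (∀ n, ∃ f : ℝ → ℝ, ContDiff ℝ (⊤ : ℕ∞) f ∧ (∃ M : ℝ, ∀ x, |f x| ≤ M) ∧ (∀ x, 0 ≤ f x) ∧
        ms n = volume.withDensity (fun x => ENNReal.ofReal (f x))) ∧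
      (∀ n, Integrable (fun x => x ^ 2) (ms n)) ∧
      (∀ g : BoundedContinuousFunction ℝ ℝ,
        Tendsto (fun n => ∫ x, g x ∂(ms n)) atTop (𝓝 (∫ x, g x ∂m))) ∧
      Tendsto (fun n => freeEntropy (ms n)) atTop (𝓝 (freeEntropy m)) := by
  have hm : MemLp id 2 m := (memLp_two_iff_integrable_sq (by fun_prop)).mpr hmom
  let ε (n : ℕ) : ℝ≥0 := 1 / (n + 1)
  have hε : Tendsto (fun n => (ε n : ℝ)) atTop (𝓝 0) := by
    simpa [ε] using tendsto_one_div_add_atTop_nhds_zero_nat (𝕜 := ℝ)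
  have hε_one (n : ℕ) : ε n ≤ 1 := div_le_one_of_le₀ (by simp) zero_le
  choose ms hprob hdensity hsq hnarrow hentropy using fun n =>
    exists_freeEntropy_eq_max hm (ε := ε n) (by positivity) (hε_one n)
  refine ⟨ms, hprob, fun n => ?_, hsq, fun g => ?_, ?_⟩
  · obtain ⟨N, f, hf, hf₀, hfN, hms⟩ := hdensity n
    exact ⟨f, hf, ⟨N, fun x => (abs_of_nonneg (hf₀ x)).trans_le (hfN x)⟩, hf₀, hms⟩
  · have hmollify := (tendsto_integral_conv_map_mul_left (m := m) (ρ := bumpMeasure) g).comp hε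
    refine hmollify.congr_dist (squeeze_zero (fun _ => dist_nonneg) (fun n => ?_)
      (by simpa using hε.mul_const (2 * ‖g‖)))
    rw [dist_comm]
    exact hnarrow n g
  · simp only [hentropy]
    exact (tendsto_max_of_limsup_le (limsup_freeEntropy_conv_map_mul_left_le
      (hm.integrable one_le_two) (memLp_id_two_bumpMeasure.integrable one_le_two))).comp hε

/-- **Approximation with convergent free entropy.**
Any probability measure `m` with finite second moment and `E(m) > −∞` can be approximated
narrowly by probability measures with bounded smooth densities and finite second moments whose
free entropies converge to `E(m)`. -/
theorem freeEntropy_smooth_approx (m : Measure ℝ) [IsProbabilityMeasure m]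
    (hmom : Integrable (fun x => x ^ 2) m) (hE : ⊥ < freeEntropy m) :
    ∃ ms : ℕ → Measure ℝ,
      (∀ n, IsProbabilityMeasure (ms n)) ∧
      (∀ n, ∃ f : ℝ → ℝ, ContDiff ℝ (⊤ : ℕ∞) f ∧ (∃ M : ℝ, ∀ x, |f x| ≤ M) ∧ (∀ x, 0 ≤ f x) ∧
        ms n = volume.withDensity (fun x => ENNReal.ofReal (f x))) ∧
      (∀ n, Integrable (fun x => x ^ 2) (ms n)) ∧
      (∀ g : BoundedContinuousFunction ℝ ℝ,
        Tendsto (fun n => ∫ x, g x ∂(ms n)) atTop (𝓝 (∫ x, g x ∂m))) ∧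
      Tendsto (fun n => freeEntropy (ms n)) atTop (𝓝 (freeEntropy m)) :=
  freeEntropy_smooth_approx_general m hmom
end

section
/- For every real-valued Schwartz function u on ℝ, ∫_ℝ H[u](x)² u(x) dx = (π²/3) ∫_ℝ u(x)³ dx. -/
open MeasureTheory Filter
open scoped Topology

/-! Replace the singular kernel `t⁻¹` by the conjugate Poisson kernel `Q_ε(t) = t / (t² + ε²)`.
Averaging over cyclic permutations of three variables turns `3 ∫ (Q_ε ⋆ u)² u` into the triple
integral of `u(x) u(y) u(z)` against the cyclic sum of `Q_ε(x - y) Q_ε(x - z)`. For `ε = 0` this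
sum vanishes off the diagonals, because `1/((x-y)(x-z)) + 1/((y-z)(y-x)) + 1/((z-x)(z-y)) = 0`; for
`ε > 0` it is the dilate by `ε` of an integrable function of `(x - y, x - z)` of total mass `π²`,
so it is `π²` times an approximate identity and the triple integral tends to `π² ∫ u³`. On the
other side, oddness of `Q_ε` and the Lipschitz bound on `u` give `Q_ε ⋆ u → H[u]` boundedly.
-/

open scoped NNReal

section Lipschitz

lemma norm_le_add_integral_norm_of_lipschitzWith {E : Type*} [NormedAddCommGroup E]
    {u : ℝ → E} {L : ℝ≥0} (hu : Integrable u) (hL : LipschitzWith L u) (x : ℝ) :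
    ‖u x‖ ≤ L + ∫ t, ‖u t‖ := by
  have hnear : ∀ t ∈ Set.Icc x (x + 1), ‖u x‖ - L ≤ ‖u t‖ := fun t ht => by
    have hxt : ‖x - t‖ ≤ 1 := by
      rw [Real.norm_eq_abs, abs_le]
      constructor <;> linarith [ht.1, ht.2]
    have hdist : ‖u x - u t‖ ≤ L := (hL.norm_sub_le x t).trans (mul_le_of_le_one_right L.2 hxt)
    linarith [norm_sub_norm_le (u x) (u t)]
  have haverage : ‖u x‖ - L ≤ ∫ t in Set.Icc x (x + 1), ‖u t‖ := by
    simpa using setIntegral_mono_on (μ := volume) (by simp) hu.norm.integrableOn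
      measurableSet_Icc hnear
  linarith [setIntegral_le_integral (s := Set.Icc x (x + 1)) hu.norm
    (ae_of_all _ fun t => norm_nonneg (u t))]

lemma exists_lipschitzWith_schwartzMap {E F : Type*} [NormedAddCommGroup E] [NormedSpace ℝ E]
    [NormedAddCommGroup F] [NormedSpace ℝ F] (f : SchwartzMap E F) :
    ∃ L : ℝ≥0, LipschitzWith L f := by
  obtain ⟨L, hL0, hL⟩ := (SchwartzMap.fderivCLM ℝ E F f).decay 0 0
  lift L to ℝ≥0 using hL0.le
  refine ⟨L, lipschitzWith_of_nnnorm_fderiv_le (𝕜 := ℝ) f.differentiable fun x => ?_⟩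
  simpa [← NNReal.coe_le_coe] using hL x

end Lipschitz

section OddKernel

variable {u K : ℝ → ℝ} {L : ℝ≥0}

lemma integral_sub_mul_of_odd (hu : Integrable u) (hK : Measurable K) (hodd : Function.Odd K)
    {C : ℝ} (hC : ∀ t, |K t| ≤ C) (x : ℝ) :
    ∫ t, u (x - t) * K t = ∫ t, (u (x - t) - u (x + t)) / 2 * K t := by
  have hsub : Integrable fun t => u (x - t) * K t :=
    (hu.comp_sub_left x).mul_bdd hK.aestronglyMeasurable (ae_of_all _ hC)
  have hadd : Integrable fun t => u (x + t) * K t :=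
    (hu.comp_add_left x).mul_bdd hK.aestronglyMeasurable (ae_of_all _ hC)
  have hreflect : ∫ t, u (x + t) * K t = -∫ t, u (x - t) * K t := by
    rw [← integral_neg_eq_self, ← integral_neg]
    simp [hodd _, sub_eq_add_neg]
  calc ∫ t, u (x - t) * K t
      = (∫ t, u (x - t) * K t - u (x + t) * K t) / 2 := by
        rw [integral_sub hsub hadd, hreflect]; ring
    _ = ∫ t, (u (x - t) - u (x + t)) / 2 * K t := by
        rw [← integral_div]; congr 1 with t; ring

/-- A majorant in `t`, integrable and of integral independent of `x`, of the product of
`(u (x - t) - u (x + t)) / 2` with any kernel bounded by `|t|⁻¹`, when `u` is integrable with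
Lipschitz constant `L`: near `t = 0` it uses the Lipschitz bound, elsewhere integrability. -/
noncomputable def symmDiffMajorant (u : ℝ → ℝ) (L x t : ℝ) : ℝ :=
  (Set.Icc (-1 : ℝ) 1).indicator (fun _ => L) t + (|u (x - t)| + |u (x + t)|) / 2

lemma integrable_symmDiffMajorant (hu : Integrable u) (L x : ℝ) :
    Integrable (symmDiffMajorant u L x) :=
  ((integrable_indicator_iff measurableSet_Icc).mpr (by simp)).add
    (((hu.comp_sub_left x).abs.add (hu.comp_add_left x).abs).div_const 2)

lemma integral_symmDiffMajorant (hu : Integrable u) (L x : ℝ) :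
    ∫ t, symmDiffMajorant u L x t = 2 * L + ∫ t, |u t| := by
  have htail : Integrable fun t => (|u (x - t)| + |u (x + t)|) / 2 :=
    ((hu.comp_sub_left x).abs.add (hu.comp_add_left x).abs).div_const 2
  have hcore : ∫ t, (Set.Icc (-1 : ℝ) 1).indicator (fun _ => L) t = 2 * L := by
    rw [integral_indicator measurableSet_Icc]
    norm_num
  unfold symmDiffMajorant
  rw [integral_add ((integrable_indicator_iff measurableSet_Icc).mpr (by simp)) htail, hcore,
    integral_div, integral_add (hu.comp_sub_left x).abs (hu.comp_add_left x).abs,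
    integral_sub_left_eq_self (fun t => |u t|), integral_add_left_eq_self (fun t => |u t|)]
  ring

lemma abs_symmDiff_mul_le_symmDiffMajorant (hL : LipschitzWith L u)
    (hK : ∀ t, |K t| ≤ |t|⁻¹) (x t : ℝ) :
    |(u (x - t) - u (x + t)) / 2 * K t| ≤ symmDiffMajorant u L x t := by
  unfold symmDiffMajorant
  rw [abs_mul, abs_div, abs_two]
  refine (mul_le_mul_of_nonneg_left (hK t) (by positivity)).trans ?_
  by_cases ht : t ∈ Set.Icc (-1 : ℝ) 1
  · have hlip : |u (x - t) - u (x + t)| / 2 ≤ L * |t| := by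
      have h := hL.norm_sub_le (x - t) (x + t)
      rw [show x - t - (x + t) = -(2 * t) by ring, norm_neg, norm_mul, Real.norm_two,
        Real.norm_eq_abs, Real.norm_eq_abs] at h
      linarith
    have hquot : |u (x - t) - u (x + t)| / 2 * |t|⁻¹ ≤ L := by
      refine (mul_le_mul_of_nonneg_right hlip (by positivity)).trans ?_
      rw [mul_assoc]
      exact mul_le_of_le_one_right L.2 mul_inv_le_one
    rw [Set.indicator_of_mem ht]
    exact hquot.trans (le_add_of_nonneg_right (by positivity))
  · have hinv : |t|⁻¹ ≤ 1 := inv_le_one_of_one_le₀ (not_le.mp (mt abs_le.mp ht)).le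
    rw [Set.indicator_of_notMem ht, zero_add]
    refine (mul_le_of_le_one_right (by positivity) hinv).trans ?_
    linarith [abs_sub (u (x - t)) (u (x + t))]

lemma abs_integral_sub_mul_le_of_odd (hu : Integrable u) (hL : LipschitzWith L u)
    (hK : Measurable K) (hodd : Function.Odd K) {C : ℝ} (hC : ∀ t, |K t| ≤ C)
    (hinv : ∀ t, |K t| ≤ |t|⁻¹) (x : ℝ) :
    |∫ t, u (x - t) * K t| ≤ 2 * L + ∫ t, |u t| := by
  rw [integral_sub_mul_of_odd hu hK hodd hC, ← integral_symmDiffMajorant hu L x,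
    ← Real.norm_eq_abs]
  exact norm_integral_le_of_norm_le (integrable_symmDiffMajorant hu L x)
    (ae_of_all _ (abs_symmDiff_mul_le_symmDiffMajorant hL hinv x))

end OddKernel

/-- `K ε`, for `ε → 0⁺`, is a regularization of the singular kernel `t⁻¹` by bounded odd kernels
dominated by it. At `t = 0` the domination means `K ε 0 = 0`, since `|0|⁻¹ = 0`. -/
structure IsInvRegularization (K : ℝ → ℝ → ℝ) : Prop where
  measurable (ε : ℝ) : Measurable (K ε)
  odd (ε : ℝ) : Function.Odd (K ε)
  abs_le_inv (ε t : ℝ) : |K ε t| ≤ |t|⁻¹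
  exists_abs_le {ε : ℝ} (hε : 0 < ε) : ∃ C, ∀ t, |K ε t| ≤ C
  tendsto_inv {t : ℝ} (ht : t ≠ 0) : Tendsto (fun ε => K ε t) (𝓝[>] 0) (𝓝 t⁻¹)

lemma IsInvRegularization.tendsto_integral_sub_mul {u : ℝ → ℝ} {K : ℝ → ℝ → ℝ} {L : ℝ≥0}
    (hK : IsInvRegularization K) (hu : Integrable u) (hL : LipschitzWith L u) (x : ℝ) :
    Tendsto (fun ε => ∫ t, u (x - t) * K ε t) (𝓝[>] 0)
      (𝓝 (∫ t, (u (x - t) - u (x + t)) / 2 * t⁻¹)) := by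
  have hsymm : Tendsto (fun ε => ∫ t, (u (x - t) - u (x + t)) / 2 * K ε t) (𝓝[>] 0)
      (𝓝 (∫ t, (u (x - t) - u (x + t)) / 2 * t⁻¹)) := by
    refine tendsto_integral_filter_of_dominated_convergence (symmDiffMajorant u L x)
      (.of_forall fun ε => ?_)
      (.of_forall fun ε => ae_of_all _
        (abs_symmDiff_mul_le_symmDiffMajorant hL (hK.abs_le_inv ε) x))
      (integrable_symmDiffMajorant hu L x) ?_
    · have := hK.measurable ε
      have := hL.continuous.measurable
      exact Measurable.aestronglyMeasurable (by fun_prop)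
    · filter_upwards [Measure.ae_ne volume 0] with t ht using (hK.tendsto_inv ht).const_mul _
  refine hsymm.congr' ?_
  filter_upwards [self_mem_nhdsWithin] with ε hε
  obtain ⟨C, hC⟩ := hK.exists_abs_le hε
  exact (integral_sub_mul_of_odd hu (hK.measurable ε) (hK.odd ε) hC x).symm

section Truncation

/-- The kernel `t⁻¹` cut off to `ε ≤ |t|`, whose convolution with `u` is `truncHilbert u ε`. -/
noncomputable def truncInv (ε : ℝ) : ℝ → ℝ := {t : ℝ | ε ≤ |t|}.indicator fun t => t⁻¹

lemma truncHilbert_eq_integral_sub_mul_truncInv (u : ℝ → ℝ) (ε x : ℝ) :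
    truncHilbert u ε x = ∫ t, u (x - t) * truncInv ε t := by
  have hS : MeasurableSet {y : ℝ | ε ≤ |x - y|} :=
    measurableSet_le measurable_const (by fun_prop)
  rw [truncHilbert, ← integral_indicator hS, ← integral_sub_left_eq_self _ _ x]
  congr 1 with t
  simp [truncInv, Set.indicator_apply, div_eq_mul_inv]

lemma isInvRegularization_truncInv : IsInvRegularization truncInv where
  measurable ε := measurable_inv.indicator (measurableSet_le measurable_const measurable_norm)
  odd ε t := by
    simp only [truncInv, Set.indicator_apply, Set.mem_ofPred_eq, abs_neg]
    split_ifs <;> simp [inv_neg]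
  abs_le_inv ε t := by
    rw [← abs_inv]
    exact norm_indicator_le_norm_self (fun t : ℝ => t⁻¹) t
  exists_abs_le {ε} hε := by
    refine ⟨ε⁻¹, fun t => ?_⟩
    simp only [truncInv, Set.indicator_apply, Set.mem_ofPred_eq]
    split_ifs with h
    · rw [abs_inv]; exact inv_anti₀ hε h
    · simpa using hε.le
  tendsto_inv {t} ht := by
    have hsmall : ∀ᶠ ε in 𝓝[>] (0 : ℝ), ε < |t| :=
      nhdsWithin_le_nhds (Iio_mem_nhds (abs_pos.mpr ht))
    refine tendsto_const_nhds.congr' ?_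
    filter_upwards [hsmall] with ε hε
    simp [truncInv, hε.le]

lemma hilbert_eq_integral_symmDiff {u : ℝ → ℝ} {L : ℝ≥0} (hu : Integrable u)
    (hL : LipschitzWith L u) (x : ℝ) :
    hilbert u x = ∫ t, (u (x - t) - u (x + t)) / 2 * t⁻¹ := by
  refine Tendsto.limUnder_eq ?_
  simp_rw [truncHilbert_eq_integral_sub_mul_truncInv]
  exact isInvRegularization_truncInv.tendsto_integral_sub_mul hu hL x

end Truncation

lemma IsInvRegularization.tendsto_integral_sq_mul {u : ℝ → ℝ} {K : ℝ → ℝ → ℝ} {L : ℝ≥0}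
    (hK : IsInvRegularization K) (hu : Integrable u) (hL : LipschitzWith L u) :
    Tendsto (fun ε => ∫ x, (∫ t, u (x - t) * K ε t) ^ 2 * u x) (𝓝[>] 0)
      (𝓝 (∫ x, hilbert u x ^ 2 * u x)) := by
  refine tendsto_integral_filter_of_dominated_convergence
    (fun x => (2 * L + ∫ t, |u t|) ^ 2 * |u x|) (.of_forall fun ε => ?_) ?_
    (hu.abs.const_mul _) (ae_of_all _ fun x => ?_)
  · have hum := hL.continuous.measurable
    have hKm := hK.measurable ε
    have hprod : Measurable (Function.uncurry fun x t => u (x - t) * K ε t) := by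
      unfold Function.uncurry
      fun_prop
    have hconv := (hprod.stronglyMeasurable.integral_prod_right (ν := volume)).measurable
    exact ((hconv.pow_const 2).mul hum).aestronglyMeasurable
  · filter_upwards [self_mem_nhdsWithin] with ε hε
    obtain ⟨C, hC⟩ := hK.exists_abs_le hε
    refine ae_of_all _ fun x => ?_
    rw [norm_mul, norm_pow, Real.norm_eq_abs, Real.norm_eq_abs]
    gcongr
    exact abs_integral_sub_mul_le_of_odd hu hL (hK.measurable ε) (hK.odd ε) hC (hK.abs_le_inv ε) x
  · rw [hilbert_eq_integral_symmDiff hu hL]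
    exact ((hK.tendsto_integral_sub_mul hu hL x).pow 2).mul_const _

section Cycle

variable {α : Type*} [MeasurableSpace α]

/-- The cyclic permutation `(x, y, z) ↦ (y, z, x)` of the coordinates of a triple. -/
def cycleTriple (α : Type*) [MeasurableSpace α] : α × α × α ≃ᵐ α × α × α :=
  MeasurableEquiv.prodComm.trans MeasurableEquiv.prodAssoc

@[simp]
lemma cycleTriple_apply (x y z : α) : cycleTriple α (x, y, z) = (y, z, x) := rfl

variable {μ : Measure α} [SFinite μ]

lemma measurePreserving_cycleTriple :
    MeasurePreserving (cycleTriple α) (μ.prod (μ.prod μ)) (μ.prod (μ.prod μ)) :=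
  (measurePreserving_prodAssoc μ μ μ).comp Measure.measurePreserving_swap

lemma integrable_comp_cycleTriple {f : α × α × α → ℝ} (hf : Integrable f (μ.prod (μ.prod μ))) :
    Integrable (fun p => f (cycleTriple α p)) (μ.prod (μ.prod μ)) :=
  measurePreserving_cycleTriple.integrable_comp_of_integrable hf

lemma integral_comp_cycleTriple (f : α × α × α → ℝ) :
    ∫ p, f (cycleTriple α p) ∂μ.prod (μ.prod μ) = ∫ p, f p ∂μ.prod (μ.prod μ) :=
  measurePreserving_cycleTriple.integral_comp' f

/-- The sum of `f` over the three cyclic permutations of its arguments. -/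
def cyclicSum (f : α × α × α → ℝ) (p : α × α × α) : ℝ :=
  f p + f (cycleTriple α p) + f (cycleTriple α (cycleTriple α p))

lemma integrable_cyclicSum {f : α × α × α → ℝ} (hf : Integrable f (μ.prod (μ.prod μ))) :
    Integrable (cyclicSum f) (μ.prod (μ.prod μ)) :=
  (hf.add (integrable_comp_cycleTriple hf)).add
    (integrable_comp_cycleTriple (integrable_comp_cycleTriple hf))

lemma integral_cyclicSum {f : α × α × α → ℝ} (hf : Integrable f (μ.prod (μ.prod μ))) :
    ∫ p, cyclicSum f p ∂μ.prod (μ.prod μ) = 3 * ∫ p, f p ∂μ.prod (μ.prod μ) := by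
  have hf₁ := integrable_comp_cycleTriple hf
  have hf₂ := integrable_comp_cycleTriple hf₁
  have hf₀₁ : Integrable (fun p => f p + f (cycleTriple α p)) (μ.prod (μ.prod μ)) := hf.add hf₁
  unfold cyclicSum
  rw [integral_add hf₀₁ hf₂, integral_add hf hf₁,
    integral_comp_cycleTriple (fun p => f (cycleTriple α p)), integral_comp_cycleTriple]
  ring

end Cycle

section Convolution

variable {G : Type*} [AddCommGroup G]

/-- The product `K (x - y) * K (x - z)` summed over the cyclic permutations of `x, y, z`,
as a function of `(s, t) = (x - y, x - z)`. -/
def cyclicKernel (K : G → ℝ) (p : G × G) : ℝ :=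
  K p.1 * K p.2 + K (p.2 - p.1) * K (-p.1) + K (-p.2) * K (p.1 - p.2)

/-- The function of `(x, y, z)` whose integral is `∫ x, (K ⋆ u) x ^ 2 * u x`. -/
def tripleIntegrand (u K : G → ℝ) (p : G × G × G) : ℝ :=
  u p.1 * (u p.2.1 * u p.2.2) * (K (p.1 - p.2.1) * K (p.1 - p.2.2))

variable [MeasurableSpace G]

lemma cyclicSum_tripleIntegrand (u K : G → ℝ) (x s t : G) :
    cyclicSum (tripleIntegrand u K) (x, x - s, x - t)
      = u x * (u (x - s) * u (x - t) * cyclicKernel K (s, t)) := by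
  simp only [cyclicSum, cycleTriple_apply, tripleIntegrand, cyclicKernel, sub_sub_cancel,
    sub_sub_sub_cancel_left, sub_sub_cancel_left]
  ring

variable [MeasurableAdd₂ G] [MeasurableNeg G] {μ : Measure G} {u K : G → ℝ}

lemma integrable_tripleIntegrand (hu : Integrable u μ) (hK : Measurable K) {C : ℝ}
    (hC : ∀ t, |K t| ≤ C) : Integrable (tripleIntegrand u K) (μ.prod (μ.prod μ)) := by
  refine (hu.mul_prod (hu.mul_prod hu)).mul_bdd (c := C * C)
    (Measurable.aestronglyMeasurable (by fun_prop)) (ae_of_all _ fun p => ?_)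
  rw [norm_mul]
  exact mul_le_mul (hC _) (hC _) (norm_nonneg _) ((abs_nonneg _).trans (hC 0))

variable [SFinite μ] [μ.IsAddLeftInvariant] [μ.IsNegInvariant]

lemma integral_prod_sub_left_eq_self (f : G × G → ℝ) (x : G) :
    ∫ p, f (x - p.1, x - p.2) ∂μ.prod μ = ∫ p, f p ∂μ.prod μ := by
  have hsub := μ.measurePreserving_sub_left x
  have hemb := (MeasurableEquiv.subLeft x).measurableEmbedding
  exact (hsub.prod hsub).integral_comp (hemb.prodMap hemb) f

lemma integral_integral_sub_mul_sq_mul (hu : Integrable u μ) (hK : Measurable K) {C : ℝ}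
    (hC : ∀ t, |K t| ≤ C) :
    ∫ x, (∫ t, u (x - t) * K t ∂μ) ^ 2 * u x ∂μ
      = ∫ p, tripleIntegrand u K p ∂μ.prod (μ.prod μ) := by
  rw [integral_prod _ (integrable_tripleIntegrand hu hK hC)]
  congr 1 with x
  have hconv : ∫ t, u (x - t) * K t ∂μ = ∫ y, u y * K (x - y) ∂μ := by
    rw [← integral_sub_left_eq_self _ _ x]
    simp
  calc (∫ t, u (x - t) * K t ∂μ) ^ 2 * u x
      = u x * ((∫ y, u y * K (x - y) ∂μ) * ∫ z, u z * K (x - z) ∂μ) := by rw [hconv]; ring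
    _ = ∫ q, tripleIntegrand u K (x, q) ∂μ.prod μ := by
      rw [← integral_prod_mul, ← integral_const_mul]
      congr 1 with q
      simp only [tripleIntegrand]
      ring

lemma three_mul_integral_integral_sub_mul_sq_mul (hu : Integrable u μ) (hK : Measurable K)
    {C : ℝ} (hC : ∀ t, |K t| ≤ C) :
    3 * ∫ x, (∫ t, u (x - t) * K t ∂μ) ^ 2 * u x ∂μ
      = ∫ x, u x * ∫ p, u (x - p.1) * u (x - p.2) * cyclicKernel K p ∂μ.prod μ ∂μ := by
  have hint := integrable_tripleIntegrand hu hK hC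
  rw [integral_integral_sub_mul_sq_mul hu hK hC, ← integral_cyclicSum hint,
    integral_prod _ (integrable_cyclicSum hint)]
  congr 1 with x
  rw [← integral_prod_sub_left_eq_self _ x, ← integral_const_mul]
  simp_rw [cyclicSum_tripleIntegrand]

end Convolution

section ApproximateIdentity

variable {V : Type*} [NormedAddCommGroup V] [NormedSpace ℝ V] [MeasurableSpace V] [BorelSpace V]
  {μ : Measure V} {g k : V → ℝ} {C : ℝ}

lemma tendsto_integral_sub_smul_mul (hk : Integrable k μ) (hg : Continuous g)
    (hC : ∀ v, |g v| ≤ C) (v : V) :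
    Tendsto (fun ε : ℝ => ∫ p, g (v - ε • p) * k p ∂μ) (𝓝 0) (𝓝 (g v * ∫ p, k p ∂μ)) := by
  rw [← integral_const_mul]
  refine tendsto_integral_filter_of_dominated_convergence (fun p => C * |k p|)
    (.of_forall fun ε => ?_) (.of_forall fun ε => ae_of_all _ fun p => ?_)
    (hk.abs.const_mul C) (ae_of_all _ fun p => ?_)
  · exact (Continuous.aestronglyMeasurable (by fun_prop)).mul hk.aestronglyMeasurable
  · rw [norm_mul]
    exact mul_le_mul_of_nonneg_right (hC _) (norm_nonneg _)
  · have hcont : Continuous fun ε : ℝ => g (v - ε • p) * k p := by fun_prop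
    simpa using hcont.tendsto 0

lemma tendsto_integral_mul_integral_sub_smul_mul [SecondCountableTopology V] [SFinite μ]
    {X : Type*} [MeasurableSpace X] {ν : Measure X} {f : X → ℝ} {ι : X → V}
    (hf : Integrable f ν) (hι : Measurable ι) (hk : Integrable k μ) (hg : Continuous g)
    (hC : ∀ v, |g v| ≤ C) :
    Tendsto (fun ε : ℝ => ∫ x, f x * ∫ p, g (ι x - ε • p) * k p ∂μ ∂ν) (𝓝 0)
      (𝓝 ((∫ p, k p ∂μ) * ∫ x, f x * g (ι x) ∂ν)) := by
  rw [mul_comm, ← integral_mul_const]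
  simp_rw [mul_assoc]
  refine tendsto_integral_filter_of_dominated_convergence (fun x => |f x| * ∫ p, C * |k p| ∂μ)
    (.of_forall fun ε => hf.aestronglyMeasurable.mul ?_)
    (.of_forall fun ε => ae_of_all _ fun x => ?_) (hf.abs.mul_const _)
    (ae_of_all _ fun x => (tendsto_integral_sub_smul_mul hk hg hC (ι x)).const_mul (f x))
  · have hgm : Measurable fun z : X × V => g (ι z.1 - ε • z.2) := by fun_prop
    exact (hgm.aestronglyMeasurable.mul
      (hk.aestronglyMeasurable.comp_snd (μ := ν))).integral_prod_right'
  · rw [norm_mul]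
    refine mul_le_mul_of_nonneg_left ?_ (norm_nonneg _)
    refine norm_integral_le_of_norm_le (hk.abs.const_mul C) (ae_of_all _ fun p => ?_)
    rw [norm_mul]
    exact mul_le_mul_of_nonneg_right (hC _) (norm_nonneg _)

end ApproximateIdentity

section ConjPoisson

/-- The conjugate Poisson kernel `t / (t² + ε²)`, without the normalizing factor `π⁻¹`. -/
noncomputable def conjPoisson (ε t : ℝ) : ℝ := t / (t ^ 2 + ε ^ 2)

lemma conjPoisson_mul_left {ε : ℝ} (hε : ε ≠ 0) (t : ℝ) :
    conjPoisson ε (ε * t) = ε⁻¹ * conjPoisson 1 t := by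
  have : t ^ 2 + 1 ≠ 0 := by positivity
  unfold conjPoisson
  field_simp

lemma isInvRegularization_conjPoisson : IsInvRegularization conjPoisson where
  measurable ε := by unfold conjPoisson; fun_prop
  odd ε t := by simp [conjPoisson, neg_div]
  abs_le_inv ε t := by
    rcases eq_or_ne t 0 with rfl | ht
    · simp [conjPoisson]
    rw [conjPoisson, abs_div, abs_of_nonneg (by positivity : 0 ≤ t ^ 2 + ε ^ 2), ← sq_abs t,
      inv_eq_one_div, div_le_div_iff₀ (by positivity) (by positivity)]
    nlinarith [sq_nonneg ε]
  exists_abs_le {ε} hε := by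
    refine ⟨ε⁻¹, fun t => ?_⟩
    rw [conjPoisson, abs_div, abs_of_nonneg (by positivity : 0 ≤ t ^ 2 + ε ^ 2), ← sq_abs t,
      inv_eq_one_div, div_le_div_iff₀ (by positivity) hε]
    nlinarith [sq_nonneg (|t| - ε), mul_nonneg (abs_nonneg t) hε.le]
  tendsto_inv {t} ht := by
    have hcont : ContinuousAt (fun ε => conjPoisson ε t) 0 :=
      ContinuousAt.div (by fun_prop) (by fun_prop) (by positivity)
    have hzero : conjPoisson 0 t = t⁻¹ := by
      unfold conjPoisson
      field_simp
      ring
    simpa only [hzero] using hcont.tendsto.mono_left nhdsWithin_le_nhds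

lemma cyclicKernel_conjPoisson_smul {ε : ℝ} (hε : ε ≠ 0) (p : ℝ × ℝ) :
    cyclicKernel (conjPoisson ε) (ε • p) = (ε ^ 2)⁻¹ * cyclicKernel (conjPoisson 1) p := by
  simp only [cyclicKernel, Prod.smul_fst, Prod.smul_snd, smul_eq_mul, ← mul_sub, ← mul_neg,
    conjPoisson_mul_left hε]
  ring

lemma integral_mul_cyclicKernel_conjPoisson (f : ℝ × ℝ → ℝ) {ε : ℝ} (hε : ε ≠ 0) :
    ∫ p, f p * cyclicKernel (conjPoisson ε) p
      = ∫ p, f (ε • p) * cyclicKernel (conjPoisson 1) p := by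
  have hscale := Measure.integral_comp_smul (volume : Measure (ℝ × ℝ))
    (fun p => f p * cyclicKernel (conjPoisson ε) p) ε
  simp only [cyclicKernel_conjPoisson_smul hε, mul_left_comm _ (ε ^ 2)⁻¹, integral_const_mul,
    Module.finrank_prod, Module.finrank_self, one_add_one_eq_two, smul_eq_mul,
    abs_of_nonneg (inv_nonneg.mpr (sq_nonneg ε))] at hscale
  exact (mul_left_cancel₀ (by positivity) hscale).symm

lemma three_mul_integral_integral_sub_mul_conjPoisson_sq_mul {u : ℝ → ℝ} (hu : Integrable u)
    {ε : ℝ} (hε : 0 < ε) :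
    3 * ∫ x, (∫ t, u (x - t) * conjPoisson ε t) ^ 2 * u x
      = ∫ x, u x * ∫ p : ℝ × ℝ, u (x - ε * p.1) * u (x - ε * p.2)
          * cyclicKernel (conjPoisson 1) p := by
  obtain ⟨C, hC⟩ := isInvRegularization_conjPoisson.exists_abs_le hε
  rw [three_mul_integral_integral_sub_mul_sq_mul hu
    (isInvRegularization_conjPoisson.measurable ε) hC]
  congr 1 with x
  exact congrArg _ (integral_mul_cyclicKernel_conjPoisson _ hε.ne')

lemma cyclicKernel_conjPoisson_one (s t : ℝ) :
    cyclicKernel (conjPoisson 1) (s, t)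
      = 1 / 2 * ((1 + s ^ 2)⁻¹ * (1 + t ^ 2)⁻¹ + (1 + s ^ 2)⁻¹ * (1 + (t - s) ^ 2)⁻¹
          + (1 + (s - t) ^ 2)⁻¹ * (1 + t ^ 2)⁻¹)
        - 3 / 2 * ((1 + s ^ 2)⁻¹ * (1 + (t - s) ^ 2)⁻¹ * (1 + t ^ 2)⁻¹) := by
  have h : 1 + (t - s) ^ 2 ≠ 0 := by positivity
  simp only [cyclicKernel, conjPoisson, sub_sq_comm s t, neg_sq, one_pow,
    add_comm (_ ^ 2) (1 : ℝ)]
  field_simp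
  ring

lemma integrable_cyclicKernel_conjPoisson_one :
    Integrable (cyclicKernel (conjPoisson 1)) := by
  have h₁ : Integrable fun p : ℝ × ℝ => (1 + p.1 ^ 2)⁻¹ * (1 + p.2 ^ 2)⁻¹ :=
    integrable_inv_one_add_sq.mul_prod integrable_inv_one_add_sq
  have h₂ : Integrable fun p : ℝ × ℝ => (1 + p.1 ^ 2)⁻¹ * (1 + (p.2 - p.1) ^ 2)⁻¹ :=
    (measurePreserving_prod_sub volume volume).integrable_comp_of_integrable h₁
  have h₃ : Integrable fun p : ℝ × ℝ => (1 + (p.1 - p.2) ^ 2)⁻¹ * (1 + p.2 ^ 2)⁻¹ :=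
    (measurePreserving_sub_prod volume volume).integrable_comp_of_integrable h₁
  have h₄ : Integrable fun p : ℝ × ℝ =>
      (1 + p.1 ^ 2)⁻¹ * (1 + (p.2 - p.1) ^ 2)⁻¹ * (1 + p.2 ^ 2)⁻¹ := by
    refine h₂.mul_bdd (c := 1) (Measurable.aestronglyMeasurable (by fun_prop))
      (ae_of_all _ fun p => ?_)
    rw [Real.norm_of_nonneg (by positivity)]
    exact inv_le_one_of_one_le₀ (le_add_of_nonneg_right (sq_nonneg _))
  exact ((((h₁.add h₂).add h₃).const_mul (1 / 2)).sub (h₄.const_mul (3 / 2))).congr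
    (ae_of_all _ fun p => (cyclicKernel_conjPoisson_one p.1 p.2).symm)

lemma tendsto_log_one_add_sq_div {l : Filter ℝ} (hl : Tendsto (fun t : ℝ => t⁻¹) l (𝓝 0))
    (hne : ∀ᶠ t in l, t ≠ 0) (s : ℝ) :
    Tendsto (fun t => Real.log ((1 + t ^ 2) / (1 + (t - s) ^ 2))) l (𝓝 0) := by
  have hcont : ContinuousAt
      (fun r : ℝ => Real.log ((r ^ 2 + 1) / (r ^ 2 + (1 - s * r) ^ 2))) 0 :=
    ContinuousAt.log (ContinuousAt.div (by fun_prop) (by fun_prop) (by simp)) (by simp)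
  have hlim := hcont.tendsto.comp hl
  simp only [ne_eq, OfNat.ofNat_ne_zero, not_false_eq_true, zero_pow, zero_add, mul_zero,
    sub_zero, one_pow, div_one, Real.log_one] at hlim
  refine hlim.congr' ?_
  filter_upwards [hne] with t ht
  have : 1 + (t - s) ^ 2 ≠ 0 := by positivity
  simp only [Function.comp]
  congr 1
  field_simp

/-- A primitive in `t` of `(1 + t²)⁻¹ (1 + (t - s)²)⁻¹` for `s ≠ 0`, found by partial fractions. -/
noncomputable def poissonPrimitive (s t : ℝ) : ℝ :=
  Real.log ((1 + t ^ 2) / (1 + (t - s) ^ 2)) / (s * (s ^ 2 + 4))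
    + (Real.arctan t + Real.arctan (t - s)) / (s ^ 2 + 4)

lemma hasDerivAt_poissonPrimitive {s : ℝ} (hs : s ≠ 0) (t : ℝ) :
    HasDerivAt (poissonPrimitive s) ((1 + t ^ 2)⁻¹ * (1 + (t - s) ^ 2)⁻¹) t := by
  have hsub : HasDerivAt (fun t : ℝ => t - s) 1 t := (hasDerivAt_id t).sub_const s
  have hnum : HasDerivAt (fun t : ℝ => 1 + t ^ 2) (2 * t) t := by
    simpa using ((hasDerivAt_id t).pow 2).const_add 1
  have hden : HasDerivAt (fun t : ℝ => 1 + (t - s) ^ 2) (2 * (t - s)) t := by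
    simpa using (hsub.pow 2).const_add 1
  have hlog := (hnum.div hden (by positivity)).log (by simp only [Pi.div_apply]; positivity)
  have harctan := (Real.hasDerivAt_arctan t).add hsub.arctan
  refine ((hlog.div_const (s * (s ^ 2 + 4))).add
    (harctan.div_const (s ^ 2 + 4))).congr_deriv ?_
  have : s ^ 2 + 4 ≠ 0 := by positivity
  have : 1 + t ^ 2 ≠ 0 := by positivity
  have : 1 + (t - s) ^ 2 ≠ 0 := by positivity
  simp only [Pi.div_apply]
  field_simp
  ring

lemma integrable_inv_one_add_sq_mul_inv_one_add_sub_sq (s : ℝ) :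
    Integrable fun t : ℝ => (1 + t ^ 2)⁻¹ * (1 + (t - s) ^ 2)⁻¹ := by
  refine integrable_inv_one_add_sq.mul_bdd (c := 1)
    (Measurable.aestronglyMeasurable (by fun_prop)) (ae_of_all _ fun t => ?_)
  rw [Real.norm_of_nonneg (by positivity)]
  exact inv_le_one_of_one_le₀ (le_add_of_nonneg_right (sq_nonneg _))

lemma integral_inv_one_add_sq_mul_inv_one_add_sub_sq {s : ℝ} (hs : s ≠ 0) :
    ∫ t, (1 + t ^ 2)⁻¹ * (1 + (t - s) ^ 2)⁻¹ = 2 * Real.pi / (s ^ 2 + 4) := by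
  have hlimit {l : Filter ℝ} {a : ℝ}
      (hlog : Tendsto (fun t => Real.log ((1 + t ^ 2) / (1 + (t - s) ^ 2))) l (𝓝 0))
      (harctan : Tendsto Real.arctan l (𝓝 a)) (hsub : Tendsto (fun t => t - s) l l) :
      Tendsto (poissonPrimitive s) l (𝓝 (0 / (s * (s ^ 2 + 4)) + (a + a) / (s ^ 2 + 4))) :=
    (hlog.div_const _).add ((harctan.add (harctan.comp hsub)).div_const _)
  have htop := hlimit (tendsto_log_one_add_sq_div tendsto_inv_atTop_zero (eventually_ne_atTop 0) s)
    (Real.tendsto_arctan_atTop.mono_right nhdsWithin_le_nhds)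
    (tendsto_atTop_add_const_right _ (-s) tendsto_id)
  have hbot := hlimit (tendsto_log_one_add_sq_div tendsto_inv_atBot_zero (eventually_ne_atBot 0) s)
    (Real.tendsto_arctan_atBot.mono_right nhdsWithin_le_nhds)
    (tendsto_atBot_add_const_right _ (-s) tendsto_id)
  rw [integral_of_hasDerivAt_of_tendsto (hasDerivAt_poissonPrimitive hs)
    (integrable_inv_one_add_sq_mul_inv_one_add_sub_sq s) hbot htop]
  ring

lemma integral_cyclicKernel_conjPoisson_one_right {s : ℝ} (hs : s ≠ 0) :
    ∫ t, cyclicKernel (conjPoisson 1) (s, t) = 2 * Real.pi / (s ^ 2 + 4) := by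
  have h₁ := integrable_inv_one_add_sq
  have h₂ : Integrable fun t : ℝ => (1 + (t - s) ^ 2)⁻¹ := h₁.comp_sub_right s
  have h₁₂ : Integrable fun t : ℝ => (1 + t ^ 2)⁻¹ + (1 + (t - s) ^ 2)⁻¹ := h₁.add h₂
  have h₃ := integrable_inv_one_add_sq_mul_inv_one_add_sub_sq s
  have hgroup (t : ℝ) : cyclicKernel (conjPoisson 1) (s, t)
      = (1 + s ^ 2)⁻¹ / 2 * ((1 + t ^ 2)⁻¹ + (1 + (t - s) ^ 2)⁻¹)
        + (1 / 2 - 3 / 2 * (1 + s ^ 2)⁻¹) * ((1 + t ^ 2)⁻¹ * (1 + (t - s) ^ 2)⁻¹) := by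
    rw [cyclicKernel_conjPoisson_one, sub_sq_comm s t]
    ring
  simp_rw [hgroup]
  rw [integral_add (h₁₂.const_mul _) (h₃.const_mul _), integral_const_mul,
    integral_const_mul, integral_add h₁ h₂, integral_inv_one_add_sq_mul_inv_one_add_sub_sq hs,
    integral_sub_right_eq_self (fun t : ℝ => (1 + t ^ 2)⁻¹), integral_univ_inv_one_add_sq]
  field_simp
  ring

lemma integral_cyclicKernel_conjPoisson_one :
    ∫ p, cyclicKernel (conjPoisson 1) p = Real.pi ^ 2 := by
  have hcauchy : (fun s => ∫ t, cyclicKernel (conjPoisson 1) (s, t))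
      =ᵐ[volume] fun s => Real.pi ^ 2 * ProbabilityTheory.cauchyPDFReal 0 2 s := by
    filter_upwards [Measure.ae_ne volume (0 : ℝ)] with s hs
    rw [integral_cyclicKernel_conjPoisson_one_right hs, ProbabilityTheory.cauchyPDFReal_def]
    have : s ^ 2 + 4 ≠ 0 := by positivity
    norm_num
    field_simp
  rw [Measure.volume_eq_prod, integral_prod _ integrable_cyclicKernel_conjPoisson_one,
    integral_congr_ae hcauchy, integral_const_mul,
    ProbabilityTheory.integral_cauchyPDFReal_eq_one 0 two_ne_zero, mul_one]

end ConjPoisson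

theorem integral_hilbert_sq_mul_general {u : ℝ → ℝ} {L : ℝ≥0} (hu : Integrable u)
    (hL : LipschitzWith L u) :
    ∫ x, hilbert u x ^ 2 * u x = Real.pi ^ 2 / 3 * ∫ x, u x ^ 3 := by
  have hQ := isInvRegularization_conjPoisson
  have hu_le := norm_le_add_integral_norm_of_lipschitzWith hu hL
  have hcont : Continuous fun q : ℝ × ℝ => u q.1 * u q.2 := by
    have := hL.continuous
    fun_prop
  have hbound (q : ℝ × ℝ) : |u q.1 * u q.2| ≤ (L + ∫ t, ‖u t‖) * (L + ∫ t, ‖u t‖) :=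
    (abs_mul _ _).trans_le (by gcongr <;> exact hu_le _)
  have hlhs := (hQ.tendsto_integral_sq_mul hu hL).const_mul 3
  have hrhs := (tendsto_integral_mul_integral_sub_smul_mul (ι := fun x => (x, x)) hu
    (by fun_prop) integrable_cyclicKernel_conjPoisson_one hcont hbound).mono_left
    (nhdsWithin_le_nhds (s := Set.Ioi 0))
  have hlimits := tendsto_nhds_unique_of_eventuallyEq hlhs hrhs <| by
    filter_upwards [self_mem_nhdsWithin] with ε hε
    exact three_mul_integral_integral_sub_mul_conjPoisson_sq_mul hu hε
  rw [integral_cyclicKernel_conjPoisson_one] at hlimits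
  simp_rw [pow_succ (u _) 2, pow_two (u _), mul_assoc]
  linarith

/-- **Cotlar-type identity.** For every real-valued Schwartz function `u`,
`∫ H[u]² u = (π²/3) ∫ u³`. -/
theorem integral_hilbert_sq_mul (u : SchwartzMap ℝ ℝ) :
    ∫ x : ℝ, (hilbert (fun y => u y) x) ^ 2 * u x
      = Real.pi ^ 2 / 3 * ∫ x : ℝ, (u x) ^ 3 := by
  obtain ⟨L, hL⟩ := exists_lipschitzWith_schwartzMap u
  exact integral_hilbert_sq_mul_general u.integrable hL
end

section
/- Let ε > 0 and R₀ ∈ ℝ. Let m : [0,∞) × ℝ → [0,∞) be C¹ in (t,x), Lipschitz in x uniformly in t, with m(t,·) a probability density for every t ≥ 0, such that the principal values H[m(t,·)](x) exist, x ↦ m(t,x)H[m(t,·)](x) is differentiable, and ∂ₜm(t,x) + ∂ₓ(m(t,·)H[m(t,·)])(x) + (1/ε)(𝟙_{x>R₀} m(t,x) + max(x−R₀,0)·∂ₓm(t,x)) = 0 holds for all t > 0 and all x ∈ ℝ with x ≠ R₀. Then sup_{x∈ℝ} m(t,x) ≤ sup_{x∈ℝ} m(0,x) for every t ≥ 0.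 -/
open MeasureTheory Filter Set
open scoped Topology

/-!
The proof is a maximum principle. Let `x` be a maximum of `u = m t`, and let
`W y = 2 u(x) - u(x + y) - u(x - y) ≥ 0`. Folding the principal values onto `z > 0` gives
`H[u](x + h) - H[u](x - h) = ∫_{z > 0} (W(z + h) - W(z - h)) / z dz`. For `z ≥ h`, shifting each
term by `h` compares the kernels `1 / (y - h) ≥ 1 / (y + h)` and leaves only a boundary term on
`[0, 2h]`; that term and the integral over `z < h` are `O(K h)`, where `K` is a Lipschitz constant
of `u` near `x`. Since `∂ₓu(x) = 0`, the constant `K` can be taken arbitrarily small, whence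
`∂ₓH[u](x) ≥ 0`. So `∂ₓ(u H[u]) = u ∂ₓH[u]` and the penalization are both nonnegative at a positive
maximum, and `∂ₜm ≤ 0` there; at `x = R₀`, where the equation is not assumed, it is replaced by its
limit from the left, in which the penalization vanishes.

Maxima exist because `m` decays at infinity uniformly on compact time intervals: by equicontinuity
a large value of `m` carries a fixed amount of mass, and upper semicontinuity of the mass prevents
mass from coming in from infinity. Running the argument on `m - η t` makes the conclusion strict.
-/

section SymmetricDifference

variable {W : ℝ → ℝ} {h : ℝ}

theorem abs_integral_symmetric_difference_div_le {K : NNReal} {δ : ℝ} (heven : Function.Even W)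
    (hlip : LipschitzOnWith K W (Metric.closedBall 0 (2 * h))) (hδ : 0 < δ) (hδh : δ ≤ h) :
    |∫ z in δ..h, (W (z + h) - W (z - h)) / z| ≤ 2 * K * (h - δ) := by
  rw [← abs_of_nonneg (sub_nonneg.2 hδh), ← Real.norm_eq_abs]
  refine intervalIntegral.norm_integral_le_of_norm_le_const fun z hz => ?_
  rw [uIoc_of_le hδh] at hz
  have hz0 : 0 < z := hδ.trans hz.1
  -- Reflecting `z - h` to `h - z` makes the increment `2 z`, which cancels the `1 / z`.
  have hdist : |W (z + h) - W (z - h)| ≤ K * (2 * z) := by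
    have hK := hlip.dist_le_mul (z + h) (by grind [Metric.mem_closedBall, Real.dist_eq])
      (h - z) (by grind [Metric.mem_closedBall, Real.dist_eq])
    rwa [Real.dist_eq, Real.dist_eq, ← heven (h - z), neg_sub, show z + h - (h - z) = 2 * z by ring,
      abs_of_pos (show 0 < 2 * z by positivity)] at hK
  rw [norm_div, Real.norm_eq_abs, Real.norm_of_nonneg hz0.le, div_le_iff₀ hz0]
  linarith

theorem intervalIntegrable_div_add {a b c : ℝ} (hW : IntervalIntegrable W volume a b)
    (hac : 0 < a + c) (hab : a ≤ b) : IntervalIntegrable (fun y => W y / (y + c)) volume a b := by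
  simp only [div_eq_mul_inv]
  refine hW.mul_continuousOn (ContinuousOn.inv₀ (by fun_prop) fun y hy => ?_)
  rw [uIcc_of_le hab] at hy
  linarith [hy.1]

theorem integral_symmetric_difference_div_eq {N : ℝ}
    (hint : ∀ a b, IntervalIntegrable W volume a b) (hh : 0 < h) (hN : h ≤ N) :
    ∫ z in h..N, (W (z + h) - W (z - h)) / z =
      (∫ y in 2 * h..N + h, W y / (y + -h)) - ∫ y in 0..N - h, W y / (y + h) := by
  have hright : IntervalIntegrable (fun z => W (z + h) / (z + h + -h)) volume h N := by
    have := (intervalIntegrable_div_add (c := -h) (hint (2 * h) (N + h)) (by linarith)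
      (by linarith)).comp_add_right h
    simpa [two_mul] using this
  have hleft : IntervalIntegrable (fun z => W (z - h) / (z - h + h)) volume h N := by
    have := (intervalIntegrable_div_add (c := h) (hint 0 (N - h)) (by linarith)
      (by linarith)).comp_sub_right h
    simpa using this
  have hsub := intervalIntegral.integral_sub hright hleft
  rw [intervalIntegral.integral_comp_add_right (fun y => W y / (y + -h)),
    intervalIntegral.integral_comp_sub_right (fun y => W y / (y + h)), sub_self, ← two_mul] at hsub
  simpa only [add_neg_cancel_right, sub_add_cancel, sub_div] using hsub

theorem neg_integral_le_integral_symmetric_difference_div {N : ℝ} (hW : ∀ y, 0 ≤ W y)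
    (hint : ∀ a b, IntervalIntegrable W volume a b) (hh : 0 < h) (hN : 3 * h ≤ N) :
    -∫ y in 0..2 * h, W y / (y + h) ≤ ∫ z in h..N, (W (z + h) - W (z - h)) / z := by
  have hplus {a b : ℝ} (ha : 0 ≤ a) (hab : a ≤ b) :
      IntervalIntegrable (fun y => W y / (y + h)) volume a b :=
    intervalIntegrable_div_add (hint a b) (by linarith) hab
  have hminus {b : ℝ} (hb : 2 * h ≤ b) :
      IntervalIntegrable (fun y => W y / (y + -h)) volume (2 * h) b :=
    intervalIntegrable_div_add (hint _ b) (by linarith) hb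
  have hcompare : ∫ y in 2 * h..N - h, W y / (y + h) ≤ ∫ y in 2 * h..N + h, W y / (y + -h) := calc
    _ ≤ ∫ y in 2 * h..N - h, W y / (y + -h) := by
      refine intervalIntegral.integral_mono_on (by linarith) (hplus (by linarith) (by linarith))
        (hminus (by linarith)) fun y hy => ?_
      exact div_le_div_of_nonneg_left (hW y) (by linarith [hy.1]) (by linarith)
    _ ≤ ∫ y in 2 * h..N + h, W y / (y + -h) := by
      refine intervalIntegral.integral_mono_interval le_rfl (by linarith) (by linarith)
        ((ae_restrict_iff' measurableSet_Ioc).2 (.of_forall fun y hy => ?_)) (hminus (by linarith))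
      exact div_nonneg (hW y) (by linarith [hy.1])
  have hsplit := intervalIntegral.integral_add_adjacent_intervals
    (hplus (b := 2 * h) le_rfl (by linarith)) (hplus (b := N - h) (by linarith) (by linarith))
  rw [integral_symmetric_difference_div_eq hint hh (by linarith)]
  linarith

theorem abs_integral_div_add_le {K : NNReal} (hzero : W 0 = 0)
    (hlip : LipschitzOnWith K W (Metric.closedBall 0 (2 * h))) (hh : 0 < h) :
    |∫ y in 0..2 * h, W y / (y + h)| ≤ K * (2 * h) := by
  have hbound : ∀ y ∈ uIoc 0 (2 * h), ‖W y / (y + h)‖ ≤ K := fun y hy => by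
    rw [uIoc_of_le (by linarith)] at hy
    have hK := hlip.dist_le_mul y (by grind [Metric.mem_closedBall, Real.dist_eq]) 0
      (by grind [Metric.mem_closedBall, Real.dist_eq])
    rw [hzero, Real.dist_0_eq_abs, Real.dist_0_eq_abs, abs_of_pos hy.1] at hK
    rw [norm_div, Real.norm_eq_abs, Real.norm_of_nonneg (by linarith [hy.1]),
      div_le_iff₀ (by linarith [hy.1])]
    exact hK.trans (by gcongr; linarith)
  simpa [abs_of_pos hh] using intervalIntegral.norm_integral_le_of_norm_le_const hbound

theorem neg_le_integral_symmetric_difference_div {K : NNReal} {δ N : ℝ} (heven : Function.Even W)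
    (hzero : W 0 = 0) (hW : ∀ y, 0 ≤ W y) (hint : ∀ a b, IntervalIntegrable W volume a b)
    (hlip : LipschitzOnWith K W (Metric.closedBall 0 (2 * h))) (hδ : 0 < δ) (hδh : δ ≤ h)
    (hN : 3 * h ≤ N) :
    -(4 * K * h) ≤ ∫ z in δ..N, (W (z + h) - W (z - h)) / z := by
  have hh : 0 < h := hδ.trans_le hδh
  have hnear : |∫ z in δ..h, (W (z + h) - W (z - h)) / z| ≤ 2 * K * h :=
    (abs_integral_symmetric_difference_div_le heven hlip hδ hδh).trans (by gcongr; linarith)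
  have hboundary := abs_integral_div_add_le hzero hlip hh
  have hfar := neg_integral_le_integral_symmetric_difference_div hW hint hh hN
  have hintegrable {a b : ℝ} (ha : 0 < a) (hab : a ≤ b) :
      IntervalIntegrable (fun z => (W (z + h) - W (z - h)) / z) volume a b := by
    have hdiff : IntervalIntegrable (fun z => W (z + h) - W (z - h)) volume a b :=
      .sub (by simpa using (hint (a + h) (b + h)).comp_add_right h)
        (by simpa using (hint (a - h) (b - h)).comp_sub_right h)
    simpa using intervalIntegrable_div_add (c := 0) hdiff (by simpa) hab
  rw [← intervalIntegral.integral_add_adjacent_intervals (hintegrable hδ hδh)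
    (hintegrable hh (by linarith))]
  linarith [abs_le.1 hnear, abs_le.1 hboundary]

end SymmetricDifference

section HilbertTransform

/-- The principal value defining the Hilbert transform of `u` converges at `x`. Without this
property `hilbert u x` is the junk value of `limUnder`. -/
def HilbertConverges (u : ℝ → ℝ) (x : ℝ) : Prop :=
  ∃ l, Tendsto (fun δ => truncHilbert u δ x) (𝓝[>] 0) (𝓝 l)

variable {u : ℝ → ℝ} {x h δ : ℝ}

theorem HilbertConverges.tendsto (hpv : HilbertConverges u x) :
    Tendsto (fun δ => truncHilbert u δ x) (𝓝[>] 0) (𝓝 (hilbert u x)) :=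
  tendsto_nhds_limUnder hpv

theorem integrableOn_div_self_of_le_abs {s : Set ℝ} (hu : Integrable u) (hδ : 0 < δ)
    (hs : MeasurableSet s) (hsδ : ∀ z ∈ s, δ ≤ |z|) : IntegrableOn (fun z => u z / z) s := by
  simp only [div_eq_mul_inv]
  refine hu.integrableOn.mul_bdd (c := δ⁻¹) (by fun_prop)
    ((ae_restrict_iff' hs).2 (.of_forall fun z hz => ?_))
  rw [norm_inv]
  exact inv_anti₀ hδ (hsδ z hz)

theorem integrableOn_Ioi_div_self (hu : Integrable u) (hδ : 0 < δ) :
    IntegrableOn (fun z => u z / z) (Ioi δ) :=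
  integrableOn_div_self_of_le_abs hu hδ measurableSet_Ioi fun _ hz => hz.le.trans (le_abs_self _)

theorem setIntegral_le_abs_div_self (hu : Integrable u) (hδ : 0 < δ) :
    ∫ z in {z | δ ≤ |z|}, u z / z = ∫ z in Ioi δ, (u z - u (-z)) / z := by
  have hset : {z : ℝ | δ ≤ |z|} = Iic (-δ) ∪ Ici δ := by
    ext z
    simp [le_abs', or_comm]
  have hdisj : Disjoint (Iic (-δ)) (Ici δ) := Iic_disjoint_Ici.2 (by linarith)
  have hintegrable : IntegrableOn (fun z => u z / z) (Iic (-δ) ∪ Ici δ) :=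
    hset ▸ integrableOn_div_self_of_le_abs hu hδ (by measurability) fun _ hz => hz
  rw [hset, setIntegral_union hdisj measurableSet_Ici hintegrable.left_of_union
    hintegrable.right_of_union, integral_Ici_eq_integral_Ioi, ← integral_comp_neg_Ioi]
  simp only [sub_div]
  rw [integral_sub (integrableOn_Ioi_div_self hu hδ) (integrableOn_Ioi_div_self hu.comp_neg hδ)]
  simp only [div_neg, integral_neg]
  ring

theorem truncHilbert_eq_integral_Ioi (hu : Integrable u) (hδ : 0 < δ) (x : ℝ) :
    truncHilbert u δ x = ∫ z in Ioi δ, (u (x - z) - u (x + z)) / z := by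
  have hreflect : truncHilbert u δ x = ∫ z in {z | δ ≤ |z|}, u (x - z) / z := by
    simpa [truncHilbert] using
      (Measure.measurePreserving_sub_left volume x).setIntegral_preimage_emb
        (MeasurableEquiv.subLeft x).measurableEmbedding (fun z => u (x - z) / z) {z | δ ≤ |z|}
  simpa using hreflect.trans (setIntegral_le_abs_div_self (hu.comp_sub_left x) hδ)

/-- The symmetric second difference of `u` about `x`, with the sign that makes it nonnegative
when `x` is a maximum of `u`. -/
def secondDifference (u : ℝ → ℝ) (x y : ℝ) : ℝ :=
  2 * u x - u (x + y) - u (x - y)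

theorem secondDifference_even (u : ℝ → ℝ) (x : ℝ) : Function.Even (secondDifference u x) :=
  fun y => by simp [secondDifference, ← sub_eq_add_neg, sub_right_comm]

theorem secondDifference_zero (u : ℝ → ℝ) (x : ℝ) : secondDifference u x 0 = 0 := by
  simp [secondDifference, two_mul]

theorem secondDifference_nonneg (hmax : IsMaxOn u univ x) (y : ℝ) :
    0 ≤ secondDifference u x y := by
  have hle (z : ℝ) : u z ≤ u x := hmax (mem_univ z)
  rw [secondDifference]
  linarith [hle (x + y), hle (x - y)]

theorem intervalIntegrable_secondDifference (hu : Integrable u) (x a b : ℝ) :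
    IntervalIntegrable (secondDifference u x) volume a b :=
  (intervalIntegrable_const.sub (hu.comp_add_left x).intervalIntegrable).sub
    (hu.comp_sub_left x).intervalIntegrable

theorem lipschitzOnWith_secondDifference {K : NNReal} {r : ℝ}
    (hlip : LipschitzOnWith K u (Metric.closedBall x r)) :
    LipschitzOnWith (2 * K) (secondDifference u x) (Metric.closedBall 0 r) := by
  refine LipschitzOnWith.of_dist_le_mul fun y hy z hz => ?_
  have hplus := hlip.dist_le_mul (x + y) (by simpa using hy) (x + z) (by simpa using hz)
  have hminus := hlip.dist_le_mul (x - y) (by simpa using hy) (x - z) (by simpa using hz)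
  rw [dist_add_left] at hplus
  rw [dist_sub_left] at hminus
  calc dist (secondDifference u x y) (secondDifference u x z)
      ≤ dist (u (x + y)) (u (x + z)) + dist (u (x - y)) (u (x - z)) := by
        refine (dist_sub_sub_le _ _ _ _).trans_eq ?_
        rw [dist_sub_left]
    _ ≤ ↑(2 * K) * dist y z := by
        push_cast
        linarith

theorem secondDifference_add_sub_secondDifference_sub (u : ℝ → ℝ) (x h z : ℝ) :
    secondDifference u x (z + h) - secondDifference u x (z - h) =
      u (x + h - z) - u (x + h + z) - (u (x - h - z) - u (x - h + z)) := by
  simp only [secondDifference]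
  ring_nf

theorem integrable_sub_sub_add (hu : Integrable u) (x : ℝ) :
    Integrable fun z => u (x - z) - u (x + z) :=
  (hu.comp_sub_left x).sub (hu.comp_add_left x)

theorem truncHilbert_add_sub_truncHilbert_sub (hu : Integrable u) (hδ : 0 < δ) (x h : ℝ) :
    truncHilbert u δ (x + h) - truncHilbert u δ (x - h) =
      ∫ z in Ioi δ, (secondDifference u x (z + h) - secondDifference u x (z - h)) / z := by
  simp only [secondDifference_add_sub_secondDifference_sub, sub_div _ (u _ - u _)]
  rw [truncHilbert_eq_integral_Ioi hu hδ, truncHilbert_eq_integral_Ioi hu hδ,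
    integral_sub (integrableOn_Ioi_div_self (integrable_sub_sub_add hu _) hδ)
      (integrableOn_Ioi_div_self (integrable_sub_sub_add hu _) hδ)]

theorem neg_le_truncHilbert_add_sub_truncHilbert_sub {K : NNReal} (hu : Integrable u)
    (hmax : IsMaxOn u univ x) (hlip : LipschitzOnWith K u (Metric.closedBall x (2 * h)))
    (hδ : 0 < δ) (hδh : δ ≤ h) :
    -(8 * K * h) ≤ truncHilbert u δ (x + h) - truncHilbert u δ (x - h) := by
  rw [truncHilbert_add_sub_truncHilbert_sub hu hδ]
  have hintegrable : IntegrableOn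
      (fun z => (secondDifference u x (z + h) - secondDifference u x (z - h)) / z) (Ioi δ) := by
    simp only [secondDifference_add_sub_secondDifference_sub]
    exact integrableOn_Ioi_div_self
      ((integrable_sub_sub_add hu _).sub (integrable_sub_sub_add hu _)) hδ
  refine ge_of_tendsto (intervalIntegral_tendsto_integral_Ioi δ hintegrable tendsto_id) ?_
  filter_upwards [eventually_ge_atTop (3 * h)] with N hN
  refine le_trans (le_of_eq ?_) <| neg_le_integral_symmetric_difference_div
    (secondDifference_even u x) (secondDifference_zero u x) (secondDifference_nonneg hmax)
    (intervalIntegrable_secondDifference hu x) (lipschitzOnWith_secondDifference hlip) hδ hδh hN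
  push_cast
  ring

theorem neg_le_hilbert_add_sub_hilbert_sub {K : NNReal} (hu : Integrable u)
    (hmax : IsMaxOn u univ x) (hlip : LipschitzOnWith K u (Metric.closedBall x (2 * h)))
    (hh : 0 < h) (hplus : HilbertConverges u (x + h)) (hminus : HilbertConverges u (x - h)) :
    -(8 * K * h) ≤ hilbert u (x + h) - hilbert u (x - h) := by
  refine ge_of_tendsto (hplus.tendsto.sub hminus.tendsto) ?_
  filter_upwards [Ioc_mem_nhdsGT hh] with δ hδ
  exact neg_le_truncHilbert_add_sub_truncHilbert_sub hu hmax hlip hδ.1 hδ.2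

theorem tendsto_symmetric_difference_quotient {F : Type*} [NormedAddCommGroup F]
    [NormedSpace ℝ F] {f : ℝ → F} {d : F} (hf : HasDerivAt f d x) :
    Tendsto (fun h => h⁻¹ • (f (x + h) - f (x - h))) (𝓝[>] 0) (𝓝 (d + d)) := by
  have hplus : HasDerivAt (fun h => f (x + h)) d 0 :=
    HasDerivAt.comp_const_add x 0 (by rwa [add_zero])
  have hminus : HasDerivAt (fun h => f (x - h)) (-d) 0 :=
    HasDerivAt.comp_const_sub x 0 (by rwa [sub_zero])
  simpa using (hplus.fun_sub hminus).tendsto_slope_zero_right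

theorem neg_le_of_hasDerivAt_hilbert {K : NNReal} {d : ℝ} {s : Set ℝ} (hu : Integrable u)
    (hmax : IsMaxOn u univ x) (hs : s ∈ 𝓝 x) (hlip : LipschitzOnWith K u s)
    (hpv : ∀ᶠ y in 𝓝 x, HilbertConverges u y) (hd : HasDerivAt (hilbert u) d x) :
    -(8 * K) ≤ d + d := by
  have hplus : Tendsto (fun h => x + h) (𝓝[>] 0) (𝓝 x) :=
    (Continuous.tendsto' (by fun_prop) _ _ (add_zero x)).mono_left nhdsWithin_le_nhds
  have hminus : Tendsto (fun h => x - h) (𝓝[>] 0) (𝓝 x) :=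
    (Continuous.tendsto' (by fun_prop) _ _ (sub_zero x)).mono_left nhdsWithin_le_nhds
  have hradius : Tendsto (fun h : ℝ => 2 * h) (𝓝[>] 0) (𝓝 0) :=
    (Continuous.tendsto' (by fun_prop) _ _ (mul_zero 2)).mono_left nhdsWithin_le_nhds
  have hball : ∀ᶠ h in 𝓝[>] (0 : ℝ), Metric.closedBall x (2 * h) ⊆ s :=
    hradius.eventually (eventually_closedBall_subset hs)
  refine ge_of_tendsto (tendsto_symmetric_difference_quotient hd) ?_
  filter_upwards [self_mem_nhdsWithin, hball, hplus.eventually hpv, hminus.eventually hpv]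
    with h hh hhs hpvp hpvm
  rw [smul_eq_mul, inv_mul_eq_div, le_div_iff₀ hh]
  linarith [neg_le_hilbert_add_sub_hilbert_sub hu hmax (hlip.mono hhs) hh hpvp hpvm]

theorem hasDerivAt_hilbert_nonneg_of_isMaxOn {d : ℝ} (hu : Integrable u) (hmax : IsMaxOn u univ x)
    (hstrict : HasStrictDerivAt u 0 x) (hpv : ∀ᶠ y in 𝓝 x, HilbertConverges u y)
    (hd : HasDerivAt (hilbert u) d x) : 0 ≤ d := by
  have hbound (K : NNReal) (hK : 0 < K) : -(8 * K) ≤ d + d := by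
    obtain ⟨s, hs, hlip⟩ := hstrict.hasStrictFDerivAt.exists_lipschitzOnWith_of_nnnorm_lt K
      (by simpa using hK)
    exact neg_le_of_hasDerivAt_hilbert hu hmax hs hlip hpv hd
  by_contra! hneg
  have hd_bound := hbound (-d / 8).toNNReal (Real.toNNReal_pos.2 (by linarith))
  rw [Real.coe_toNNReal _ (by linarith)] at hd_bound
  linarith

theorem deriv_mul_hilbert_nonneg_of_isMaxOn (hu : Integrable u) (hmax : IsMaxOn u univ x)
    (hpos : 0 < u x) (hC1 : ContDiffAt ℝ 1 u x) (hpv : ∀ᶠ y in 𝓝 x, HilbertConverges u y)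
    (hdiff : DifferentiableAt ℝ (fun y => u y * hilbert u y) x) :
    0 ≤ deriv (fun y => u y * hilbert u y) x := by
  have hcrit : deriv u x = 0 := (hmax.isLocalMax univ_mem).deriv_eq_zero
  have hstrict : HasStrictDerivAt u 0 x := hcrit ▸ hC1.hasStrictDerivAt one_ne_zero
  have hdiffH : DifferentiableAt ℝ (hilbert u) x := by
    refine (hdiff.div hstrict.hasDerivAt.differentiableAt hpos.ne').congr_of_eventuallyEq ?_
    filter_upwards [hC1.continuousAt.eventually_ne hpos.ne'] with y hy
    exact (mul_div_cancel_left₀ _ hy).symm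
  rw [(hstrict.hasDerivAt.fun_mul hdiffH.hasDerivAt).deriv, zero_mul, zero_add]
  exact mul_nonneg hpos.le
    (hasDerivAt_hilbert_nonneg_of_isMaxOn hu hmax hstrict hpv hdiffH.hasDerivAt)

end HilbertTransform

section UniformDecay

open Metric

variable {T E F : Type*} [NormedAddCommGroup E] [ProperSpace E] [MeasurableSpace E] [BorelSpace E]
  {μ : Measure E} [NormedAddCommGroup F]

theorem mul_measureReal_ball_le_setIntegral_norm [μ.IsAddHaarMeasure] {f : E → F} {x : E}
    {c δ : ℝ} {s : Set E} (hf : Integrable f μ) (hball : ball x δ ⊆ s)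
    (hc : ∀ y ∈ ball x δ, c ≤ ‖f y‖) : c * μ.real (ball 0 δ) ≤ ∫ y in s, ‖f y‖ ∂μ := calc
  c * μ.real (ball 0 δ) = c * μ.real (ball x δ) := by rw [Measure.addHaar_real_ball_center μ x]
  _ ≤ ∫ y in ball x δ, ‖f y‖ ∂μ :=
    setIntegral_ge_of_const_le_real measurableSet_ball measure_ball_lt_top.ne hc
      hf.norm.integrableOn
  _ ≤ ∫ y in s, ‖f y‖ ∂μ :=
    setIntegral_mono_set hf.norm.integrableOn (.of_forall fun _ => norm_nonneg _)
      hball.eventuallyLE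

variable [TopologicalSpace T] [FirstCountableTopology T] {u : T → E → F}

theorem exists_eventually_setIntegral_compl_closedBall_lt [LocallyCompactSpace T]
    [IsFiniteMeasureOnCompacts μ] {t₀ : T} (hu : Continuous (Function.uncurry u))
    (hint : ∀ t, Integrable (u t) μ)
    (hmass : UpperSemicontinuousAt (fun t => ∫ x, ‖u t x‖ ∂μ) t₀) {c : ℝ} (hc : 0 < c) :
    ∃ R, ∀ᶠ t in 𝓝 t₀, ∫ x in (closedBall 0 R)ᶜ, ‖u t x‖ ∂μ < c := by
  have hlim : Tendsto (fun R => ∫ x in closedBall 0 R, ‖u t₀ x‖ ∂μ) atTop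
      (𝓝 (∫ x, ‖u t₀ x‖ ∂μ)) :=
    (aecover_closedBall tendsto_id).integral_tendsto_of_countably_generated (hint t₀).norm
  obtain ⟨R, hR⟩ := (hlim.eventually_const_lt
    (show ∫ x, ‖u t₀ x‖ ∂μ - c / 2 < ∫ x, ‖u t₀ x‖ ∂μ by linarith)).exists
  have hcont : Continuous fun t => ∫ x in closedBall 0 R, ‖u t x‖ ∂μ :=
    continuous_parametric_integral_of_continuous (by fun_prop) (isCompact_closedBall 0 R)
  refine ⟨R, ?_⟩
  filter_upwards [hmass (∫ x, ‖u t₀ x‖ ∂μ + c / 2) (by linarith),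
    (hcont.tendsto t₀).eventually_const_lt hR] with t htotal hinner
  linarith [integral_add_compl measurableSet_closedBall (hint t).norm (s := closedBall 0 R)]

theorem tendstoLocallyUniformly_zero_cocompact_of_integrable [LocallyCompactSpace T]
    [μ.IsAddHaarMeasure] (hu : Continuous (Function.uncurry u)) (hequi : UniformEquicontinuous u)
    (hint : ∀ t, Integrable (u t) μ) (hmass : UpperSemicontinuous fun t => ∫ x, ‖u t x‖ ∂μ) :
    TendstoLocallyUniformly (fun x t => u t x) 0 (cocompact E) := by
  rw [Metric.tendstoLocallyUniformly_iff]
  intro ε hε t₀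
  obtain ⟨δ, hδ, hclose⟩ := Metric.uniformEquicontinuous_iff.1 hequi (ε / 2) (by linarith)
  have hball : 0 < μ.real (ball 0 δ) :=
    ENNReal.toReal_pos (measure_ball_pos μ 0 hδ).ne' measure_ball_lt_top.ne
  obtain ⟨R, hR⟩ := exists_eventually_setIntegral_compl_closedBall_lt hu hint (hmass t₀)
    (show 0 < ε / 2 * μ.real (ball 0 δ) by positivity)
  refine ⟨_, hR, ?_⟩
  filter_upwards [(isCompact_closedBall (0 : E) (R + δ)).compl_mem_cocompact] with x hx t ht
  by_contra! hlarge
  rw [Pi.zero_apply, dist_zero_left] at hlarge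
  have houtside : ball x δ ⊆ (closedBall 0 R)ᶜ := fun y hy hyR => by
    refine hx (mem_closedBall.2 ?_)
    linarith [dist_triangle_left x 0 y, mem_ball.1 hy, mem_closedBall.1 hyR]
  have hhalf : ∀ y ∈ ball x δ, ε / 2 ≤ ‖u t y‖ := fun y hy => by
    have hdist := hclose x y (mem_ball'.1 hy) t
    rw [dist_eq_norm] at hdist
    have hnorm := norm_sub_norm_le (u t x) (u t y)
    linarith
  exact ht.not_ge (mul_measureReal_ball_le_setIntegral_norm (hint t) houtside hhalf)

theorem tendstoUniformlyOn_zero_cocompact_of_integrable [T2Space T] [μ.IsAddHaarMeasure]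
    {s : Set T} (hs : IsCompact s) (hu : ContinuousOn (Function.uncurry u) (s ×ˢ univ))
    (hequi : UniformEquicontinuous fun t : s => u t) (hint : ∀ t ∈ s, Integrable (u t) μ)
    (hmass : UpperSemicontinuousOn (fun t => ∫ x, ‖u t x‖ ∂μ) s) :
    TendstoUniformlyOn (fun x t => u t x) 0 (cocompact E) s := by
  have : CompactSpace s := isCompact_iff_compactSpace.1 hs
  have hcont : Continuous (Function.uncurry fun t : s => u t) :=
    hu.comp_continuous (f := fun p : s × E => (p.1.1, p.2)) (by fun_prop)
      fun p => ⟨p.1.2, mem_univ _⟩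
  rw [tendstoUniformlyOn_iff_tendstoUniformly_comp_coe]
  exact tendstoLocallyUniformly_iff_tendstoUniformly_of_compactSpace.1
    (tendstoLocallyUniformly_zero_cocompact_of_integrable hcont hequi (fun t => hint t t.2)
      (upperSemicontinuousOn_iff_restrict.2 hmass))

end UniformDecay

section MaximumPrinciple

theorem hasDerivWithinAt_Iic_nonneg_of_isLocalMaxOn {f : ℝ → ℝ} {d t : ℝ}
    (hmax : IsLocalMaxOn f (Iic t) t) (hd : HasDerivWithinAt f d (Iic t) t) : 0 ≤ d := by
  have hcone : (-1 : ℝ) ∈ posTangentConeAt (Iic t) t :=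
    mem_posTangentConeAt_of_segment_subset
      ((convex_Iic t).segment_subset self_mem_Iic (by simp))
  simpa using hmax.hasFDerivWithinAt_nonpos hd.hasFDerivWithinAt hcone

variable {X : Type*} [TopologicalSpace X] {T M : ℝ} {m : ℝ → X → ℝ}

theorem exists_isMaxOn_sub_mul {η : ℝ} {p₁ : ℝ × X} (hη : 0 ≤ η) (hp₁ : p₁ ∈ Icc 0 T ×ˢ univ)
    (hcont : ContinuousOn (Function.uncurry m) (Icc 0 T ×ˢ univ))
    (hdecay : TendstoUniformlyOn (fun x t => m t x) 0 (cocompact X) (Icc 0 T))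
    (hpos : 0 < m p₁.1 p₁.2 - η * p₁.1) :
    ∃ p ∈ Icc 0 T ×ˢ univ, IsMaxOn (fun p => m p.1 p.2 - η * p.1) (Icc 0 T ×ˢ univ) p := by
  obtain ⟨K, hK, hdecayK⟩ := mem_cocompact.1 (Metric.tendstoUniformlyOn_iff.1 hdecay _ hpos)
  have hcontη : ContinuousOn (fun p : ℝ × X => m p.1 p.2 - η * p.1) (Icc 0 T ×ˢ univ) :=
    hcont.sub (by fun_prop)
  refine hcontη.exists_isMaxOn' (isClosed_Icc.prod isClosed_univ) hp₁ ?_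
  rw [eventually_inf_principal]
  filter_upwards [((isCompact_Icc (a := 0) (b := T)).prod hK).compl_mem_cocompact]
    with ⟨t, x⟩ hout ⟨ht, _⟩
  have hsmall := hdecayK (fun hxK => hout ⟨ht, hxK⟩) t ht
  rw [Pi.zero_apply, dist_zero_left] at hsmall
  linarith [le_abs_self (m t x), Real.norm_eq_abs (m t x), mul_nonneg hη ht.1]

theorem le_of_forall_isMaxOn_hasDerivWithinAt_nonpos
    (hcont : ContinuousOn (Function.uncurry m) (Icc 0 T ×ˢ univ))
    (hdecay : TendstoUniformlyOn (fun x t => m t x) 0 (cocompact X) (Icc 0 T))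
    (hM : 0 ≤ M) (hinit : ∀ x, m 0 x ≤ M)
    (hderiv : ∀ t ∈ Ioc 0 T, ∀ x, IsMaxOn (m t) univ x → 0 < m t x →
      ∃ d ≤ 0, HasDerivWithinAt (fun s => m s x) d (Iic t) t) :
    ∀ t ∈ Icc 0 T, ∀ x, m t x ≤ M := by
  by_contra! hlarge
  obtain ⟨t₁, ht₁, x₁, hx₁⟩ := hlarge
  obtain ⟨η, hη, hηt₁⟩ : ∃ η > 0, η * t₁ < m t₁ x₁ - M :=
    exists_pos_mul_lt (sub_pos.2 hx₁) t₁ |>.imp fun _ => .imp_right (by simp [mul_comm])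
  obtain ⟨⟨t, x⟩, ⟨ht, -⟩, hmax⟩ := exists_isMaxOn_sub_mul (p₁ := (t₁, x₁)) hη.le
    ⟨ht₁, mem_univ _⟩ hcont hdecay (by dsimp only; linarith)
  have hbig : M < m t x - η * t := by
    have hle : m t₁ x₁ - η * t₁ ≤ m t x - η * t :=
      hmax (show (t₁, x₁) ∈ _ from ⟨ht₁, mem_univ _⟩)
    linarith
  have ht_pos : 0 < t := ht.1.lt_of_ne' fun h => by
    subst h
    linarith [hinit x]
  have hspace : IsMaxOn (m t) univ x := fun y _ => by
    simpa using hmax (show (t, y) ∈ _ from ⟨ht, mem_univ _⟩)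
  obtain ⟨d, hd_nonpos, hd⟩ :=
    hderiv t ⟨ht_pos, ht.2⟩ x hspace (by linarith [mul_nonneg hη.le ht_pos.le])
  have htime : IsLocalMaxOn (fun s => m s x - η * s) (Iic t) t := by
    filter_upwards [Ioc_mem_nhdsLE ht_pos] with s hs
    exact hmax (show (s, x) ∈ _ from ⟨⟨hs.1.le, hs.2.trans ht.2⟩, mem_univ _⟩)
  linarith [hasDerivWithinAt_Iic_nonneg_of_isLocalMaxOn htime
    (hd.fun_sub ((hasDerivWithinAt_id t _).const_mul η))]

end MaximumPrinciple

section TimeSlice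

theorem deriv_eq_of_eqOn_Iio {F : Type*} [NormedAddCommGroup F] [NormedSpace ℝ F] {f g : ℝ → F}
    {a : ℝ} (hf : Differentiable ℝ f) (hg : ContinuousWithinAt g (Iio a) a)
    (heq : EqOn (deriv f) g (Iio a)) : deriv f a = g a :=
  (uniqueDiffWithinAt_Iic a).eq_deriv _ (hf a).hasDerivAt.hasDerivWithinAt
    (hasDerivWithinAt_Iic_of_tendsto_deriv hf.differentiableOn hf.continuous.continuousWithinAt
      self_mem_nhdsWithin (hg.congr' (heq.symm.eventuallyEq_of_mem self_mem_nhdsWithin)))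

theorem continuousAt_deriv_of_contDiffAt_uncurry {E F : Type*} [NormedAddCommGroup E]
    [NormedSpace ℝ E] [NormedAddCommGroup F] [NormedSpace ℝ F] {m : ℝ → E → F} {t : ℝ} {x : E}
    (hm : ContDiffAt ℝ 1 (Function.uncurry m) (t, x)) :
    ContinuousAt (fun y => deriv (fun s => m s y) t) x := by
  have hswap : ContDiffAt ℝ 1 (Function.uncurry fun y s => m s y) (x, t) :=
    hm.comp (x, t) (contDiff_snd.prodMk contDiff_fst).contDiffAt
  exact (hswap.fderiv (m := 0) contDiffAt_const (by norm_num)).continuousAt.clm_apply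
    continuousAt_const

variable {κ R₀ x : ℝ} {u v f : ℝ → ℝ}

theorem add_deriv_nonpos_of_penalized_eq (hκ : 0 ≤ κ) (hf : Differentiable ℝ f)
    (hv : ContinuousAt v x) (hux : 0 ≤ u x) (hcrit : deriv u x = 0)
    (heq : ∀ y ≠ R₀, v y + deriv f y
      + κ * ((if R₀ < y then u y else 0) + max (y - R₀) 0 * deriv u y) = 0) :
    v x + deriv f x ≤ 0 := by
  rcases eq_or_ne x R₀ with rfl | hx
  · have hleft : EqOn (deriv f) (-v) (Iio x) := fun y (hy : y < x) => by
      have hpde := heq y hy.ne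
      rw [if_neg hy.not_gt, max_eq_right (by linarith), zero_mul, add_zero, mul_zero] at hpde
      rw [Pi.neg_apply]
      linarith
    rw [deriv_eq_of_eqOn_Iio hf hv.neg.continuousWithinAt hleft, Pi.neg_apply, add_neg_cancel]
  · have hpenalty : 0 ≤ κ * ((if R₀ < x then u x else 0) + max (x - R₀) 0 * deriv u x) := by
      rw [hcrit, mul_zero, add_zero]
      exact mul_nonneg hκ (by split_ifs <;> simp [hux])
    linarith [heq x hx]

theorem nonpos_of_isMaxOn_of_penalized_eq (hκ : 0 ≤ κ) (hu : Integrable u)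
    (hmax : IsMaxOn u univ x) (hpos : 0 < u x) (hC1 : ContDiffAt ℝ 1 u x)
    (hpv : ∀ᶠ y in 𝓝 x, HilbertConverges u y) (hdiff : Differentiable ℝ fun y => u y * hilbert u y)
    (hv : ContinuousAt v x)
    (heq : ∀ y ≠ R₀, v y + deriv (fun z => u z * hilbert u z) y
      + κ * ((if R₀ < y then u y else 0) + max (y - R₀) 0 * deriv u y) = 0) :
    v x ≤ 0 := by
  have hcrit : deriv u x = 0 := (hmax.isLocalMax univ_mem).deriv_eq_zero
  have hflux : 0 ≤ deriv (fun y => u y * hilbert u y) x :=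
    deriv_mul_hilbert_nonneg_of_isMaxOn hu hmax hpos hC1 hpv (hdiff x)
  linarith [add_deriv_nonpos_of_penalized_eq hκ hdiff hv hpos.le hcrit heq]

end TimeSlice

theorem penalized_dyson_sup_bound_general (ε R₀ : ℝ) (hε : 0 < ε) (m : ℝ → ℝ → ℝ)
    (hcont : ContinuousOn (Function.uncurry m) (Ici 0 ×ˢ univ))
    (hC1 : ContDiffOn ℝ 1 (Function.uncurry m) (Ioi 0 ×ˢ univ))
    (hequi : UniformEquicontinuous fun t : Ici (0 : ℝ) => m t)
    (hint : ∀ t, 0 ≤ t → Integrable (m t))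
    (hmass : UpperSemicontinuousOn (fun t => ∫ x, ‖m t x‖) (Ici 0))
    (hpv : ∀ t x, 0 < t → HilbertConverges (m t) x)
    (hdiff : ∀ t, 0 < t → Differentiable ℝ (fun y => m t y * hilbert (m t) y))
    (hpde : ∀ t x, 0 < t → x ≠ R₀ →
      deriv (fun s => m s x) t + deriv (fun y => m t y * hilbert (m t) y) x
        + (1 / ε) * ((if R₀ < x then m t x else 0) + max (x - R₀) 0 * deriv (m t) x) = 0) :
    ∀ t x, 0 ≤ t → m t x ≤ ⨆ y, m 0 y := by
  intro T x hT
  have hIcc : Icc 0 T ⊆ Ici 0 := Icc_subset_Ici_self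
  have hcontT := hcont.mono (prod_mono_left hIcc)
  have hdecay : TendstoUniformlyOn (fun x t => m t x) 0 (cocompact ℝ) (Icc 0 T) :=
    tendstoUniformlyOn_zero_cocompact_of_integrable isCompact_Icc hcontT
      (hequi.comp (inclusion hIcc)) (fun t ht => hint t ht.1) (hmass.mono hIcc)
  have hinit : Continuous (m 0) :=
    hcont.comp_continuous (f := fun y => (0, y)) (by fun_prop) fun _ => ⟨self_mem_Ici, mem_univ _⟩
  have hinit_zero : Tendsto (m 0) (cocompact ℝ) (𝓝 0) := hdecay.tendsto_at (left_mem_Icc.2 hT)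
  have hbdd : BddAbove (range (m 0)) :=
    (ZeroAtInftyContinuousMap.isBounded_range ⟨⟨m 0, hinit⟩, hinit_zero⟩).bddAbove
  have hinit_le (y : ℝ) : m 0 y ≤ ⨆ y, m 0 y := le_ciSup hbdd y
  refine le_of_forall_isMaxOn_hasDerivWithinAt_nonpos hcontT hdecay
    (le_of_tendsto' hinit_zero hinit_le) hinit_le (fun t ht y hmax hpos => ?_) T
    (right_mem_Icc.2 hT) x
  have hC1t : ContDiffAt ℝ 1 (Function.uncurry m) (t, y) :=
    hC1.contDiffAt (prod_mem_nhds (Ioi_mem_nhds ht.1) univ_mem)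
  have htime : DifferentiableAt ℝ (fun s => m s y) t :=
    (hC1t.comp t (f := fun s => (s, y)) (by fun_prop)).differentiableAt one_ne_zero
  exact ⟨_, nonpos_of_isMaxOn_of_penalized_eq (one_div_nonneg.2 hε.le) (hint t ht.1.le) hmax hpos
    (hC1t.comp y (by fun_prop)) (.of_forall (hpv t · ht.1)) (hdiff t ht.1)
    (continuousAt_deriv_of_contDiffAt_uncurry hC1t) (hpde t · ht.1),
    htime.hasDerivAt.hasDerivWithinAt⟩

/-- **`L^∞` bound for the penalized (reflected) Dyson equation.**
A classical solution of `∂ₜm + ∂ₓ(m H[m]) + (1/ε)∂ₓ((x−R₀)₊ m) = 0` satisfies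
`sup_x m(t,x) ≤ sup_x m(0,x)` for every `t ≥ 0`. -/
theorem penalized_dyson_sup_bound (ε R₀ : ℝ) (hε : 0 < ε) (m : ℝ → ℝ → ℝ)
    (hC1 : ContDiffOn ℝ 1 (Function.uncurry m) (Ici 0 ×ˢ univ))
    (hlip : ∃ L : NNReal, ∀ t, 0 ≤ t → LipschitzWith L (m t))
    (hnonneg : ∀ t x, 0 ≤ t → 0 ≤ m t x)
    (hint : ∀ t, 0 ≤ t → Integrable (m t))
    (hprob : ∀ t, 0 ≤ t → ∫ x, m t x = 1)
    (hpv : ∀ t x, 0 ≤ t →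
      ∃ l : ℝ, Tendsto (fun δ => truncHilbert (m t) δ x) (𝓝[>] (0 : ℝ)) (𝓝 l))
    (hdiff : ∀ t, 0 ≤ t → Differentiable ℝ (fun y => m t y * hilbert (m t) y))
    (hpde : ∀ t x, 0 < t → x ≠ R₀ →
      deriv (fun s => m s x) t + deriv (fun y => m t y * hilbert (m t) y) x
        + (1 / ε) * ((if R₀ < x then m t x else 0) + max (x - R₀) 0 * deriv (m t) x) = 0) :
    ∀ t x, 0 ≤ t → m t x ≤ ⨆ y, m 0 y := by
  obtain ⟨L, hL⟩ := hlip
  have hmass : ∀ t ∈ Ici (0 : ℝ), ∫ x, ‖m t x‖ = 1 := fun t ht => by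
    simp only [Real.norm_of_nonneg (hnonneg t _ ht), hprob t ht]
  exact penalized_dyson_sup_bound_general ε R₀ hε m hC1.continuousOn
    (hC1.mono (prod_mono_left Ioi_subset_Ici_self))
    (LipschitzWith.uniformEquicontinuous _ L fun t => hL t t.2) hint
    (continuousOn_const.congr hmass).upperSemicontinuousOn (fun t x ht => hpv t x ht.le)
    (fun t ht => hdiff t ht.le) hpde
end
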